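/- Let (X,T) be a topological dynamical system with T a homeomorphism satisfying the marker property. Then the mean dimension satisfies mdim(X,T) = min_{d∈D(X)} sup_{μ∈M(X,T)} [ liminf_{ε→0} (1/log(1/ε)) · inf{ h_μ(T,P) : P a finite Borel partition with diam_d P ≤ ε } ] = min_{d∈D(X)} sup_{μ∈M(X,T)} [ limsup_{ε→0} (1/log(1/ε)) · inf{ h_μ(T,P) : P a finite Borel partition with diam_d P ≤ ε } ], where D(X) is the set of metrics on X compatible with the topology and the minima are attained. -/

import Mathlib

open Filter MeasureTheory Set
open scoped ENNReal Topology

noncomputable section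

namespace MMD

variable {X : Type*}

/-- The `n`-th Bowen metric `d_n(x,y) = max_{0 ≤ j ≤ n-1} d(T^j x, T^j y)`. -/
noncomputable def bowenDist [PseudoMetricSpace X] (T : X → X) (n : ℕ) (x y : X) : ℝ :=
  ⨆ j : Fin n, dist (T^[(j : ℕ)] x) (T^[(j : ℕ)] y)

/-- `r_n(T,d,ε,Z)`: minimal cardinality of an `(n,ε)`-spanning set of `Z`. -/
noncomputable def spanNum [PseudoMetricSpace X] (T : X → X) (n : ℕ) (ε : ℝ) (Z : Set X) : ℕ :=
  sInf {k | ∃ E : Finset X, E.card = k ∧ ∀ z ∈ Z, ∃ y ∈ E, bowenDist T n z y < ε}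

/-- `s_n(T,d,ε,Z)`: maximal cardinality of an `(n,ε)`-separated subset of `Z`. -/
noncomputable def sepNum [PseudoMetricSpace X] (T : X → X) (n : ℕ) (ε : ℝ) (Z : Set X) : ℕ :=
  sSup {k | ∃ F : Finset X, ↑F ⊆ Z ∧ F.card = k ∧
    ∀ x ∈ F, ∀ y ∈ F, x ≠ y → ε ≤ bowenDist T n x y}

/-- `limsup_{n→∞} (1/n) log r_n(T,d,ε,X)`. -/
noncomputable def spanGrowth [PseudoMetricSpace X] (T : X → X) (ε : ℝ) : ℝ≥0∞ :=
  Filter.limsup (fun n : ℕ => ENNReal.ofReal (Real.log (spanNum T n ε Set.univ)) / (n : ℝ≥0∞))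
    Filter.atTop

/-- Upper metric mean dimension. -/
noncomputable def mdimMUpper [PseudoMetricSpace X] (T : X → X) : ℝ≥0∞ :=
  Filter.limsup (fun ε : ℝ => spanGrowth T ε / ENNReal.ofReal (Real.log (1 / ε)))
    (nhdsWithin 0 (Set.Ioi 0))

/-- Lower metric mean dimension. -/
noncomputable def mdimMLower [PseudoMetricSpace X] (T : X → X) : ℝ≥0∞ :=
  Filter.liminf (fun ε : ℝ => spanGrowth T ε / ENNReal.ofReal (Real.log (1 / ε)))
    (nhdsWithin 0 (Set.Ioi 0))

/-- A finite (Borel) partition given as a finite set of measurable, pairwise disjoint sets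
covering the space. -/
def IsFinPartition {Y : Type*} [MeasurableSpace Y] (P : Finset (Set Y)) : Prop :=
  (∀ s ∈ P, MeasurableSet s) ∧ (∀ s ∈ P, ∀ t ∈ P, s ≠ t → Disjoint s t) ∧
    ⋃₀ (P : Set (Set Y)) = Set.univ

/-- Mutual information `I(ξ;η)` of two random variables, as the supremum over finite
measurable partitions of the target spaces. -/
noncomputable def mutualInfo {Ω A B : Type*} [MeasurableSpace Ω] [MeasurableSpace A]
    [MeasurableSpace B] (P : Measure Ω) (ξ : Ω → A) (η : Ω → B) : ℝ≥0∞ :=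
  ⨆ (p : Finset (Set A)) (_ : IsFinPartition p) (q : Finset (Set B)) (_ : IsFinPartition q),
    ENNReal.ofReal (∑ s ∈ p, ∑ t ∈ q,
      (P (ξ ⁻¹' s ∩ η ⁻¹' t)).toReal *
        Real.log ((P (ξ ⁻¹' s ∩ η ⁻¹' t)).toReal /
          ((P (ξ ⁻¹' s)).toReal * (P (η ⁻¹' t)).toReal)))

/-- The `L^∞` rate distortion function `R_{μ,L∞}(ε,s)`: the infimum of `I(ξ;η)/n` over all
`n ≥ 1` and all joint distributions `ν` of `(ξ, (η_0,…,η_{n-1}))` such that `ξ` has law `μ`,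
the `η_k` take (almost surely) finitely many values, and
`E(#{0 ≤ k ≤ n-1 : d(T^k ξ, η_k) ≥ ε}) < s n`. -/
noncomputable def RDistLInftyS [PseudoMetricSpace X] [MeasurableSpace X] (T : X → X)
    (μ : Measure X) (ε s : ℝ) : ℝ≥0∞ :=
  ⨅ (n : ℕ) (_ : 0 < n) (ν : Measure (X × (Fin n → X))) (_ : IsProbabilityMeasure ν)
    (_ : ν.map Prod.fst = μ) (_ : ∃ S : Finset X, ν {p | ∀ k, p.2 k ∈ S} = 1)
    (_ : ∫⁻ p, (Nat.card {k : Fin n // ε ≤ dist (T^[(k : ℕ)] p.1) (p.2 k)} : ℝ≥0∞) ∂ν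
        < ENNReal.ofReal (s * n)),
    mutualInfo ν Prod.fst Prod.snd / (n : ℝ≥0∞)

/-- `R_{μ,L∞}(ε) = lim_{s→0} R_{μ,L∞}(ε,s)` (the limit equals the supremum over `s > 0`
by monotonicity). -/
noncomputable def RDistLInfty [PseudoMetricSpace X] [MeasurableSpace X] (T : X → X)
    (μ : Measure X) (ε : ℝ) : ℝ≥0∞ :=
  ⨆ (s : ℝ) (_ : 0 < s), RDistLInftyS T μ ε s

/-- The `L¹` rate distortion function `R_{μ,1}(ε)`. -/
noncomputable def RDistL1 [PseudoMetricSpace X] [MeasurableSpace X] (T : X → X)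
    (μ : Measure X) (ε : ℝ) : ℝ≥0∞ :=
  ⨅ (n : ℕ) (_ : 0 < n) (ν : Measure (X × (Fin n → X))) (_ : IsProbabilityMeasure ν)
    (_ : ν.map Prod.fst = μ) (_ : ∃ S : Finset X, ν {p | ∀ k, p.2 k ∈ S} = 1)
    (_ : ∫⁻ p, ∑ k : Fin n, ENNReal.ofReal (dist (T^[(k : ℕ)] p.1) (p.2 k)) ∂ν
        < ENNReal.ofReal (ε * n)),
    mutualInfo ν Prod.fst Prod.snd / (n : ℝ≥0∞)

/-- `R^δ_μ(T,n,ε)`: minimal number of Bowen `(n,ε)`-balls whose union has `μ`-measure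
greater than `1 - δ`. -/
noncomputable def katokNum [PseudoMetricSpace X] [MeasurableSpace X] (T : X → X)
    (μ : Measure X) (n : ℕ) (ε δ : ℝ) : ℕ :=
  sInf {k | ∃ E : Finset X, E.card = k ∧
    ENNReal.ofReal (1 - δ) < μ (⋃ x ∈ E, {y | bowenDist T n x y < ε})}

/-- `h̄^K_μ(T,ε,δ)`. -/
noncomputable def katokUpperD [PseudoMetricSpace X] [MeasurableSpace X] (T : X → X)
    (μ : Measure X) (ε δ : ℝ) : ℝ≥0∞ :=
  Filter.limsup (fun n : ℕ => ENNReal.ofReal (Real.log (katokNum T μ n ε δ)) / (n : ℝ≥0∞))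
    Filter.atTop

/-- `ḥ^K_μ(T,ε,δ)`. -/
noncomputable def katokLowerD [PseudoMetricSpace X] [MeasurableSpace X] (T : X → X)
    (μ : Measure X) (ε δ : ℝ) : ℝ≥0∞ :=
  Filter.liminf (fun n : ℕ => ENNReal.ofReal (Real.log (katokNum T μ n ε δ)) / (n : ℝ≥0∞))
    Filter.atTop

/-- `h̄^K_μ(T,ε) = lim_{δ→0} h̄^K_μ(T,ε,δ)` (equal to the supremum over `δ ∈ (0,1)` by
monotonicity). -/
noncomputable def katokUpper [PseudoMetricSpace X] [MeasurableSpace X] (T : X → X)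
    (μ : Measure X) (ε : ℝ) : ℝ≥0∞ :=
  ⨆ (δ : ℝ) (_ : δ ∈ Set.Ioo (0 : ℝ) 1), katokUpperD T μ ε δ

/-- `ḥ^K_μ(T,ε) = lim_{δ→0} ḥ^K_μ(T,ε,δ)`. -/
noncomputable def katokLower [PseudoMetricSpace X] [MeasurableSpace X] (T : X → X)
    (μ : Measure X) (ε : ℝ) : ℝ≥0∞ :=
  ⨆ (δ : ℝ) (_ : δ ∈ Set.Ioo (0 : ℝ) 1), katokLowerD T μ ε δ

/-- The empirical measure `(1/n) Σ_{j=0}^{n-1} δ_{T^j x}`. -/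
noncomputable def empMeas [MeasurableSpace X] (T : X → X) (n : ℕ) (x : X) : Measure X :=
  (n : ℝ≥0∞)⁻¹ • ∑ j ∈ Finset.range n, Measure.dirac (T^[j] x)

/-- Pfister–Sullivan entropy `PS_μ(T,d,ε)`: infimum over weak* open neighborhoods `F` of `μ`
of `limsup_n (1/n) log s_n(T,d,ε,X_{n,F})`, where
`X_{n,F} = {x : (1/n) Σ_{j<n} δ_{T^j x} ∈ F}`. -/
noncomputable def PSent [MetricSpace X] [MeasurableSpace X] [OpensMeasurableSpace X]
    (T : X → X) (μ : ProbabilityMeasure X) (ε : ℝ) : ℝ≥0∞ :=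
  ⨅ (F : Set (ProbabilityMeasure X)) (_ : IsOpen F) (_ : μ ∈ F),
    Filter.limsup (fun n : ℕ => ENNReal.ofReal (Real.log (sepNum T n ε
      {x : X | ∃ h : IsProbabilityMeasure (empMeas T n x),
        (⟨empMeas T n x, h⟩ : ProbabilityMeasure X) ∈ F})) / (n : ℝ≥0∞)) Filter.atTop

/-- Partition entropy `H_μ(P) = Σ_{A∈P} -μ(A) log μ(A)`. -/
noncomputable def entP [MeasurableSpace X] (μ : Measure X) (P : Finset (Set X)) : ℝ≥0∞ :=
  ∑ A ∈ P, ENNReal.ofReal (-((μ A).toReal * Real.log ((μ A).toReal)))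

/-- The join `P^n = ∨_{j=0}^{n-1} T^{-j} P`. -/
noncomputable def joinN (T : X → X) (P : Finset (Set X)) (n : ℕ) : Finset (Set X) :=
  letI : DecidableEq (Set X) := Classical.decEq _
  (Fintype.piFinset (fun _ : Fin n => P)).image (fun f => ⋂ j : Fin n, T^[(j : ℕ)] ⁻¹' f j)

/-- `h_μ(T,P) = lim_n H_μ(P^n)/n` (the limit exists and equals the liminf). -/
noncomputable def entRate [MeasurableSpace X] (T : X → X) (μ : Measure X)
    (P : Finset (Set X)) : ℝ≥0∞ :=
  Filter.liminf (fun n : ℕ => entP μ (joinN T P n) / (n : ℝ≥0∞)) Filter.atTop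

/-- `inf { h_μ(T,P) : P a finite Borel partition with diam P ≤ ε }`. -/
noncomputable def infEntRate [PseudoMetricSpace X] [MeasurableSpace X] (T : X → X)
    (μ : Measure X) (ε : ℝ) : ℝ≥0∞ :=
  ⨅ (P : Finset (Set X)) (_ : IsFinPartition P) (_ : ∀ s ∈ P, Metric.diam s ≤ ε),
    entRate T μ P

/-- Kolmogorov–Sinai entropy `h_μ(T)`. -/
noncomputable def ksEntropy [MeasurableSpace X] (T : X → X) (μ : Measure X) : ℝ≥0∞ :=
  ⨆ (P : Finset (Set X)) (_ : IsFinPartition P), entRate T μ P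

/-- A finite open cover. -/
def IsFinOpenCover [TopologicalSpace X] (α : Finset (Set X)) : Prop :=
  (∀ A ∈ α, IsOpen A) ∧ ⋃₀ (α : Set (Set X)) = Set.univ

/-- `ord(β) = max_x #{B ∈ β : x ∈ B} - 1`. -/
noncomputable def ordCover (β : Finset (Set X)) : ℕ :=
  sSup {k | ∃ x : X, Nat.card {B : Set X // B ∈ β ∧ x ∈ B} = k} - 1

/-- `D(α) = min_{β ≻ α} ord(β)`, over finite open covers `β` refining `α`. -/
noncomputable def Dcover [TopologicalSpace X] (α : Finset (Set X)) : ℕ :=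
  sInf {k | ∃ β : Finset (Set X), IsFinOpenCover β ∧ (∀ B ∈ β, ∃ A ∈ α, B ⊆ A) ∧
    ordCover β = k}

/-- Mean (topological) dimension `mdim(X,T) = sup_α lim_n D(α^n)/n`. -/
noncomputable def mdimTop [TopologicalSpace X] (T : X → X) : ℝ≥0∞ :=
  ⨆ (α : Finset (Set X)) (_ : IsFinOpenCover α),
    Filter.liminf (fun n : ℕ => (Dcover (joinN T α n) : ℝ≥0∞) / (n : ℝ≥0∞)) Filter.atTop

/-- The marker property for a homeomorphism. -/
def MarkerProperty [TopologicalSpace X] (T : X ≃ₜ X) : Prop :=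
  ∀ N : ℕ, 0 < N → ∃ U : Set X, IsOpen U ∧
    (∀ n : ℕ, 1 ≤ n → n ≤ N → U ∩ (⇑T)^[n] '' U = ∅) ∧
    ⋃ n : ℤ, ⇑(T.toEquiv ^ n) '' U = Set.univ

/-- Upper dimension `limsup_{ε→0} F(μ,ε)/log(1/ε)` associated with a candidate `F`. -/
noncomputable def dimFUpper [MeasurableSpace X] (F : Measure X → ℝ → ℝ≥0∞)
    (μ : Measure X) : ℝ≥0∞ :=
  Filter.limsup (fun ε : ℝ => F μ ε / ENNReal.ofReal (Real.log (1 / ε)))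
    (nhdsWithin 0 (Set.Ioi 0))

/-- Lower dimension `liminf_{ε→0} F(μ,ε)/log(1/ε)` associated with a candidate `F`. -/
noncomputable def dimFLower [MeasurableSpace X] (F : Measure X → ℝ → ℝ≥0∞)
    (μ : Measure X) : ℝ≥0∞ :=
  Filter.liminf (fun ε : ℝ => F μ ε / ENNReal.ofReal (Real.log (1 / ε)))
    (nhdsWithin 0 (Set.Ioi 0))

/-- A candidate function: for each invariant probability measure `μ`, `F(μ,·)` is
non-decreasing as `ε` decreases, and `F(μ,ε) → h_μ(T)` as `ε → 0⁺`. -/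
def IsCandidate [MeasurableSpace X] (T : X → X) (F : Measure X → ℝ → ℝ≥0∞) : Prop :=
  ∀ μ : Measure X, IsProbabilityMeasure μ → MeasurePreserving T μ μ →
    (∀ ε₁ ε₂ : ℝ, 0 < ε₁ → ε₁ ≤ ε₂ → F μ ε₂ ≤ F μ ε₁) ∧
    Filter.Tendsto (F μ) (nhdsWithin 0 (Set.Ioi 0)) (nhds (ksEntropy T μ))

end MMD

namespace MMD
open scoped NNReal BoundedContinuousFunction



/-- bump function of a set: positive exactly on the set (if open). -/
def bump {X : Type*} [PseudoMetricSpace X] (B : Set X) (x : X) : ℝ≥0 :=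
  open Classical in if Bᶜ = ∅ then 1 else min 1 (Metric.infNndist x Bᶜ)

lemma bump_le_one {X : Type*} [PseudoMetricSpace X] (B : Set X) (x : X) : bump B x ≤ 1 := by
  unfold bump; split_ifs <;> simp

lemma bump_pos_iff {X : Type*} [PseudoMetricSpace X] {B : Set X} (hB : IsOpen B) (x : X) :
    0 < bump B x ↔ x ∈ B := by
  unfold bump
  split_ifs with h
  · simp only [zero_lt_one, true_iff]
    rw [Set.compl_empty_iff] at h; rw [h]; trivial
  · have hne : (Bᶜ).Nonempty := Set.nonempty_iff_ne_empty.2 h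
    have := hB.isClosed_compl.notMem_iff_infDist_pos hne (x := x)
    rw [Set.notMem_compl_iff] at this
    rw [this, lt_min_iff]
    simp only [zero_lt_one, true_and]
    rw [← NNReal.coe_pos, Metric.coe_infNndist]

lemma bump_lip {X : Type*} [PseudoMetricSpace X] (B : Set X) (x y : X) :
    bump B x ≤ bump B y + nndist x y := by
  unfold bump
  split_ifs with h
  · simp
  · have : Metric.infNndist x Bᶜ ≤ Metric.infNndist y Bᶜ + nndist x y := by
      rw [← NNReal.coe_le_coe]
      push_cast
      simp only [Metric.coe_infNndist]
      exact Metric.infDist_le_infDist_add_dist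
    rcases le_total 1 (Metric.infNndist y Bᶜ) with h1 | h1
    · rw [min_eq_left h1]
      exact (min_le_left _ _).trans le_self_add
    · rw [min_eq_right h1]
      exact (min_le_right _ _).trans this

lemma continuous_bump {X : Type*} [PseudoMetricSpace X] (B : Set X) :
    Continuous (bump B) := by
  unfold bump
  split_ifs with h
  · exact continuous_const
  · exact continuous_const.min (Metric.continuous_infNndist_pt _)

lemma dist_bump_le {X : Type*} [PseudoMetricSpace X] (B : Set X) (x y : X) :
    |(bump B x : ℝ) - bump B y| ≤ dist x y := by
  have h1 := bump_lip B x y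
  have h2 := bump_lip B y x
  rw [← NNReal.coe_le_coe] at h1 h2
  push_cast at h1 h2
  rw [dist_comm y x] at h2
  rw [abs_le]; constructor <;> linarith

/-! ### combinatorics of marker times -/

/-- event times -/
def Ev (L : ℕ) (a : ℤ → ℝ) (j : ℤ) : Prop :=
  0 < a j ∨ ∃ q : ℕ, q ≤ L ∧ (q : ℝ) < a (j - q) ∧ a (j - q) < q + 2

/-- block start times -/
def Wt (N L : ℕ) (a : ℤ → ℝ) (j : ℤ) : Prop :=
  ∃ p : ℕ, p ≤ L ∧ N ∣ p ∧ (p : ℝ) + 1 < a (j - p) ∧ ∀ q : ℕ, q < p → a (j - q) < q + 1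

lemma exists_Wt {N L : ℕ} (hN : 0 < N) {a : ℤ → ℝ} (j : ℤ)
    (hE : ∀ i : ℕ, i < N → ¬ Ev L a (j - i))
    (hs : ∃ p : ℕ, p ≤ L ∧ (p : ℝ) + 1 < a (j - p)) :
    ∃ i : ℕ, i < N ∧ Wt N L a (j - i) := by
  classical
  let p := Nat.find hs
  obtain ⟨hpL, hpa⟩ : p ≤ L ∧ (p : ℝ) + 1 < a (j - p) := Nat.find_spec hs
  have hmin : ∀ q : ℕ, q < p → a (j - q) ≤ q + 1 := by
    intro q hq
    have := Nat.find_min hs hq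
    by_contra hc
    exact this ⟨by omega, by linarith⟩
  have hpN : N ≤ p := by
    by_contra hc
    refine hE p (by omega) (Or.inl ?_)
    have : (0 : ℝ) ≤ p := Nat.cast_nonneg p
    linarith
  refine ⟨p % N, Nat.mod_lt _ hN, p - p % N, by omega, Nat.dvd_sub_mod p, ?_, ?_⟩
  · have h1 : j - (p % N : ℕ) - ((p - p % N : ℕ) : ℤ) = j - p := by
      have := Nat.mod_le p N
      omega
    rw [h1]
    have : ((p - p % N : ℕ) : ℝ) ≤ p := by exact_mod_cast Nat.sub_le _ _
    linarith
  · intro q' hq'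
    have key : ∀ i : ℕ, i ≤ p % N → a (j - (p % N + q' : ℕ)) ≤ ((p % N + q' - i : ℕ) : ℝ) := by
      intro i
      induction i with
      | zero =>
        intro _
        by_contra hc
        push Not at hc
        refine hE 0 hN (Or.inr ⟨p % N + q', by omega, ?_, ?_⟩)
        · simpa using hc
        · have := hmin (p % N + q') (by omega)
          simp only [Nat.cast_zero, sub_zero]
          linarith
      | succ i ih =>
        intro hi
        have h0 := ih (by omega)
        by_contra hc
        push Not at hc
        have hlt := Nat.mod_lt p hN
        have h2 : j - ((i + 1 : ℕ) : ℤ) - ((p % N + q' - (i + 1) : ℕ) : ℤ)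
            = j - (p % N + q' : ℕ) := by omega
        refine hE (i + 1) (by omega) (Or.inr ⟨p % N + q' - (i + 1), by omega, ?_, ?_⟩)
        · rw [h2]; exact hc
        · rw [h2]
          have h3 : p % N + q' - i = p % N + q' - (i + 1) + 1 := by omega
          rw [h3] at h0
          push_cast at h0 ⊢
          linarith
    have h := key (p % N) le_rfl
    have h2 : j - (p % N : ℕ) - (q' : ℤ) = j - (p % N + q' : ℕ) := by omega
    rw [h2]
    have h3 : p % N + q' - p % N = q' := by omega
    rw [h3] at h
    linarith

lemma Wt_gap {N L : ℕ} {a : ℤ → ℝ} (haL : ∀ j, a j ≤ L) {j : ℤ} {t : ℕ} (ht0 : 0 < t)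
    (htN : t < N) (h1 : Wt N L a j) (h2 : Wt N L a (j + t)) :
    ∃ e : ℤ, j < e ∧ e ≤ j + t ∧ Ev L a e := by
  by_contra hne
  push Not at hne
  obtain ⟨p, hpL, hNp, hpa, hpq⟩ := h1
  obtain ⟨p', hpL', hNp', hpa', hpq'⟩ := h2
  have hmk : ¬ (p' < t) := by
    intro hlt
    refine hne (j + t - p') (by omega) (by omega) (Or.inl ?_)
    have : (0 : ℝ) ≤ p' := Nat.cast_nonneg p'
    linarith
  push Not at hmk
  obtain ⟨q, rfl⟩ := Nat.exists_eq_add_of_le hmk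
  have e1 : j + (t : ℤ) - ((t + q : ℕ) : ℤ) = j - q := by push_cast; ring
  rw [e1] at hpa'
  rcases lt_trichotomy q p with hq | hq | hq
  · have := hpq q hq
    push_cast at hpa'
    have : (0 : ℝ) ≤ t := Nat.cast_nonneg t
    linarith
  · subst hq
    have : N ∣ t := (Nat.dvd_add_left hNp).1 hNp'
    exact absurd (Nat.le_of_dvd ht0 this) (by omega)
  · have h3 := hpq' (t + p) (by omega)
    have e2 : j + (t : ℤ) - ((t + p : ℕ) : ℤ) = j - p := by push_cast; ring
    rw [e2] at h3
    have key : ∀ i : ℕ, i ≤ t → (p : ℝ) + i + 1 < a (j - p) := by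
      intro i
      induction i with
      | zero => intro _; simpa using hpa
      | succ i ih =>
        intro hi
        have h0 := ih (by omega)
        by_contra hc
        push Not at hc
        have hL := haL (j - p)
        have hle : p + (i + 1) ≤ L := by
          have : ((p + (i + 1) : ℕ) : ℝ) ≤ L := by push_cast; linarith
          exact_mod_cast this
        refine hne (j + (i + 1 : ℕ)) (by omega) (by omega) (Or.inr ⟨p + (i + 1), hle, ?_, ?_⟩)
        · have : j + ((i + 1 : ℕ) : ℤ) - ((p + (i + 1) : ℕ) : ℤ) = j - p := by
            push_cast; ring
          rw [this]; push_cast; linarith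
        · have : j + ((i + 1 : ℕ) : ℤ) - ((p + (i + 1) : ℕ) : ℤ) = j - p := by
            push_cast; ring
          rw [this]; push_cast at hc ⊢; linarith
    have := key t le_rfl
    push_cast at h3
    linarith



open Classical in
/-- number of times in `[s,t)` satisfying `p` -/
def cnt (p : ℤ → Prop) (s t : ℤ) : ℕ := ((Finset.Ico s t).filter p).card

lemma cnt_add (p : ℤ → Prop) {s t r : ℤ} (h1 : s ≤ t) (h2 : t ≤ r) :
    cnt p s r = cnt p s t + cnt p t r := by
  classical
  unfold cnt
  rw [← Finset.Ico_union_Ico_eq_Ico h1 h2, Finset.filter_union, Finset.card_union_of_disjoint]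
  exact Finset.disjoint_filter_filter (Finset.Ico_disjoint_Ico_consecutive s t r)

lemma cnt_mono (p : ℤ → Prop) {s t s' t' : ℤ} (h1 : s' ≤ s) (h2 : t ≤ t') :
    cnt p s t ≤ cnt p s' t' := by
  classical
  unfold cnt
  exact Finset.card_le_card (Finset.filter_subset_filter _ (Finset.Ico_subset_Ico h1 h2))

lemma cnt_windows (p e : ℤ → Prop) (w : ℕ)
    (h : ∀ s, cnt p s (s + w) ≤ 1 + cnt e s (s + w)) (s : ℤ) (r : ℕ) :
    cnt p s (s + (r * w : ℕ)) ≤ r + cnt e s (s + (r * w : ℕ)) := by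
  induction r with
  | zero => simp [cnt]
  | succ r ih =>
    have e1 : s + (((r + 1) * w : ℕ) : ℤ) = s + (r * w : ℕ) + w := by push_cast; ring
    rw [e1, cnt_add p (t := s + (r * w : ℕ)) (by omega) (by omega),
      cnt_add e (t := s + (r * w : ℕ)) (by omega) (by omega)]
    have := h (s + (r * w : ℕ))
    omega

lemma cnt_window_of_sep (p e : ℤ → Prop) (w : ℕ)
    (h : ∀ j : ℤ, ∀ t : ℕ, 0 < t → t < w → p j → p (j + t) → ∃ i, j < i ∧ i ≤ j + t ∧ e i)
    (s : ℤ) : cnt p s (s + w) ≤ 1 + cnt e s (s + w) := by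
  classical
  unfold cnt
  have h1 : (((Finset.Ico s (s + w)).filter p).image (fun j => 2 * j + 1)).card ≤
      (((Finset.Ico s (s + w)).filter e).image (fun j => 2 * j)).card + 1 := by
    apply Finset.card_le_of_interleaved
    intro x hx y hy hxy _
    simp only [Finset.mem_image, Finset.mem_filter, Finset.mem_Ico] at hx hy
    obtain ⟨a, ⟨⟨ha1, ha2⟩, ha3⟩, rfl⟩ := hx
    obtain ⟨b, ⟨⟨hb1, hb2⟩, hb3⟩, rfl⟩ := hy
    obtain ⟨t, ht⟩ := Int.eq_ofNat_of_zero_le (show 0 ≤ b - a by omega)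
    have hb : b = a + t := by omega
    subst hb
    obtain ⟨i, hi1, hi2, hi3⟩ := h a t (by omega) (by omega) ha3 hb3
    refine ⟨2 * i, ?_, by omega, by omega⟩
    simp only [Finset.mem_image, Finset.mem_filter, Finset.mem_Ico]
    exact ⟨i, ⟨⟨by omega, by omega⟩, hi3⟩, rfl⟩
  rw [Finset.card_image_of_injective _ (fun a b h => by simpa using h),
    Finset.card_image_of_injective _ (fun a b h => by simpa using h)] at h1
  omega

lemma cnt_Ev (L : ℕ) (a : ℤ → ℝ) (s t : ℤ) :
    cnt (Ev L a) s t ≤ 3 * cnt (fun j => 0 < a j) (s - L) t := by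
  classical
  unfold cnt
  rw [mul_comm]
  refine (Finset.card_le_card ?_).trans (Finset.card_biUnion_le_card_mul
    ((Finset.Ico (s - L) t).filter (fun j => 0 < a j))
    (fun m => {m, m + ⌈a m⌉ - 1, m + ⌈a m⌉ - 2}) 3 (fun m _ => Finset.card_le_three))
  intro e he
  simp only [Finset.mem_filter, Finset.mem_Ico, Finset.mem_biUnion, Finset.mem_insert,
    Finset.mem_singleton] at he ⊢
  obtain ⟨⟨h1, h2⟩, h3⟩ := he
  rcases h3 with h3 | ⟨q, hqL, hq1, hq2⟩
  · exact ⟨e, ⟨⟨by omega, h2⟩, h3⟩, Or.inl rfl⟩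
  · refine ⟨e - q, ⟨⟨by omega, by omega⟩, ?_⟩, ?_⟩
    · have : (0 : ℝ) ≤ q := Nat.cast_nonneg q
      linarith
    · have h4 : (q : ℤ) < ⌈a (e - q)⌉ := Int.lt_ceil.2 (by exact_mod_cast hq1)
      have h5 : ⌈a (e - q)⌉ ≤ (q : ℤ) + 2 := Int.ceil_le.2 (by push_cast; exact hq2.le)
      omega

lemma cnt_thick (e : ℤ → Prop) (N : ℕ) (s t : ℤ) :
    cnt (fun j => ∃ i : ℕ, i < N ∧ e (j - i)) s t ≤ N * cnt e (s - N) t := by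
  classical
  unfold cnt
  rw [mul_comm]
  refine (Finset.card_le_card ?_).trans (Finset.card_biUnion_le_card_mul
    ((Finset.Ico (s - N) t).filter e)
    (fun m => (Finset.range N).image (fun i : ℕ => m + i)) N
    (fun m _ => Finset.card_image_le.trans (by simp)))
  intro j hj
  simp only [Finset.mem_filter, Finset.mem_Ico, Finset.mem_biUnion, Finset.mem_image,
    Finset.mem_range] at hj ⊢
  obtain ⟨⟨h1, h2⟩, i, hi, he⟩ := hj
  exact ⟨j - i, ⟨⟨by omega, by omega⟩, he⟩, i, hi, by omega⟩

/-- integer iterates -/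
def orb {X : Type*} [TopologicalSpace X] (T : X ≃ₜ X) (j : ℤ) (x : X) : X :=
  (T.toEquiv ^ j : Equiv.Perm X) x

section orb
variable {X : Type*} [TopologicalSpace X] (T : X ≃ₜ X)

lemma orb_natCast (n : ℕ) (x : X) : orb T n x = T^[n] x := by
  unfold orb
  rw [zpow_natCast, Equiv.Perm.coe_pow]; rfl

lemma orb_add (i j : ℤ) (x : X) : orb T (i + j) x = orb T i (orb T j x) := by
  unfold orb
  rw [zpow_add]; rfl

lemma orb_zero (x : X) : orb T 0 x = x := by simp [orb]

lemma orb_neg_natCast (n : ℕ) (x : X) : orb T (-n) x = T.symm^[n] x := by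
  unfold orb
  rw [zpow_neg, zpow_natCast, ← inv_pow, Equiv.Perm.coe_pow]; rfl

lemma continuous_orb (j : ℤ) : Continuous (orb T j) := by
  obtain ⟨n, rfl | rfl⟩ := j.eq_nat_or_neg
  · rw [show orb T n = T^[n] from funext (orb_natCast T n)]
    exact T.continuous.iterate n
  · rw [show orb T (-n) = T.symm^[n] from funext (orb_neg_natCast T n)]
    exact T.symm.continuous.iterate n

end orb

lemma tower {X : Type*} [MetricSpace X] [CompactSpace X] (T : X ≃ₜ X) (hmk : MarkerProperty T)
    (N : ℕ) (hN : 0 < N) (η : ℝ) (hη : 0 < η) :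
    ∃ (W V : Set X) (n : ℕ), IsOpen W ∧ IsOpen V ∧ 0 < n ∧
      (∀ x, x ∈ V ∨ ∃ k : ℕ, k < N ∧ orb T (-k) x ∈ W) ∧
      (∀ x, (cnt (fun j => orb T j x ∈ W) 0 n : ℝ) ≤ n * (1 / N + η)) ∧
      (∀ x, (cnt (fun j => orb T j x ∈ V) 0 n : ℝ) ≤ n * η) := by
  classical
  obtain ⟨M, hM⟩ := exists_nat_gt (6 * N / η)
  have hMpos : (0 : ℝ) < M := lt_of_le_of_lt (by positivity) hM
  have hM0 : 0 < M := by exact_mod_cast hMpos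
  obtain ⟨U, hU, hdis, hcov⟩ := hmk M hM0
  -- uniform covering
  have hcomp : ∃ (R : ℕ), ∀ x, ∃ n : ℤ, |n| ≤ R ∧ (1 : ℝ) / (R + 1) < bump U (orb T n x) := by
    have hop : ∀ R : ℕ, IsOpen {x : X | ∃ n : ℤ, |n| ≤ R ∧
        (1 : ℝ) / (R + 1) < bump U (orb T n x)} := by
      intro R
      simp only [Set.ofPred_exists]
      refine isOpen_iUnion fun n => ?_
      by_cases h : |n| ≤ R
      · simp only [h, true_and]
        exact isOpen_lt continuous_const
          (NNReal.continuous_coe.comp ((continuous_bump U).comp (continuous_orb T n)))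
      · simp [h]
    have hmono : Monotone fun R : ℕ => {x : X | ∃ n : ℤ, |n| ≤ R ∧
        (1 : ℝ) / (R + 1) < bump U (orb T n x)} := by
      intro R R' hR x ⟨n, h1, h2⟩
      refine ⟨n, h1.trans (by exact_mod_cast hR), lt_of_le_of_lt ?_ h2⟩
      have : (R : ℝ) ≤ R' := by exact_mod_cast hR
      exact one_div_le_one_div_of_le (by positivity) (by linarith)
    obtain ⟨R, hR⟩ := (isCompact_univ (X := X)).elim_directed_cover _ hop (by
      intro x _
      have hx : x ∈ ⋃ n : ℤ, ⇑(T.toEquiv ^ n) '' U := by rw [hcov]; trivial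
      obtain ⟨n, y, hy, rfl⟩ := Set.mem_iUnion.1 hx
      have hyx : orb T (-n) ((T.toEquiv ^ n : Equiv.Perm X) y) = y := by
        change orb T (-n) (orb T n y) = y
        rw [← orb_add]; simp [orb_zero]
      have hpos : (0 : ℝ) < bump U y := by exact_mod_cast (bump_pos_iff hU y).2 hy
      obtain ⟨r, hr⟩ := exists_nat_one_div_lt hpos
      refine Set.mem_iUnion.2 ⟨max r n.natAbs, -n, ?_, ?_⟩
      · rw [abs_neg, Int.abs_eq_natAbs]; exact_mod_cast le_max_right _ _
      · erw [hyx]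
        refine lt_of_le_of_lt ?_ hr
        have : (r : ℝ) ≤ (max r n.natAbs : ℕ) := by exact_mod_cast le_max_left _ _
        exact one_div_le_one_div_of_le (by positivity) (by linarith)) hmono.directed_le
    exact ⟨R, fun x => hR (Set.mem_univ x)⟩
  obtain ⟨R, hR⟩ := hcomp
  -- level function
  let L : ℕ := 2 * R + 2
  let u : X → ℝ := fun x => (L : ℝ) * min (1 : ℝ) (((R : ℝ) + 1) * (bump U x : ℝ))
  have hu_cont : Continuous u := by
    have := NNReal.continuous_coe.comp (continuous_bump U)
    exact continuous_const.mul (continuous_const.min (continuous_const.mul this))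
  have huL : ∀ x, u x ≤ L := by
    intro x
    have h : min (1 : ℝ) ((R + 1) * bump U x) ≤ 1 := min_le_left _ _
    have h0 : (0 : ℝ) ≤ L := Nat.cast_nonneg L
    calc u x = L * min (1 : ℝ) (((R : ℝ) + 1) * (bump U x : ℝ)) := rfl
      _ ≤ L * 1 := mul_le_mul_of_nonneg_left h h0
      _ = L := mul_one _
  have hupos : ∀ x, 0 < u x → x ∈ U := by
    intro x hx
    rw [← bump_pos_iff hU x]
    by_contra hc
    have : bump U x = 0 := by simpa using hc
    simp [u, this] at hx
  have hustrong : ∀ x, ∃ p : ℕ, p ≤ L ∧ (p : ℝ) + 1 < u (orb T (-p) x) := by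
    intro x
    obtain ⟨n, hn1, hn2⟩ := hR (orb T (-R) x)
    rw [← orb_add] at hn2
    rw [abs_le] at hn1
    obtain ⟨p, hp⟩ := Int.eq_ofNat_of_zero_le (show 0 ≤ R - n by omega)
    refine ⟨p, by omega, ?_⟩
    have e1 : n + -(R : ℤ) = -(p : ℤ) := by omega
    rw [e1] at hn2
    have h1 : min (1 : ℝ) ((R + 1) * bump U (orb T (-p) x)) = 1 := by
      apply min_eq_left
      rw [div_lt_iff₀ (by positivity)] at hn2
      linarith
    simp only [u, h1, mul_one]
    have : p + 1 < L := by omega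
    exact_mod_cast this
  let a : X → ℤ → ℝ := fun x j => u (orb T j x)
  have ha_shift : ∀ x j i, a (orb T j x) i = a x (i + j) := by
    intro x j i; simp only [a]; rw [orb_add]
  have hEvshift : ∀ x j, Ev L (a (orb T j x)) 0 ↔ Ev L (a x) j := by
    intro x j
    unfold Ev
    simp only [ha_shift]
    have : ∀ q : ℕ, (0 : ℤ) - q + j = j - q := by intro q; ring
    simp only [this, zero_add]
  have hWtshift : ∀ x j, Wt N L (a (orb T j x)) 0 ↔ Wt N L (a x) j := by
    intro x j
    unfold Wt
    simp only [ha_shift]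
    have : ∀ q : ℕ, (0 : ℤ) - q + j = j - q := by intro q; ring
    simp only [this]
  have hcont : ∀ j, Continuous fun x => a x j := fun j => hu_cont.comp (continuous_orb T j)
  have hWopen : IsOpen {x | Wt N L (a x) 0} := by
    unfold Wt
    simp only [Set.ofPred_exists, Set.ofPred_and, Set.ofPred_forall]
    refine isOpen_iUnion fun p => isOpen_const.inter (isOpen_const.inter
      (IsOpen.inter (isOpen_lt continuous_const (hcont _)) ?_))
    have : (⋂ i : ℕ, ⋂ (_ : i < p), {x | a x (0 - i) < i + 1}) =
        ⋂ i ∈ Finset.range p, {x | a x (0 - (i : ℕ)) < i + 1} := by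
      simp
    rw [this]
    exact isOpen_biInter_finset fun i _ => isOpen_lt (hcont _) continuous_const
  have hEopen : ∀ j, IsOpen {x | Ev L (a x) j} := by
    intro j
    unfold Ev
    simp only [Set.ofPred_or, Set.ofPred_exists, Set.ofPred_and]
    exact (isOpen_lt continuous_const (hcont _)).union (isOpen_iUnion fun q =>
      isOpen_const.inter ((isOpen_lt continuous_const (hcont _)).inter
        (isOpen_lt (hcont _) continuous_const)))
  have hVopen : IsOpen {x | ∃ i : ℕ, i < N ∧ Ev L (a x) (0 - i)} := by
    simp only [Set.ofPred_exists, Set.ofPred_and]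
    exact isOpen_iUnion fun i => isOpen_const.inter (hEopen _)
  -- marker gaps
  have hgap : ∀ x s, cnt (fun j => 0 < a x j) s (s + (M + 1 : ℕ)) ≤
      1 + cnt (fun _ => False) s (s + (M + 1 : ℕ)) := by
    intro x s
    refine cnt_window_of_sep _ _ (M + 1) ?_ s
    intro j t ht0 htM h1 h2
    exfalso
    have h3 := hupos _ h1
    have h4 := hupos _ h2
    have h5 := hdis t ht0 (by omega)
    have : orb T (j + t) x ∈ U ∩ T^[t] '' U := by
      refine ⟨h4, orb T j x, h3, ?_⟩
      rw [← orb_natCast, ← orb_add, add_comm]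
    rw [h5] at this
    exact this
  have hmark : ∀ x s r, cnt (fun j => 0 < a x j) s (s + (r * (M + 1) : ℕ)) ≤ r := by
    intro x s r
    have := cnt_windows _ _ (M + 1) (hgap x) s r
    simpa [cnt] using this
  let r : ℕ := L + N
  let n : ℕ := r * N * (M + 1)
  have hE : ∀ x, cnt (Ev L (a x)) (-N) n ≤ 3 * (r * N + r) := by
    intro x
    refine (cnt_Ev L (a x) _ _).trans (Nat.mul_le_mul_left 3 ?_)
    refine le_trans (cnt_mono _ le_rfl ?_) (hmark x _ _)
    have h1 : ((r * N + r) * (M + 1) : ℕ) = n + r * (M + 1) := by simp only [n]; ring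
    have h2 : r ≤ r * (M + 1) := Nat.le_mul_of_pos_right _ (by omega)
    rw [h1]; push_cast
    have h3 : (r : ℤ) ≤ r * (M + 1) := by exact_mod_cast h2
    have h4 : (r : ℤ) = L + N := by simp [r]
    linarith
  have hrpos : 0 < r := by omega
  have hreal : (3 * N * (r * N + r) : ℝ) ≤ n * η := by
    rw [div_lt_iff₀ hη] at hM
    have hN1 : (1 : ℝ) ≤ N := by exact_mod_cast hN
    have hr0 : (0 : ℝ) < r := by exact_mod_cast hrpos
    simp only [n]; push_cast
    calc (3 * N * (r * N + r) : ℝ) ≤ 3 * N * (r * N + r * N) := by gcongr; nlinarith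
      _ = (r * N) * (6 * N) := by ring
      _ ≤ (r * N) * ((M + 1) * η) := mul_le_mul_of_nonneg_left (by nlinarith) (by positivity)
      _ = _ := by ring
  refine ⟨{x | Wt N L (a x) 0}, {x | ∃ i : ℕ, i < N ∧ Ev L (a x) (0 - i)}, n, hWopen, hVopen,
    by positivity, ?_, ?_, ?_⟩
  · intro x
    by_cases hx : ∃ i : ℕ, i < N ∧ Ev L (a x) (0 - i)
    · exact Or.inl hx
    · right
      push Not at hx
      obtain ⟨i, hi, hW⟩ := exists_Wt hN (a := a x) 0 hx (by
        obtain ⟨p, h1, h2⟩ := hustrong x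
        exact ⟨p, h1, by simpa [a] using h2⟩)
      refine ⟨i, hi, ?_⟩
      simp only [Set.mem_ofPred_eq, hWtshift]
      simpa using hW
  · intro x
    simp only [Set.mem_ofPred_eq, hWtshift]
    have hw := cnt_windows (Wt N L (a x)) (Ev L (a x)) N (cnt_window_of_sep _ _ N
      (fun j t h0 h1 h2 h3 => Wt_gap (fun j => huL _) h0 h1 h2 h3)) 0 (r * (M + 1))
    have e1 : (r * (M + 1) * N : ℕ) = n := by simp only [n]; ring
    rw [e1, zero_add] at hw
    have h2 : cnt (Ev L (a x)) 0 n ≤ 3 * (r * N + r) :=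
      (cnt_mono _ (by omega) le_rfl).trans (hE x)
    have h3 : ((cnt (Wt N L (a x)) 0 n : ℕ) : ℝ) ≤ r * (M + 1) + 3 * (r * N + r) := by
      exact_mod_cast hw.trans (by omega)
    have hN1 : (1 : ℝ) ≤ N := by exact_mod_cast hN
    have h4 : (3 * (r * N + r) : ℝ) ≤ n * η := by
      refine le_trans ?_ hreal
      have : (0 : ℝ) ≤ r * N + r := by positivity
      nlinarith
    have h5 : (n : ℝ) * (1 / N) = r * (M + 1) := by
      simp only [n]; push_cast; field_simp
    rw [mul_add, h5]
    linarith
  · intro x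
    have hsh : ∀ j, (∃ i : ℕ, i < N ∧ Ev L (a (orb T j x)) (0 - i)) ↔
        ∃ i : ℕ, i < N ∧ Ev L (a x) (j - i) := by
      intro j
      refine exists_congr fun i => and_congr_right fun _ => ?_
      rw [← hEvshift, ← orb_add, ← hEvshift x (j - i)]
      congr! 3
      ring
    simp only [Set.mem_ofPred_eq, hsh]
    have h1 := cnt_thick (Ev L (a x)) N 0 n
    rw [zero_sub] at h1
    have h2 := h1.trans (Nat.mul_le_mul_left N (hE x))
    have h3 : ((cnt (fun j => ∃ i : ℕ, i < N ∧ Ev L (a x) (j - i)) 0 n : ℕ) : ℝ) ≤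
        N * (3 * (r * N + r)) := by exact_mod_cast h2
    linarith



lemma mem_joinN {X : Type*} {T : X → X} {α : Finset (Set X)} {n : ℕ} {B : Set X} :
    B ∈ joinN T α n ↔ ∃ f : Fin n → Set X, (∀ j, f j ∈ α) ∧
      B = ⋂ j : Fin n, T^[(j : ℕ)] ⁻¹' f j := by
  classical
  unfold joinN
  simp only [Finset.mem_image, Fintype.mem_piFinset]
  exact exists_congr fun f => and_congr_right fun _ => eq_comm

lemma isFinOpenCover_joinN {X : Type*} [TopologicalSpace X] {T : X → X} (hT : Continuous T)
    {α : Finset (Set X)} (hα : IsFinOpenCover α) (n : ℕ) : IsFinOpenCover (joinN T α n) := by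
  constructor
  · intro A hA
    obtain ⟨f, hf, rfl⟩ := mem_joinN.1 hA
    exact isOpen_iInter_of_finite fun j => (hα.1 _ (hf j)).preimage (hT.iterate _)
  · rw [Set.eq_univ_iff_forall]
    intro x
    have h : ∀ y, ∃ A ∈ α, y ∈ A := by
      intro y
      have : y ∈ ⋃₀ (α : Set (Set X)) := by rw [hα.2]; trivial
      obtain ⟨A, hA, hy⟩ := this
      exact ⟨A, hA, hy⟩
    choose g hg1 hg2 using h
    refine ⟨_, mem_joinN.2 ⟨fun j => g (T^[(j : ℕ)] x), fun j => hg1 _, rfl⟩, ?_⟩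
    simp only [Set.mem_iInter, Set.mem_preimage]
    exact fun j => hg2 _

lemma card_sub_eq {X : Type*} (β : Finset (Set X)) (x : X) :
    open Classical in
    Nat.card {B : Set X // B ∈ β ∧ x ∈ B} = (β.filter (fun B => x ∈ B)).card := by
  classical
  rw [← Nat.card_eq_finsetCard]
  exact Nat.card_congr (Equiv.subtypeEquivRight (by simp))

lemma card_le_ordCover {X : Type*} (β : Finset (Set X)) (x : X) :
    open Classical in
    (β.filter (fun B => x ∈ B)).card ≤ ordCover β + 1 := by
  classical
  unfold ordCover
  have : (β.filter (fun B => x ∈ B)).card ≤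
      sSup {k | ∃ x : X, Nat.card {B : Set X // B ∈ β ∧ x ∈ B} = k} := by
    apply le_csSup
    · refine ⟨β.card, ?_⟩
      rintro k ⟨y, rfl⟩
      rw [card_sub_eq]
      exact Finset.card_filter_le _ _
    · exact ⟨x, card_sub_eq β x⟩
  omega

lemma ordCover_le {X : Type*} (β : Finset (Set X)) (m : ℕ)
    (h : open Classical in ∀ x, (β.filter (fun B => x ∈ B)).card ≤ m + 1) : ordCover β ≤ m := by
  classical
  unfold ordCover
  have : sSup {k | ∃ x : X, Nat.card {B : Set X // B ∈ β ∧ x ∈ B} = k} ≤ m + 1 := by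
    apply csSup_le'
    rintro k ⟨y, rfl⟩
    rw [card_sub_eq]
    exact h y
  omega

lemma exists_refine {X : Type*} [TopologicalSpace X] {α : Finset (Set X)}
    (hα : IsFinOpenCover α) :
    open Classical in ∃ γ : Finset (Set X), IsFinOpenCover γ ∧ (∀ B ∈ γ, ∃ A ∈ α, B ⊆ A) ∧
      ∀ x, (γ.filter (fun B => x ∈ B)).card ≤ Dcover α + 1 := by
  classical
  have hne : {k | ∃ β : Finset (Set X), IsFinOpenCover β ∧ (∀ B ∈ β, ∃ A ∈ α, B ⊆ A) ∧
    ordCover β = k}.Nonempty := ⟨_, α, hα, fun B hB => ⟨B, hB, le_rfl⟩, rfl⟩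
  obtain ⟨γ, h1, h2, h3⟩ := Nat.sInf_mem hne
  refine ⟨γ, h1, h2, fun x => ?_⟩
  have := card_le_ordCover γ x
  rw [h3] at this
  exact this

lemma sum_cnt_inter {X : Type*} (o : ℤ → X) (γ : Finset (Set X)) (W : Set X) (K n : ℕ)
    (h : open Classical in ∀ x, (γ.filter (fun B => x ∈ B)).card ≤ K) :
    ∑ B ∈ γ, cnt (fun j => o j ∈ B ∩ W) 0 n ≤ K * cnt (fun j => o j ∈ W) 0 n := by
  classical
  unfold cnt
  simp only [Finset.card_filter]
  rw [Finset.sum_comm, Finset.mul_sum]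
  refine Finset.sum_le_sum fun j _ => ?_
  by_cases hW : o j ∈ W
  · simp only [Set.mem_inter_iff, hW, and_true, if_true, mul_one]
    have := h (o j)
    rwa [Finset.card_filter] at this
  · simp [hW]

lemma meanOrder {X : Type*} [MetricSpace X] [CompactSpace X] (T : X ≃ₜ X)
    (hmk : MarkerProperty T) (s : ℝ) (hs : mdimTop T < ENNReal.ofReal s) (ρ : ℝ) (hρ : 0 < ρ) :
    ∃ (β : Finset (Set X)) (N : ℕ) (Λ : ℝ≥0) (n : ℕ), 0 < n ∧ 1 ≤ Λ ∧ (∀ B ∈ β, IsOpen B) ∧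
      (∀ x, ((∑ B ∈ β, cnt (fun j => orb T j x ∈ B) 0 n : ℕ) : ℝ) ≤ s * n) ∧
      ∀ x, ∃ k ≤ N, ∃ C ∈ β, 2 ≤ Λ * bump C (orb T (-(k : ℕ)) x) ∧
        ∀ z ∈ C, ∀ z' ∈ C, dist (orb T k z) (orb T k z') ≤ ρ := by
  classical
  -- cover by small balls
  obtain ⟨t, ht⟩ := (isCompact_univ (X := X)).elim_finite_subcover (fun x : X => Metric.ball x (ρ / 2))
    (fun x => Metric.isOpen_ball)
    (fun x _ => Set.mem_iUnion.2 ⟨x, Metric.mem_ball_self (by positivity)⟩)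
  let α : Finset (Set X) := t.image (fun x => Metric.ball x (ρ / 2))
  have hα : IsFinOpenCover α := by
    constructor
    · intro A hA
      obtain ⟨x, _, rfl⟩ := Finset.mem_image.1 hA
      exact Metric.isOpen_ball
    · rw [Set.eq_univ_iff_forall]
      intro x
      obtain ⟨y, hy⟩ := Set.mem_iUnion.1 (ht (Set.mem_univ x))
      obtain ⟨hy1, hy2⟩ := Set.mem_iUnion.1 hy
      exact ⟨_, Finset.mem_coe.2 (Finset.mem_image_of_mem _ hy1), hy2⟩
  have hαd : ∀ A ∈ α, ∀ z ∈ A, ∀ z' ∈ A, dist z z' ≤ ρ := by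
    intro A hA z hz z' hz'
    obtain ⟨x, _, rfl⟩ := Finset.mem_image.1 hA
    have h1 := Metric.mem_ball.1 hz
    have h2 := Metric.mem_ball.1 hz'
    have := dist_triangle_right z z' x
    linarith
  have hcovα : ∀ x, ∃ A ∈ α, x ∈ A := fun x => by
    have : x ∈ ⋃₀ (α : Set (Set X)) := by rw [hα.2]; trivial
    exact this
  -- choose s'
  obtain ⟨s', hs'0, hs'1, hs'2⟩ := ENNReal.lt_iff_exists_real_btwn.1 hs
  have hss : s' < s := (ENNReal.ofReal_lt_ofReal_iff_of_nonneg hs'0).1 hs'2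
  have hlim : Filter.liminf (fun n : ℕ => (Dcover (joinN T α n) : ℝ≥0∞) / (n : ℝ≥0∞)) atTop
      < ENNReal.ofReal s' := lt_of_le_of_lt (le_iSup₂_of_le α hα le_rfl) hs'1
  have hfreq := Filter.frequently_lt_of_liminf_lt (by isBoundedDefault) hlim
  obtain ⟨N0, hN0⟩ := exists_nat_gt (2 / (s - s'))
  obtain ⟨N, hNN, hD⟩ := (Filter.frequently_atTop.1 hfreq) (max N0 1)
  have hN1 : 1 ≤ N := (le_max_right _ _).trans hNN
  have hNpos : (0 : ℝ) < N := by exact_mod_cast hN1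
  have hNs : 1 / (N : ℝ) ≤ (s - s') / 2 := by
    have h1 : (N0 : ℝ) ≤ N := by exact_mod_cast (le_max_left _ _).trans hNN
    have h2 : 2 / (s - s') ≤ N := by linarith
    have h3 : 0 < s - s' := by linarith
    rw [div_le_iff₀ h3] at h2
    rw [div_le_div_iff₀ hNpos (by norm_num)]
    linarith
  have hDr : (Dcover (joinN T α N) : ℝ) ≤ s' * N := by
    rw [ENNReal.div_lt_iff (by left; exact_mod_cast (by omega)) (by left; simp)] at hD
    have : ENNReal.ofReal (Dcover (joinN T α N) : ℝ) ≤ ENNReal.ofReal (s' * N) := by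
      rw [ENNReal.ofReal_mul hs'0]; simpa using hD.le
    exact (ENNReal.ofReal_le_ofReal_iff (by positivity)).1 this
  obtain ⟨γ, hγ1, hγ2, hγ3⟩ := exists_refine (isFinOpenCover_joinN T.continuous hα N)
  set D := Dcover (joinN T α N)
  let den : ℝ := s' * N + 1 + α.card
  have hden : 0 < den := by positivity
  obtain ⟨W, V, n, hW, hV, hn, hWV, hcW, hcV⟩ := tower T hmk N hN1 ((s - s') / 2 / den)
    (div_pos (by linarith) hden)
  let good : Set X → ℕ → Prop := fun C k => ∀ z ∈ C, ∀ z' ∈ C, dist (orb T k z) (orb T k z') ≤ ρ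
  let β : Finset (Set X) := γ.image (fun B => B ∩ W) ∪ α.image (fun A => A ∩ V)
  have hβo : ∀ B ∈ β, IsOpen B := by
    intro B hB
    rcases Finset.mem_union.1 hB with h | h
    · obtain ⟨C, hC, rfl⟩ := Finset.mem_image.1 h
      exact (hγ1.1 C hC).inter hW
    · obtain ⟨C, hC, rfl⟩ := Finset.mem_image.1 h
      exact (hα.1 C hC).inter hV
  have hcovβ : ∀ x, ∃ k ≤ N, ∃ C ∈ β, orb T (-(k : ℕ)) x ∈ C ∧ good C k := by
    intro x
    rcases hWV x with hx | ⟨k, hk, hx⟩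
    · obtain ⟨A, hA, hxA⟩ := hcovα x
      refine ⟨0, by omega, A ∩ V, Finset.mem_union_right _ (Finset.mem_image_of_mem _ hA), ?_, ?_⟩
      · simpa [orb_zero] using ⟨hxA, hx⟩
      · intro z hz z' hz'
        simpa [orb_zero] using hαd A hA z hz.1 z' hz'.1
    · have : orb T (-(k : ℕ)) x ∈ ⋃₀ (γ : Set (Set X)) := by rw [hγ1.2]; trivial
      obtain ⟨B, hB, hxB⟩ := this
      refine ⟨k, hk.le, B ∩ W, Finset.mem_union_left _ (Finset.mem_image_of_mem _ hB),
        ⟨hxB, hx⟩, ?_⟩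
      intro z hz z' hz'
      obtain ⟨J, hJ, hBJ⟩ := hγ2 B hB
      obtain ⟨f, hf, rfl⟩ := mem_joinN.1 hJ
      have h1 := Set.mem_iInter.1 (hBJ hz.1) ⟨k, hk⟩
      have h2 := Set.mem_iInter.1 (hBJ hz'.1) ⟨k, hk⟩
      rw [orb_natCast, orb_natCast]
      exact hαd _ (hf ⟨k, hk⟩) _ h1 _ h2
  have hΛ : ∃ R : ℕ, ∀ x, ∃ k ≤ N, ∃ C ∈ β, good C k ∧
      2 < (R : ℝ≥0) * bump C (orb T (-(k : ℕ)) x) := by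
    have hop : ∀ R : ℕ, IsOpen {x : X | ∃ k ≤ N, ∃ C ∈ β, good C k ∧
        2 < (R : ℝ≥0) * bump C (orb T (-(k : ℕ)) x)} := by
      intro R
      simp only [Set.ofPred_exists, Set.ofPred_and]
      refine isOpen_iUnion fun k => isOpen_const.inter (isOpen_iUnion fun C =>
        isOpen_const.inter (isOpen_const.inter (isOpen_lt continuous_const
          (continuous_const.mul ((continuous_bump C).comp (continuous_orb T _))))))
    have hmono : Monotone fun R : ℕ => {x : X | ∃ k ≤ N, ∃ C ∈ β, good C k ∧
        2 < (R : ℝ≥0) * bump C (orb T (-(k : ℕ)) x)} := by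
      rintro R R' hR x ⟨k, h1, C, h2, h3, h4⟩
      refine ⟨k, h1, C, h2, h3, lt_of_lt_of_le h4 ?_⟩
      have : (R : ℝ≥0) ≤ R' := by exact_mod_cast hR
      gcongr
    obtain ⟨R, hR⟩ := (isCompact_univ (X := X)).elim_directed_cover _ hop (by
      intro x _
      obtain ⟨k, h1, C, h2, h3, h4⟩ := hcovβ x
      have hp := (bump_pos_iff (hβo C h2) _).2 h3
      obtain ⟨R, hR⟩ := exists_nat_gt (2 / bump C (orb T (-(k : ℕ)) x))
      refine Set.mem_iUnion.2 ⟨R, k, h1, C, h2, h4, ?_⟩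
      rwa [div_lt_iff₀ hp] at hR) hmono.directed_le
    exact ⟨R, fun x => hR (Set.mem_univ x)⟩
  obtain ⟨R, hR⟩ := hΛ
  refine ⟨β, N, max 1 R, n, hn, le_max_left _ _, hβo, ?_, ?_⟩
  · intro x
    have h1 : ∑ B ∈ β, cnt (fun j => orb T j x ∈ B) 0 n ≤
        (D + 1) * cnt (fun j => orb T j x ∈ W) 0 n + α.card * cnt (fun j => orb T j x ∈ V) 0 n := by
      have hu : ∑ B ∈ β, cnt (fun j => orb T j x ∈ B) 0 n ≤
          ∑ B ∈ γ.image (fun B => B ∩ W), cnt (fun j => orb T j x ∈ B) 0 n +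
          ∑ B ∈ α.image (fun A => A ∩ V), cnt (fun j => orb T j x ∈ B) 0 n := by
        rw [← Finset.sum_union_inter]; exact Nat.le_add_right _ _
      refine hu.trans (add_le_add ?_ ?_)
      · exact (Finset.sum_image_le_of_nonneg (fun _ _ => Nat.zero_le _)).trans
          (sum_cnt_inter _ γ W _ n hγ3)
      · exact (Finset.sum_image_le_of_nonneg (fun _ _ => Nat.zero_le _)).trans
          (sum_cnt_inter _ α V _ n (fun y => Finset.card_filter_le _ _))
    have h2 : ((∑ B ∈ β, cnt (fun j => orb T j x ∈ B) 0 n : ℕ) : ℝ) ≤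
        (D + 1) * (cnt (fun j => orb T j x ∈ W) 0 n) +
          α.card * (cnt (fun j => orb T j x ∈ V) 0 n) := by exact_mod_cast h1
    refine h2.trans ?_
    have hn0 : (0 : ℝ) < n := by exact_mod_cast hn
    set η := (s - s') / 2 / den with hηdef
    have hη0 : 0 < η := div_pos (by linarith) hden
    have hηden : η * den = (s - s') / 2 := by rw [hηdef]; field_simp
    calc ((D : ℝ) + 1) * (cnt (fun j => orb T j x ∈ W) 0 n) +
          α.card * (cnt (fun j => orb T j x ∈ V) 0 n)
        ≤ (s' * N + 1) * (n * (1 / N + η)) + α.card * (n * η) := by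
          gcongr
          · exact hcW x
          · exact hcV x
      _ = n * (s' + 1 / N + η * den) := by simp only [den]; field_simp; ring
      _ ≤ s * n := by
        rw [hηden, mul_comm]
        apply mul_le_mul_of_nonneg_right _ hn0.le
        linarith
  · intro x
    obtain ⟨k, h1, C, h2, h3, h4⟩ := hR x
    refine ⟨k, h1, C, h2, h4.le.trans ?_, h3⟩
    gcongr
    exact le_max_right _ _



/-- data of one level of the inverse system -/
structure Lev (X : Type*) where
  β : Finset (Set X)
  N : ℕ
  Λ : ℝ≥0
  n : ℕ

/-- properties of one level -/
structure Lev.Good {X : Type*} [MetricSpace X] (T : X ≃ₜ X) (D : Lev X) (s : ℝ) (ρ : ℝ≥0) :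
    Prop where
  npos : 0 < D.n
  one_le : 1 ≤ D.Λ
  isOpen : ∀ B ∈ D.β, IsOpen B
  count : ∀ x, ((∑ B ∈ D.β, cnt (fun j => orb T j x ∈ B) 0 D.n : ℕ) : ℝ) ≤ s * D.n
  strong : ∀ x, ∃ k ≤ D.N, ∃ C ∈ D.β, 2 ≤ D.Λ * bump C (orb T (-(k : ℕ)) x) ∧
        ∀ z ∈ C, ∀ z' ∈ C, nndist (orb T k z) (orb T k z') ≤ ρ

lemma exists_levels {X : Type*} [MetricSpace X] [CompactSpace X] (T : X ≃ₜ X)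
    (hmk : MarkerProperty T) (hm : mdimTop T ≠ ⊤) :
    ∃ D : ℕ → Lev X, ∀ l, (D l).Good T ((mdimTop T).toReal + 1 / ((l : ℝ) + 1))
      ((2 : ℝ≥0)⁻¹ ^ l / ∏ i ∈ Finset.range l, (D i).Λ) := by
  have key : ∀ (l : ℕ) (Q : ℝ≥0), ∃ D : Lev X, 0 < Q →
      D.Good T ((mdimTop T).toReal + 1 / ((l : ℝ) + 1)) ((2 : ℝ≥0)⁻¹ ^ l / Q) := by
    intro l Q
    by_cases hQ : 0 < Q
    · have h1 : mdimTop T < ENNReal.ofReal ((mdimTop T).toReal + 1 / ((l : ℝ) + 1)) := by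
        conv_lhs => rw [← ENNReal.ofReal_toReal hm]
        have : (0 : ℝ) < 1 / ((l : ℝ) + 1) := by positivity
        have h0 : 0 ≤ (mdimTop T).toReal := ENNReal.toReal_nonneg
        exact (ENNReal.ofReal_lt_ofReal_iff (by linarith)).2 (by linarith)
      have h2 : (0 : ℝ≥0) < (2 : ℝ≥0)⁻¹ ^ l / Q := by positivity
      obtain ⟨β, N, Λ, n, a1, a2, a3, a4, a5⟩ := meanOrder T hmk _ h1
        (((2 : ℝ≥0)⁻¹ ^ l / Q : ℝ≥0) : ℝ) (by exact_mod_cast h2)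
      refine ⟨⟨β, N, Λ, n⟩, fun _ => ⟨a1, a2, a3, a4, ?_⟩⟩
      intro x
      obtain ⟨k, b1, C, b2, b3, b4⟩ := a5 x
      refine ⟨k, b1, C, b2, b3, fun z hz z' hz' => ?_⟩
      have := b4 z hz z' hz'
      rwa [← coe_nndist, NNReal.coe_le_coe] at this
    · exact ⟨⟨∅, 0, 0, 0⟩, fun h => absurd h hQ⟩
  choose pick hpick using key
  let Q : ℕ → ℝ≥0 := fun l => Nat.rec 1 (fun l q => q * (pick l q).Λ) l
  have hQs : ∀ l, Q (l + 1) = Q l * (pick l (Q l)).Λ := fun l => rfl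
  have hQpos : ∀ l, 0 < Q l := by
    intro l
    induction l with
    | zero => exact zero_lt_one
    | succ l ih =>
      rw [hQs]
      exact mul_pos ih (lt_of_lt_of_le zero_lt_one (hpick l (Q l) ih).one_le)
  have hQprod : ∀ l, Q l = ∏ i ∈ Finset.range l, (pick i (Q i)).Λ := by
    intro l
    induction l with
    | zero => rfl
    | succ l ih => rw [hQs, Finset.prod_range_succ, ← ih]
  refine ⟨fun l => pick l (Q l), fun l => ?_⟩
  rw [← hQprod]
  exact hpick l _ (hQpos l)

section Psi
variable {X : Type*} [MetricSpace X] (T : X ≃ₜ X)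

/-- minimal value of the bump of `B` along `T^k C` -/
def bb (B C : Set X) (k : ℕ) : ℝ≥0 := ⨅ z : C, bump B (orb T k z)

/-- the transfer operator between two levels -/
def Psi (D : Lev X) (g : Set X → X → ℝ≥0) (B : Set X) (x : X) : ℝ≥0 :=
  (D.β ×ˢ Finset.range (D.N + 1)).sup
    (fun p => min (bb T B p.1 p.2) (D.Λ * g p.1 (orb T (-(p.2 : ℕ)) x)))

lemma Psi_le {D : Lev X} {g g' : Set X → X → ℝ≥0} {B : Set X} {x y : X} {e : ℝ≥0}
    (h : ∀ C ∈ D.β, ∀ k ≤ D.N, g C (orb T (-(k : ℕ)) x) ≤ g' C (orb T (-(k : ℕ)) y) + e) :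
    Psi T D g B x ≤ Psi T D g' B y + D.Λ * e := by
  unfold Psi
  refine Finset.sup_le fun p hp => ?_
  have hp' := Finset.mem_product.1 hp
  have h1 := h p.1 hp'.1 p.2 (by have := Finset.mem_range.1 hp'.2; omega)
  have h2 : min (bb T B p.1 p.2) (D.Λ * g p.1 (orb T (-(p.2 : ℕ)) x)) ≤
      min (bb T B p.1 p.2) (D.Λ * g' p.1 (orb T (-(p.2 : ℕ)) y)) + D.Λ * e := by
    rcases le_total (bb T B p.1 p.2) (D.Λ * g' p.1 (orb T (-(p.2 : ℕ)) y)) with h3 | h3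
    · rw [min_eq_left h3]
      exact (min_le_left _ _).trans le_self_add
    · rw [min_eq_right h3, ← mul_add]
      refine (min_le_right _ _).trans ?_
      gcongr
  refine h2.trans ?_
  gcongr
  exact Finset.le_sup (f := fun p : Set X × ℕ => min (bb T B p.1 p.2)
    (D.Λ * g' p.1 (orb T (-(p.2 : ℕ)) y))) hp

lemma orb_orb_neg (k : ℤ) (x : X) : orb T k (orb T (-k) x) = x := by
  rw [← orb_add]; simp [orb_zero]

lemma Psi_bump_le {D : Lev X} (hD : ∀ B ∈ D.β, IsOpen B) (B : Set X) (x : X) :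
    Psi T D bump B x ≤ bump B x := by
  unfold Psi
  refine Finset.sup_le fun p hp => ?_
  have hp' := Finset.mem_product.1 hp
  by_cases hx : orb T (-(p.2 : ℕ)) x ∈ p.1
  · refine (min_le_left _ _).trans ?_
    unfold bb
    refine (ciInf_le' _ (⟨_, hx⟩ : p.1)).trans ?_
    rw [orb_orb_neg]
  · rw [← bump_pos_iff (hD _ hp'.1)] at hx
    have : bump p.1 (orb T (-(p.2 : ℕ)) x) = 0 := by simpa using hx
    rw [this]; simp

lemma bump_le_Psi {D : Lev X} {s : ℝ} {ρ : ℝ≥0} (hD : D.Good T s ρ) (B : Set X) (x : X) :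
    bump B x ≤ Psi T D bump B x + ρ := by
  obtain ⟨k, hk, C, hC, h1, h2⟩ := hD.strong x
  have hx : orb T (-(k : ℕ)) x ∈ C := by
    rw [← bump_pos_iff (hD.isOpen C hC)]
    by_contra hc
    have : bump C (orb T (-(k : ℕ)) x) = 0 := by simpa using hc
    rw [this] at h1; simp at h1
  have h3 : bump B x ≤ bb T B C k + ρ := by
    rw [← tsub_le_iff_right]
    unfold bb
    have : Nonempty C := ⟨⟨_, hx⟩⟩
    refine le_ciInf fun z => ?_
    rw [tsub_le_iff_right]
    refine (bump_lip B x (orb T k z)).trans ?_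
    gcongr
    have := h2 _ hx z z.2
    rwa [orb_orb_neg] at this
  have h4 : bb T B C k ≤ 1 := by
    unfold bb
    exact (ciInf_le' _ (⟨_, hx⟩ : C)).trans (bump_le_one _ _)
  refine h3.trans ?_
  gcongr
  have h5 : bb T B C k = min (bb T B C k) (D.Λ * bump C (orb T (-(k : ℕ)) x)) := by
    rw [min_eq_left]
    exact h4.trans (le_trans (by norm_num) h1)
  rw [h5]
  unfold Psi
  exact Finset.le_sup (f := fun p : Set X × ℕ => min (bb T B p.1 p.2)
    (D.Λ * bump p.1 (orb T (-(p.2 : ℕ)) x))) (Finset.mem_product.2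
      ⟨hC, Finset.mem_range.2 (by omega)⟩ : (C, k) ∈ D.β ×ˢ Finset.range (D.N + 1))

lemma continuous_Psi {D : Lev X} {g : Set X → X → ℝ≥0} (hg : ∀ B, Continuous (g B))
    (B : Set X) : Continuous (Psi T D g B) := by
  unfold Psi
  refine Continuous.finset_sup_apply fun p _ => ?_
  exact continuous_const.min (continuous_const.mul ((hg _).comp (continuous_orb T _)))

/-- finite approximations to the limit functions -/
def hh (D : ℕ → Lev X) : ℕ → ℕ → Set X → X → ℝ≥0
  | 0, _ => bump
  | j + 1, k => Psi T (D (k + 1)) (hh D j (k + 1))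

/-- limit functions -/
def gg (D : ℕ → Lev X) (k : ℕ) (B : Set X) (x : X) : ℝ≥0 := ⨅ j, hh T D j k B x

lemma hh_cont (D : ℕ → Lev X) (j : ℕ) : ∀ k B, Continuous (hh T D j k B) := by
  induction j with
  | zero => intro k B; exact continuous_bump B
  | succ j ih => intro k B; exact continuous_Psi T (ih (k + 1)) B

lemma hh_anti (D : ℕ → Lev X) (hD : ∀ l, ∀ B ∈ (D l).β, IsOpen B) (j : ℕ) :
    ∀ k B x, hh T D (j + 1) k B x ≤ hh T D j k B x := by
  induction j with
  | zero => intro k B x; exact Psi_bump_le T (hD (k + 1)) B x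
  | succ j ih =>
    intro k B x
    have := Psi_le T (D := D (k + 1)) (g := hh T D (j + 1) (k + 1)) (g' := hh T D j (k + 1))
      (B := B) (x := x) (y := x) (e := 0) (fun C _ i _ => by simpa using ih (k + 1) C _)
    simpa [hh] using this

/-- one over the product of the first Lipschitz constants -/
def cc (D : ℕ → Lev X) (k : ℕ) : ℝ≥0 := (∏ i ∈ Finset.range (k + 1), (D i).Λ)⁻¹

lemma hh_step (D : ℕ → Lev X) {s : ℕ → ℝ}
    (hD : ∀ l, (D l).Good T (s l) ((2 : ℝ≥0)⁻¹ ^ l / ∏ i ∈ Finset.range l, (D i).Λ)) (j : ℕ) :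
    ∀ k B x, hh T D j k B x ≤ hh T D (j + 1) k B x + cc D k * (2 : ℝ≥0)⁻¹ ^ (k + j + 1) := by
  induction j with
  | zero =>
    intro k B x
    have := bump_le_Psi T (hD (k + 1)) B x
    rw [div_eq_inv_mul] at this
    exact this
  | succ j ih =>
    intro k B x
    have := Psi_le T (D := D (k + 1)) (g := hh T D j (k + 1)) (g' := hh T D (j + 1) (k + 1))
      (B := B) (x := x) (y := x) (fun C _ i _ => ih (k + 1) C _)
    refine this.trans (le_of_eq ?_)
    have hΛ : (D (k + 1)).Λ ≠ 0 := (lt_of_lt_of_le zero_lt_one (hD (k + 1)).one_le).ne'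
    have h1 : (D (k + 1)).Λ * cc D (k + 1) = cc D k := by
      unfold cc
      rw [Finset.prod_range_succ _ (k + 1), mul_inv, mul_comm, mul_assoc, inv_mul_cancel₀ hΛ,
        mul_one]
    rw [← mul_assoc, h1]
    have h2 : k + 1 + j + 1 = k + (j + 1) + 1 := by ring
    rw [h2]
    rfl

lemma hh_tail (D : ℕ → Lev X) {s : ℕ → ℝ}
    (hD : ∀ l, (D l).Good T (s l) ((2 : ℝ≥0)⁻¹ ^ l / ∏ i ∈ Finset.range l, (D i).Λ)) (j i : ℕ)
    (k : ℕ) (B : Set X) (x : X) :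
    hh T D j k B x + cc D k * (2 : ℝ≥0)⁻¹ ^ (k + j + i) ≤
      hh T D (j + i) k B x + cc D k * (2 : ℝ≥0)⁻¹ ^ (k + j) := by
  induction i with
  | zero => simp
  | succ i ih =>
    have h1 := hh_step T D hD (j + i) k B x
    have h2 : cc D k * (2 : ℝ≥0)⁻¹ ^ (k + j + i) = cc D k * (2 : ℝ≥0)⁻¹ ^ (k + j + i + 1) +
        cc D k * (2 : ℝ≥0)⁻¹ ^ (k + j + i + 1) := by
      rw [pow_succ, ← two_mul]
      field_simp
    rw [h2] at ih
    have h3 : k + (j + i) + 1 = k + j + i + 1 := by ring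
    rw [h3] at h1
    have h4 := ih.trans (add_le_add_left h1 _)
    rw [← add_assoc, add_right_comm _ _ (cc D k * (2 : ℝ≥0)⁻¹ ^ (k + j))] at h4
    exact le_of_add_le_add_right h4

lemma gg_le (D : ℕ → Lev X) (k j : ℕ) (B : Set X) (x : X) : gg T D k B x ≤ hh T D j k B x :=
  ciInf_le' _ j

lemma hh_le_gg (D : ℕ → Lev X) {s : ℕ → ℝ}
    (hD : ∀ l, (D l).Good T (s l) ((2 : ℝ≥0)⁻¹ ^ l / ∏ i ∈ Finset.range l, (D i).Λ)) (j : ℕ)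
    (k : ℕ) (B : Set X) (x : X) :
    hh T D j k B x ≤ gg T D k B x + cc D k * (2 : ℝ≥0)⁻¹ ^ (k + j) := by
  rw [← tsub_le_iff_right]
  refine le_ciInf fun i => ?_
  rw [tsub_le_iff_right]
  rcases le_total j i with h | h
  · obtain ⟨r, rfl⟩ := Nat.exists_eq_add_of_le h
    exact le_self_add.trans (hh_tail T D hD j r k B x)
  · have : Antitone fun j => hh T D j k B x :=
      antitone_nat_of_succ_le fun j => hh_anti T D (fun l => (hD l).isOpen) j k B x
    exact (this h).trans le_self_add

lemma cc_le (D : ℕ → Lev X) (hD : ∀ l, 1 ≤ (D l).Λ) (k : ℕ) : cc D k ≤ (D k).Λ⁻¹ := by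
  unfold cc
  have h1 : (1 : ℝ≥0) ≤ ∏ i ∈ Finset.range k, (D i).Λ := Finset.one_le_prod' fun i _ => hD i
  have h2 : 0 < (D k).Λ := lt_of_lt_of_le zero_lt_one (hD k)
  apply inv_anti₀ h2
  rw [Finset.prod_range_succ]
  exact le_mul_of_one_le_left (by positivity) h1

lemma exists_system [CompactSpace X] (hmk : MarkerProperty T) (hm : mdimTop T ≠ ⊤) :
    ∃ (D : ℕ → Lev X) (g : ℕ → Set X → X → ℝ≥0), (∀ k, 0 < (D k).n) ∧ (∀ k, 1 ≤ (D k).Λ) ∧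
      (∀ k x, ((∑ B ∈ (D k).β, cnt (fun j => orb T j x ∈ B) 0 (D k).n : ℕ) : ℝ) ≤
        ((mdimTop T).toReal + 1 / ((k : ℝ) + 1)) * (D k).n) ∧
      (∀ k B, Continuous (g k B)) ∧
      (∀ k, ∀ B ∈ (D k).β, ∀ x, g k B x ≠ 0 → x ∈ B) ∧
      (∀ k B x, g k B x ≤ 1) ∧
      (∀ k B x y e, (∀ C ∈ (D (k + 1)).β, ∀ i ≤ (D (k + 1)).N,
        g (k + 1) C (orb T (-(i : ℕ)) x) ≤ g (k + 1) C (orb T (-(i : ℕ)) y) + e) →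
        g k B x ≤ g k B y + (D (k + 1)).Λ * e) ∧
      (∀ k x y, (∀ B ∈ (D k).β, ∀ i ≤ (D k).N,
        g k B (orb T (-(i : ℕ)) x) = g k B (orb T (-(i : ℕ)) y)) →
        dist x y ≤ (2 : ℝ)⁻¹ ^ k) := by
  obtain ⟨D, hD⟩ := exists_levels T hmk hm
  have hlim : Tendsto (fun j : ℕ => (2 : ℝ≥0)⁻¹ ^ j) atTop (𝓝 0) :=
    tendsto_pow_atTop_nhds_zero_of_lt_one zero_le (by
      rw [← NNReal.coe_lt_coe]; push_cast; norm_num)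
  have hcc1 : ∀ k, cc D k ≤ 1 := fun k => (cc_le D (fun l => (hD l).one_le) k).trans
    (inv_le_one_of_one_le₀ (hD k).one_le)
  have hpow : ∀ k j, (2 : ℝ≥0)⁻¹ ^ (k + j) ≤ (2 : ℝ≥0)⁻¹ ^ j := fun k j =>
    pow_le_pow_of_le_one zero_le (inv_le_one_of_one_le₀ (by norm_num)) (by omega)
  have hap : ∀ j k B x, hh T D j k B x ≤ gg T D k B x + (2 : ℝ≥0)⁻¹ ^ j := by
    intro j k B x
    refine (hh_le_gg T D hD j k B x).trans ?_
    gcongr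
    calc cc D k * (2 : ℝ≥0)⁻¹ ^ (k + j) ≤ 1 * (2 : ℝ≥0)⁻¹ ^ j :=
          mul_le_mul' (hcc1 k) (hpow k j)
      _ = _ := one_mul _
  have hsupp : ∀ k, ∀ B ∈ (D k).β, ∀ x, gg T D k B x ≠ 0 → x ∈ B := by
    intro k B hB x hx
    rw [← bump_pos_iff ((hD k).isOpen B hB)]
    exact lt_of_lt_of_le (pos_iff_ne_zero.2 hx) (gg_le T D k 0 B x)
  refine ⟨D, gg T D, fun k => (hD k).npos, fun k => (hD k).one_le, fun k => (hD k).count,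
    ?_, hsupp, fun k B x => (gg_le T D k 0 B x).trans (bump_le_one _ _), ?_, ?_⟩
  · intro k B
    refine continuous_of_uniform_approx_of_continuous fun u hu => ?_
    obtain ⟨ε, hε, hu'⟩ := Metric.mem_uniformity_dist.1 hu
    have : ∀ᶠ j in atTop, (2 : ℝ≥0)⁻¹ ^ j < ε.toNNReal :=
      hlim.eventually_lt_const (Real.toNNReal_pos.2 hε)
    obtain ⟨j, hj⟩ := this.exists
    refine ⟨hh T D j k B, hh_cont T D j k B, fun y => hu' ?_⟩
    rw [NNReal.dist_eq, abs_lt]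
    have h1 := gg_le T D k j B y
    have h2 := hap j k B y
    rw [← NNReal.coe_le_coe] at h1 h2
    rw [← NNReal.coe_lt_coe] at hj
    rw [Real.coe_toNNReal _ hε.le] at hj
    push_cast at h1 h2 hj
    constructor <;> linarith
  · intro k B x y e h
    have h1 : ∀ j j', gg T D k B x ≤ hh T D (j' + 1) k B y +
        (D (k + 1)).Λ * (e + (2 : ℝ≥0)⁻¹ ^ j) := by
      intro j j'
      refine (gg_le T D k (j + 1) B x).trans ?_
      refine Psi_le T fun C hC i hi => ?_
      calc hh T D j (k + 1) C (orb T (-(i : ℕ)) x)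
          ≤ gg T D (k + 1) C (orb T (-(i : ℕ)) x) + (2 : ℝ≥0)⁻¹ ^ j := hap _ _ _ _
        _ ≤ gg T D (k + 1) C (orb T (-(i : ℕ)) y) + e + (2 : ℝ≥0)⁻¹ ^ j := by
          gcongr; exact h C hC i hi
        _ ≤ hh T D j' (k + 1) C (orb T (-(i : ℕ)) y) + (e + (2 : ℝ≥0)⁻¹ ^ j) := by
          rw [← add_assoc]; gcongr; exact gg_le T D _ _ _ _
    have h2 : ∀ j', gg T D k B x ≤ hh T D (j' + 1) k B y + (D (k + 1)).Λ * e := by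
      intro j'
      have ht : Tendsto (fun j : ℕ => hh T D (j' + 1) k B y +
          (D (k + 1)).Λ * (e + (2 : ℝ≥0)⁻¹ ^ j)) atTop
          (𝓝 (hh T D (j' + 1) k B y + (D (k + 1)).Λ * (e + 0))) :=
        ((hlim.const_add e).const_mul _).const_add _
      rw [add_zero] at ht
      exact ge_of_tendsto' ht fun j => h1 j j'
    rw [← tsub_le_iff_right]
    refine le_ciInf fun j => ?_
    rw [tsub_le_iff_right]
    refine (h2 j).trans ?_
    gcongr
    exact hh_anti T D (fun l => (hD l).isOpen) j k B y
  · intro k x y h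
    obtain ⟨i, hi, C, hC, h1, h2⟩ := (hD k).strong x
    have hΛ : 0 < (D k).Λ := lt_of_lt_of_le zero_lt_one (hD k).one_le
    have hx : gg T D k C (orb T (-(i : ℕ)) x) ≠ 0 := by
      intro h0
      have h3 := hh_le_gg T D hD 0 k C (orb T (-(i : ℕ)) x)
      rw [h0, zero_add] at h3
      have h4 : bump C (orb T (-(i : ℕ)) x) ≤ (D k).Λ⁻¹ := by
        refine le_trans h3 ?_
        calc cc D k * (2 : ℝ≥0)⁻¹ ^ (k + 0) ≤ (D k).Λ⁻¹ * 1 :=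
              mul_le_mul' (cc_le D (fun l => (hD l).one_le) k)
                (pow_le_one₀ zero_le (inv_le_one_of_one_le₀ (by norm_num)))
          _ = _ := mul_one _
      have h5 : (D k).Λ * bump C (orb T (-(i : ℕ)) x) ≤ 1 := by
        calc _ ≤ (D k).Λ * (D k).Λ⁻¹ := by gcongr
          _ = 1 := mul_inv_cancel₀ hΛ.ne'
      exact absurd (h1.trans h5) (by norm_num)
    have hy : gg T D k C (orb T (-(i : ℕ)) y) ≠ 0 := by rwa [← h C hC i hi]
    have h6 := h2 _ (hsupp k C hC _ hx) _ (hsupp k C hC _ hy)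
    rw [orb_orb_neg, orb_orb_neg] at h6
    have h7 : (2 : ℝ≥0)⁻¹ ^ k / ∏ i ∈ Finset.range k, (D i).Λ ≤ (2 : ℝ≥0)⁻¹ ^ k :=
      div_le_self zero_le (Finset.one_le_prod' fun i _ => (hD i).one_le)
    have h8 := h6.trans h7
    rw [← NNReal.coe_le_coe] at h8
    simpa using h8

end Psi



lemma sum_measure_partition {X : Type*} [MeasurableSpace X] (μ : Measure X)
    [IsProbabilityMeasure μ] {F : Finset (Set X)} (hF : IsFinPartition F) :
    ∑ A ∈ F, (μ A).toReal = 1 := by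
  rw [← ENNReal.toReal_sum (fun A _ => measure_ne_top μ A)]
  have h : μ (⋃ A ∈ F, A) = ∑ A ∈ F, μ A :=
    measure_biUnion_finset (f := fun A : Set X => A)
      (fun A hA B hB hAB => hF.2.1 A hA B hB hAB) (fun A hA => hF.1 A hA)
  rw [← h]
  have : (⋃ A ∈ F, A) = Set.univ := by
    rw [← hF.2.2, Set.sUnion_eq_biUnion]; rfl
  rw [this]; simp

lemma neg_mul_log_nonneg {p : ℝ} (h0 : 0 ≤ p) (h1 : p ≤ 1) : 0 ≤ -(p * Real.log p) := by
  have := Real.log_nonpos h0 h1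
  nlinarith

lemma toReal_prob_le_one {X : Type*} [MeasurableSpace X] (μ : Measure X)
    [IsProbabilityMeasure μ] (A : Set X) : (μ A).toReal ≤ 1 :=
  ENNReal.toReal_le_of_le_ofReal zero_le_one (by simpa using prob_le_one)

lemma entP_eq {X : Type*} [MeasurableSpace X] (μ : Measure X)
    [IsProbabilityMeasure μ] (F : Finset (Set X)) :
    entP μ F = ENNReal.ofReal (∑ A ∈ F, -((μ A).toReal * Real.log ((μ A).toReal))) := by
  unfold entP
  rw [ENNReal.ofReal_sum_of_nonneg]
  exact fun A _ => neg_mul_log_nonneg ENNReal.toReal_nonneg (toReal_prob_le_one μ A)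

lemma entP_le {X : Type*} [MeasurableSpace X] (μ : Measure X)
    [IsProbabilityMeasure μ] {F : Finset (Set X)} (hF : IsFinPartition F) (K : ℕ)
    (hK : open Classical in (F.filter (fun A => A.Nonempty)).card ≤ K) :
    entP μ F ≤ ENNReal.ofReal (Real.log K) := by
  classical
  rw [entP_eq]
  apply ENNReal.ofReal_le_ofReal
  have h1 := sum_measure_partition μ hF
  have e1 : ∀ f : Set X → ℝ, f ∅ = 0 → ∑ A ∈ F, f A = ∑ A ∈ F.filter (fun A => A.Nonempty), f A := by
    intro f hf
    rw [Finset.sum_filter]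
    refine Finset.sum_congr rfl fun A _ => ?_
    split_ifs with h
    · rfl
    · rw [Set.not_nonempty_iff_eq_empty.1 h, hf]
  rw [e1 (fun A => (μ A).toReal) (by simp)] at h1
  rw [e1 (fun A => -((μ A).toReal * Real.log ((μ A).toReal))) (by simp)]
  set G := F.filter (fun A => A.Nonempty)
  have hKpos : 0 < K := by
    rcases Nat.eq_zero_or_pos K with h | h
    · exfalso
      have : G = ∅ := Finset.card_eq_zero.1 (by omega)
      rw [this] at h1; simp at h1
    · exact h
  have hKr : (0 : ℝ) < K := by exact_mod_cast hKpos
  have h2 : ∀ A ∈ G, -((μ A).toReal * Real.log ((μ A).toReal)) ≤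
      (μ A).toReal * Real.log K + 1 / K - (μ A).toReal := by
    intro A _
    rcases eq_or_lt_of_le (ENNReal.toReal_nonneg (a := μ A)) with h | h
    · rw [← h]; simp
    · set p := (μ A).toReal
      have h3 := Real.log_le_sub_one_of_pos (x := 1 / (p * K)) (by positivity)
      rw [one_div, Real.log_inv, Real.log_mul h.ne' hKr.ne'] at h3
      have h4 := mul_le_mul_of_nonneg_left h3 h.le
      have h5 : p * ((p * K)⁻¹ - 1) = 1 / K - p := by field_simp
      rw [h5] at h4
      linarith
  refine (Finset.sum_le_sum h2).trans ?_
  rw [Finset.sum_sub_distrib, Finset.sum_add_distrib, ← Finset.sum_mul, h1, Finset.sum_const,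
    nsmul_eq_mul]
  have h6 : (G.card : ℝ) * (1 / K) ≤ 1 := by
    rw [mul_one_div, div_le_one hKr]; exact_mod_cast hK
  linarith

lemma isFinPartition_joinN {X : Type*} [MeasurableSpace X] {T : X → X} (hT : Measurable T)
    {P : Finset (Set X)} (hP : IsFinPartition P) (n : ℕ) : IsFinPartition (joinN T P n) := by
  refine ⟨?_, ?_, ?_⟩
  · intro A hA
    obtain ⟨f, hf, rfl⟩ := mem_joinN.1 hA
    exact MeasurableSet.iInter fun j => (hT.iterate _) (hP.1 _ (hf j))
  · intro A hA B hB hAB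
    obtain ⟨f, hf, rfl⟩ := mem_joinN.1 hA
    obtain ⟨g, hg, rfl⟩ := mem_joinN.1 hB
    rw [Set.disjoint_left]
    intro x hx hy
    apply hAB
    have : f = g := by
      funext j
      by_contra hne
      exact Set.disjoint_left.1 (hP.2.1 _ (hf j) _ (hg j) hne) (Set.mem_iInter.1 hx j)
        (Set.mem_iInter.1 hy j)
    rw [this]
  · rw [Set.eq_univ_iff_forall]
    intro x
    have h : ∀ y, ∃ A ∈ P, y ∈ A := by
      intro y
      have : y ∈ ⋃₀ (P : Set (Set X)) := by rw [hP.2.2]; trivial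
      obtain ⟨A, hA, hy⟩ := this
      exact ⟨A, hA, hy⟩
    choose g hg1 hg2 using h
    refine ⟨_, mem_joinN.2 ⟨fun j => g (T^[(j : ℕ)] x), fun j => hg1 _, rfl⟩, ?_⟩
    simp only [Set.mem_iInter, Set.mem_preimage]
    exact fun j => hg2 _

/-- partition into the fibres of a label map -/
def labelPart {X ι : Type*} [Fintype ι] (c : X → ι) : Finset (Set X) :=
  open Classical in Finset.univ.image (fun a => c ⁻¹' {a})

lemma mem_labelPart {X ι : Type*} [Fintype ι] {c : X → ι} {A : Set X} :
    A ∈ labelPart c ↔ ∃ a, A = c ⁻¹' {a} := by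
  classical
  unfold labelPart
  simp [eq_comm]

lemma isFinPartition_labelPart {X ι : Type*} [Fintype ι] [MeasurableSpace X] {c : X → ι}
    (hc : ∀ a, MeasurableSet (c ⁻¹' {a})) : IsFinPartition (labelPart c) := by
  refine ⟨?_, ?_, ?_⟩
  · intro A hA
    obtain ⟨a, rfl⟩ := mem_labelPart.1 hA
    exact hc a
  · intro A hA B hB hAB
    obtain ⟨a, rfl⟩ := mem_labelPart.1 hA
    obtain ⟨b, rfl⟩ := mem_labelPart.1 hB
    rw [Set.disjoint_left]
    intro x hx hy
    simp only [Set.mem_preimage, Set.mem_singleton_iff] at hx hy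
    exact hAB (by rw [← hx, ← hy])
  · rw [Set.eq_univ_iff_forall]
    intro x
    exact ⟨c ⁻¹' {c x}, Finset.mem_coe.2 (mem_labelPart.2 ⟨_, rfl⟩), rfl⟩

lemma card_joinN_label {X ι ν : Type*} [Fintype ι] (T : X → X) (c : X → ι) (n : ℕ)
    (name : X → ν) (S : Finset ν) (hS : ∀ x, name x ∈ S)
    (hn : ∀ x y, name x = name y → ∀ j < n, c (T^[j] x) = c (T^[j] y)) :
    open Classical in
    ((joinN T (labelPart c) n).filter (fun A => A.Nonempty)).card ≤ S.card := by
  classical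
  have hcell : ∀ A ∈ joinN T (labelPart c) n, ∀ x ∈ A,
      A = {y | ∀ j < n, c (T^[j] y) = c (T^[j] x)} := by
    intro A hA x hx
    obtain ⟨f, hf, rfl⟩ := mem_joinN.1 hA
    choose a ha using fun j => mem_labelPart.1 (hf j)
    ext y
    have hx' : ∀ j : Fin n, c (T^[(j : ℕ)] x) = a j := by
      intro j
      have := Set.mem_iInter.1 hx j
      rw [ha j] at this
      exact this
    simp only [Set.mem_iInter, ha, Set.mem_preimage, Set.mem_singleton_iff, Set.mem_ofPred_eq]
    constructor
    · intro h j hj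
      rw [h ⟨j, hj⟩, ← hx' ⟨j, hj⟩]
    · intro h j
      rw [h j j.2, hx' j]
  refine Finset.card_le_card_of_forall_subsingleton (fun A b => ∃ x ∈ A, name x = b) ?_ ?_
  · intro A hA
    obtain ⟨x, hx⟩ := (Finset.mem_filter.1 hA).2
    exact ⟨name x, hS x, x, hx, rfl⟩
  · rintro b _ A ⟨hA, x, hx, hxb⟩ B ⟨hB, y, hy, hyb⟩
    rw [hcell A (Finset.mem_filter.1 hA).1 x hx, hcell B (Finset.mem_filter.1 hB).1 y hy]
    have := hn x y (hxb.trans hyb.symm)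
    ext z
    simp only [Set.mem_ofPred_eq]
    exact forall₂_congr fun j hj => by rw [this j hj]

lemma card_small_support {κ : Type*} [Fintype κ] (Q K : ℕ) (hQ : 1 ≤ Q) :
    open Classical in
    ((Finset.univ : Finset (κ → Fin (Q + 1))).filter
      (fun A => (Finset.univ.filter (fun i => A i ≠ 0)).card ≤ K)).card ≤
        2 ^ Fintype.card κ * Q ^ K := by
  classical
  have h1 : (Finset.univ : Finset (κ → Fin (Q + 1))).filter
      (fun A => (Finset.univ.filter (fun i => A i ≠ 0)).card ≤ K) ⊆
      ((Finset.univ : Finset κ).powerset.filter (fun s => s.card ≤ K)).biUnion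
        (fun s => Fintype.piFinset (fun i => if i ∈ s then Finset.univ.erase (0 : Fin (Q + 1))
          else {0})) := by
    intro A hA
    have hA2 := (Finset.mem_filter.1 hA).2
    refine Finset.mem_biUnion.2 ⟨Finset.univ.filter (fun i => A i ≠ 0), ?_, ?_⟩
    · simpa using hA2
    · rw [Fintype.mem_piFinset]
      intro i
      by_cases h : A i = 0 <;> simp [h]
  refine (Finset.card_le_card h1).trans ((Finset.card_biUnion_le_card_mul _ _ (Q ^ K) ?_).trans ?_)
  · intro s hs
    rw [Fintype.card_piFinset]
    have h2 : ∀ i, (if i ∈ s then Finset.univ.erase (0 : Fin (Q + 1)) else {0}).card =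
        if i ∈ s then Q else 1 := by
      intro i; split_ifs <;> simp
    simp only [h2]
    rw [Finset.prod_ite_mem, Finset.univ_inter, Finset.prod_const]
    exact Nat.pow_le_pow_right hQ (Finset.mem_filter.1 hs).2
  · refine Nat.mul_le_mul_right _ ((Finset.card_filter_le _ _).trans ?_)
    rw [Finset.card_powerset, Finset.card_univ]

lemma exists_small_support (κ : Type*) [Fintype κ] (Q K : ℕ) (hQ : 1 ≤ Q) :
    ∃ S : Finset (κ → Fin (Q + 1)), S.card ≤ 2 ^ Fintype.card κ * Q ^ K ∧
      ∀ A, (∃ s : Finset κ, s.card ≤ K ∧ ∀ i, A i ≠ 0 → i ∈ s) → A ∈ S := by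
  classical
  refine ⟨_, card_small_support Q K hQ, fun A ⟨s, hs, hA⟩ => ?_⟩
  rw [Finset.mem_filter]
  refine ⟨Finset.mem_univ _, (Finset.card_le_card ?_).trans hs⟩
  intro i hi
  exact hA i (Finset.mem_filter.1 hi).2

lemma cnt_shift (p : ℤ → Prop) (s t a : ℤ) :
    cnt p (s + a) (t + a) = cnt (fun j => p (j + a)) s t := by
  classical
  unfold cnt
  symm
  refine Finset.card_bij (fun j _ => j + a) ?_ ?_ ?_
  · intro j hj
    simp only [Finset.mem_filter, Finset.mem_Ico] at hj ⊢
    exact ⟨⟨by omega, by omega⟩, hj.2⟩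
  · intro i _ j _ h; omega
  · intro j hj
    simp only [Finset.mem_filter, Finset.mem_Ico] at hj
    refine ⟨j - a, ?_, by omega⟩
    simp only [Finset.mem_filter, Finset.mem_Ico, sub_add_cancel]
    exact ⟨⟨by omega, by omega⟩, hj.2⟩

lemma sum_cnt_windows {X : Type*} [TopologicalSpace X] (T : X ≃ₜ X) (β : Finset (Set X)) (n : ℕ)
    (s : ℝ) (h : ∀ x, ((∑ B ∈ β, cnt (fun j => orb T j x ∈ B) 0 n : ℕ) : ℝ) ≤ s * n) (r : ℕ) :
    ∀ x, ((∑ B ∈ β, cnt (fun j => orb T j x ∈ B) 0 (r * n : ℕ) : ℕ) : ℝ) ≤ s * (r * n : ℕ) := by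
  induction r with
  | zero => intro x; simp [cnt]
  | succ r ih =>
    intro x
    have e1 : (((r + 1) * n : ℕ) : ℤ) = (r * n : ℕ) + (n : ℤ) := by push_cast; ring
    have h1 : ∀ B : Set X, cnt (fun j => orb T j x ∈ B) 0 ((r + 1) * n : ℕ) =
        cnt (fun j => orb T j x ∈ B) 0 n +
          cnt (fun j => orb T j (orb T n x) ∈ B) 0 (r * n : ℕ) := by
      intro B
      rw [cnt_add _ (t := (n : ℤ)) (by omega) (by rw [e1]; omega)]
      congr 1
      rw [e1]
      have := cnt_shift (fun j => orb T j x ∈ B) 0 (r * n : ℕ) n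
      rw [zero_add] at this
      rw [this]
      simp only [orb_add]
    simp only [h1]
    rw [Finset.sum_add_distrib]
    have h2 := h x
    have h3 := ih (orb T n x)
    push_cast at h2 h3 ⊢
    linarith

lemma entRate_label_le {X : Type*} [TopologicalSpace X] [MeasurableSpace X] [BorelSpace X]
    (T : X ≃ₜ X) (μ : Measure X) [IsProbabilityMeasure μ] (β : Finset (Set X)) (n₀ I Q : ℕ)
    (hn₀ : 0 < n₀) (hQ : 1 ≤ Q) (s : ℝ)
    (h : ∀ x, ((∑ B ∈ β, cnt (fun j => orb T j x ∈ B) 0 n₀ : ℕ) : ℝ) ≤ s * n₀)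
    (q : Set X → X → Fin (Q + 1)) (hq : ∀ B, Measurable (q B))
    (hsupp : ∀ B ∈ β, ∀ x, q B x ≠ 0 → x ∈ B) :
    IsFinPartition (labelPart (fun x (p : β × Fin (I + 1)) => q p.1 (orb T (-(p.2 : ℕ)) x))) ∧
    entRate T μ (labelPart (fun x (p : β × Fin (I + 1)) => q p.1 (orb T (-(p.2 : ℕ)) x))) ≤
      ENNReal.ofReal (β.card * Real.log 2 + s * Real.log Q) := by
  classical
  set c := (fun x (p : β × Fin (I + 1)) => q p.1 (orb T (-(p.2 : ℕ)) x)) with hc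
  have hcm : Measurable c := by
    refine measurable_pi_lambda _ fun p => ?_
    exact (hq _).comp (continuous_orb T _).measurable
  have hP : IsFinPartition (labelPart c) :=
    isFinPartition_labelPart fun a => hcm (MeasurableSet.singleton a)
  refine ⟨hP, ?_⟩
  have hlogQ : 0 ≤ Real.log Q := Real.log_nonneg (by exact_mod_cast hQ)
  have hlog2 : 0 ≤ Real.log 2 := Real.log_nonneg (by norm_num)
  have key : ∀ r : ℕ, entP μ (joinN T (labelPart c) (r * n₀)) ≤ ENNReal.ofReal
      ((β.card * Real.log 2 + s * Real.log Q) * (r * n₀ : ℕ) +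
        (β.card * I * (Real.log 2 + Real.log Q))) := by
    intro r
    set n := r * n₀ with hn
    let name : X → (β × Fin (I + n)) → Fin (Q + 1) := fun x p =>
      q p.1 (orb T ((p.2 : ℕ) - (I : ℤ)) x)
    let cn : X → ℕ := fun x => ∑ B ∈ β, cnt (fun j => orb T j x ∈ B) (-(I : ℤ)) n
    have hcn : ∀ x, (cn x : ℝ) ≤ β.card * I + s * n := by
      intro x
      have h1 : cn x ≤ β.card * I + ∑ B ∈ β, cnt (fun j => orb T j x ∈ B) 0 n := by
        simp only [cn]
        rw [← smul_eq_mul, ← Finset.sum_const, ← Finset.sum_add_distrib]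
        refine Finset.sum_le_sum fun B _ => ?_
        rw [cnt_add _ (t := 0) (by omega) (by omega)]
        gcongr
        unfold cnt
        refine (Finset.card_filter_le _ _).trans ?_
        simp
      have h2 := sum_cnt_windows T β n₀ s h r x
      have h3 : (cn x : ℝ) ≤ β.card * I + (∑ B ∈ β, cnt (fun j => orb T j x ∈ B) 0 n : ℕ) := by
        exact_mod_cast h1
      linarith
    let K : ℕ := ⌊(β.card * I + s * n : ℝ)⌋₊
    obtain ⟨S, hScard, hSmem⟩ := exists_small_support (β × Fin (I + n)) Q K hQ
    have hname : ∀ x, name x ∈ S := by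
      intro x
      refine hSmem _ ⟨Finset.univ.filter (fun i => name x i ≠ 0),
        le_trans ?_ (Nat.le_floor (hcn x)), fun i hi => by simpa using hi⟩
      have h1 : (Finset.univ.filter (fun i => name x i ≠ 0)).card ≤
          (β.sigma (fun B => (Finset.Ico (-(I : ℤ)) n).filter
            (fun j => orb T j x ∈ B))).card := by
        refine Finset.card_le_card_of_injOn
          (fun p => ⟨(p.1 : Set X), ((p.2 : ℕ) : ℤ) - (I : ℤ)⟩) ?_ ?_
        · intro p hp
          have hp' := (Finset.mem_filter.1 hp).2
          have := p.2.2
          simp only [Finset.coe_sigma, Set.mem_sigma_iff, Finset.mem_coe, Finset.mem_filter,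
            Finset.mem_Ico]
          exact ⟨p.1.2, ⟨by omega, by omega⟩, hsupp _ p.1.2 _ hp'⟩
        · rintro ⟨B, i⟩ _ ⟨C, j⟩ _ hpq
          simp only [Sigma.mk.injEq, heq_eq_eq] at hpq
          exact Prod.ext (Subtype.ext hpq.1) (Fin.ext (by
            have h2 : ((i : ℕ) : ℤ) - (I : ℤ) = ((j : ℕ) : ℤ) - (I : ℤ) := hpq.2
            change (i : ℕ) = (j : ℕ)
            omega))
      rw [Finset.card_sigma] at h1
      exact h1
    have hn2 : ∀ x y, name x = name y → ∀ j < n, c (T^[j] x) = c (T^[j] y) := by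
      intro x y hxy j hj
      funext p
      have hp := p.2.2
      have := congrFun hxy (p.1, ⟨j + I - p.2, by omega⟩)
      simp only [name] at this
      simp only [hc]
      rw [← orb_natCast, ← orb_natCast, ← orb_add, ← orb_add]
      have e : (((j + I - (p.2 : ℕ) : ℕ) : ℤ) - (I : ℤ)) = -((p.2 : ℕ) : ℤ) + (j : ℤ) := by
        omega
      rw [e] at this
      exact this
    have h1 := (card_joinN_label T c n name S hname hn2).trans hScard
    refine (entP_le μ (isFinPartition_joinN T.continuous.measurable hP n) _ h1).trans ?_
    apply ENNReal.ofReal_le_ofReal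
    have hQ0 : (0 : ℝ) < Q := by exact_mod_cast hQ
    push_cast
    rw [Real.log_mul (by positivity) (by positivity), Real.log_pow, Real.log_pow]
    have hcard : Fintype.card (β × Fin (I + n)) = β.card * (I + n) := by simp
    rw [hcard]
    have hx : Nonempty X := by
      by_contra hne
      rw [not_nonempty_iff] at hne
      have := measure_univ (μ := μ)
      rw [Set.univ_eq_empty_iff.2 hne, measure_empty] at this
      exact zero_ne_one this
    have hK : (K : ℝ) ≤ β.card * I + s * n :=
      Nat.floor_le ((Nat.cast_nonneg _).trans (hcn hx.some))
    have := mul_le_mul_of_nonneg_right hK hlogQ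
    push_cast
    linarith
  -- pass to the liminf
  unfold entRate
  set V := (β.card * Real.log 2 + s * Real.log Q)
  set Cst := (β.card * I * (Real.log 2 + Real.log Q)) with hCst
  have hC0 : 0 ≤ Cst := by positivity
  refine ENNReal.le_of_forall_pos_le_add fun δ hδ _ => ?_
  refine Filter.liminf_le_of_frequently_le' ?_
  rw [Filter.frequently_atTop]
  intro a
  obtain ⟨r, hr⟩ := exists_nat_gt (Cst / δ)
  refine ⟨(max a (r + 1)) * n₀, (le_max_left _ _).trans (Nat.le_mul_of_pos_right _ hn₀), ?_⟩
  set m := max a (r + 1) * n₀ with hm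
  have hmr : r + 1 ≤ m := (le_max_right _ _).trans (Nat.le_mul_of_pos_right _ hn₀)
  have hm0 : (0 : ℝ) < m := by
    have : 0 < m := by omega
    exact_mod_cast this
  have hm1 : Cst ≤ δ * m := by
    have h3 : (r : ℝ) ≤ m := by
      have : r ≤ m := by omega
      exact_mod_cast this
    have h4 : Cst / δ ≤ m := by linarith
    rwa [div_le_iff₀' (by exact_mod_cast hδ)] at h4
  refine (ENNReal.div_le_div_right (key (max a (r + 1))) _).trans ?_
  rw [ENNReal.div_le_iff (by exact_mod_cast hm0.ne') (by simp)]
  rw [← hm]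
  have e1 : (m : ℝ≥0∞) = ENNReal.ofReal m := by simp
  have e2 : (δ : ℝ≥0∞) = ENNReal.ofReal δ := by simp
  rw [e1, e2]
  calc ENNReal.ofReal (V * m + Cst) ≤ ENNReal.ofReal ((V + δ) * m) :=
        ENNReal.ofReal_le_ofReal (by linarith)
    _ = ENNReal.ofReal (V + δ) * ENNReal.ofReal m := ENNReal.ofReal_mul' hm0.le
    _ ≤ (ENNReal.ofReal V + ENNReal.ofReal δ) * ENNReal.ofReal m := by
      gcongr; exact ENNReal.ofReal_add_le



lemma top_eq_of_le {X : Type*} {t t' : TopologicalSpace X} (hc : @CompactSpace X t)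
    (h2 : @T2Space X t') (h : t ≤ t') : t' = t := by
  apply le_antisymm _ h
  have hcont : @Continuous X X t t' id := (@continuous_id_iff_le X t t').2 h
  have hclosed : @IsClosedMap X X t t' id := by
    exact @Continuous.isClosedMap X X t t' hc h2 id hcont
  intro U hU
  rw [← @isClosed_compl_iff X t' U]
  have := hclosed Uᶜ ((@isClosed_compl_iff X t U).2 hU)
  simpa using this

section sys
variable {X : Type*} [TopologicalSpace X] (T : X ≃ₜ X) (D : ℕ → Lev X)
  (g : ℕ → Set X → X → ℝ≥0)

/-- hypothesis: values of level `l` at `x` are bounded by those at `y` up to `e` -/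
def Hl (l : ℕ) (J : ℕ) (x y : X) (e : ℝ≥0) : Prop :=
  ∀ C ∈ (D l).β, ∀ i ≤ J, g l C (orb T (-(i : ℕ)) x) ≤ g l C (orb T (-(i : ℕ)) y) + e

lemma lip_levels (hΛ : ∀ k, 1 ≤ (D k).Λ)
    (hlip : ∀ k B x y e, (∀ C ∈ (D (k + 1)).β, ∀ i ≤ (D (k + 1)).N,
        g (k + 1) C (orb T (-(i : ℕ)) x) ≤ g (k + 1) C (orb T (-(i : ℕ)) y) + e) →
        g k B x ≤ g k B y + (D (k + 1)).Λ * e) (l : ℕ) :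
    ∀ x y e, Hl T D g l (∑ i ∈ Finset.range (l + 1), (D i).N) x y e → ∀ k ≤ l,
      Hl T D g k (D k).N x y ((∏ i ∈ Finset.range (l + 1), (D i).Λ) * e) := by
  have self : ∀ l x y e, Hl T D g l (∑ i ∈ Finset.range (l + 1), (D i).N) x y e →
      Hl T D g l (D l).N x y ((∏ i ∈ Finset.range (l + 1), (D i).Λ) * e) := by
    intro l x y e h C hC i hi
    refine (h C hC i (hi.trans ?_)).trans ?_
    · rw [Finset.sum_range_succ]; exact Nat.le_add_left _ _
    · gcongr
      exact le_mul_of_one_le_left zero_le (Finset.one_le_prod' fun i _ => hΛ i)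
  induction l with
  | zero =>
    intro x y e h k hk
    obtain rfl : k = 0 := by omega
    exact self 0 x y e h
  | succ l ih =>
    intro x y e h k hk
    rcases Nat.lt_or_ge l k with h1 | h1
    · obtain rfl : k = l + 1 := by omega
      exact self _ x y e h
    · have h2 : Hl T D g l (∑ i ∈ Finset.range (l + 1), (D i).N) x y ((D (l + 1)).Λ * e) := by
        intro C hC i hi
        refine hlip l C _ _ e fun C' hC' i' hi' => ?_
        have := h C' hC' (i' + i) (by rw [Finset.sum_range_succ _ (l + 1)]; omega)
        push_cast at this
        rw [neg_add, orb_add, orb_add] at this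
        exact this
      have h3 := ih x y _ h2 k h1
      rwa [← mul_assoc, ← Finset.prod_range_succ] at h3

/-- level pseudo-distance -/
def EE (k : ℕ) (x y : X) : ℝ≥0 :=
  ((D k).β ×ˢ Finset.range ((D k).N + 1)).sup
    (fun p => nndist (g k p.1 (orb T (-(p.2 : ℕ)) x)) (g k p.1 (orb T (-(p.2 : ℕ)) y)))

lemma EE_le_iff {k : ℕ} {x y : X} {e : ℝ≥0} : EE T D g k x y ≤ e ↔
    ∀ B ∈ (D k).β, ∀ i ≤ (D k).N,
      nndist (g k B (orb T (-(i : ℕ)) x)) (g k B (orb T (-(i : ℕ)) y)) ≤ e := by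
  unfold EE
  rw [Finset.sup_le_iff]
  constructor
  · intro h B hB i hi
    exact h (B, i) (Finset.mem_product.2 ⟨hB, Finset.mem_range.2 (by omega)⟩)
  · intro h p hp
    have := Finset.mem_product.1 hp
    exact h _ this.1 _ (by have := Finset.mem_range.1 this.2; omega)

lemma nndist_le_of {a b e : ℝ≥0} (h1 : a ≤ b + e) (h2 : b ≤ a + e) : nndist a b ≤ e := by
  rw [← NNReal.coe_le_coe, coe_nndist, NNReal.dist_eq, abs_le]
  rw [← NNReal.coe_le_coe] at h1 h2
  push_cast at h1 h2
  constructor <;> linarith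

lemma EE_self (k : ℕ) (x : X) : EE T D g k x x = 0 := by
  rw [← le_zero_iff, EE_le_iff]; simp

lemma EE_comm (k : ℕ) (x y : X) : EE T D g k x y = EE T D g k y x := by
  unfold EE; simp only [nndist_comm]

lemma EE_tri (k : ℕ) (x y z : X) : EE T D g k x z ≤ EE T D g k x y + EE T D g k y z := by
  rw [EE_le_iff]
  intro B hB i hi
  refine (nndist_triangle _ (g k B (orb T (-(i : ℕ)) y)) _).trans (add_le_add ?_ ?_)
  · exact (EE_le_iff T D g).1 le_rfl B hB i hi
  · exact (EE_le_iff T D g).1 le_rfl B hB i hi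

lemma EE_le_one (hg : ∀ k B x, g k B x ≤ 1) (k : ℕ) (x y : X) : EE T D g k x y ≤ 1 := by
  rw [EE_le_iff]
  intro B _ i _
  exact nndist_le_of ((hg _ _ _).trans le_add_self) ((hg _ _ _).trans le_add_self)

lemma EE_cont (hg : ∀ k B, Continuous (g k B)) (k : ℕ) (x : X) :
    Continuous fun y => EE T D g k y x := by
  unfold EE
  refine Continuous.finset_sup_apply fun p _ => ?_
  exact (((hg _ _).comp (continuous_orb T _)).nndist continuous_const)

end sys

section metric
variable {X : Type*} [TopologicalSpace X]

/-- supremum metric -/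
def dd (c : ℕ → ℝ≥0) (E : ℕ → X → X → ℝ≥0) (x y : X) : ℝ≥0 := ⨆ k, c k * E k x y

lemma exists_metric [CompactSpace X] (c : ℕ → ℝ≥0) (E : ℕ → X → X → ℝ≥0)
    (hc0 : ∀ k, 0 < c k) (hc : Antitone c) (hclim : Tendsto c atTop (𝓝 0))
    (hE1 : ∀ k x y, E k x y ≤ 1) (hEs : ∀ k x, E k x x = 0) (hEc : ∀ k x y, E k x y = E k y x)
    (hEt : ∀ k x y z, E k x z ≤ E k x y + E k y z)
    (hEcont : ∀ k x, Continuous fun y => E k y x)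
    (hsep : ∀ x y, (∀ k, E k x y = 0) → x = y) :
    ∃ m : MetricSpace X, m.toPseudoMetricSpace.toUniformSpace.toTopologicalSpace = ‹_› ∧
      ∀ x y, m.dist x y = dd c E x y := by
  have hb : ∀ x y, BddAbove (Set.range fun k => c k * E k x y) := by
    intro x y
    refine ⟨c 0, ?_⟩
    rintro _ ⟨k, rfl⟩
    calc c k * E k x y ≤ c 0 * 1 := mul_le_mul' (hc (Nat.zero_le k)) (hE1 k x y)
      _ = c 0 := mul_one _
  have hle : ∀ k x y, c k * E k x y ≤ dd c E x y := fun k x y => le_ciSup (hb x y) k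
  let m : MetricSpace X :=
    { dist := fun x y => dd c E x y
      dist_self := fun x => by simp [dd, hEs]
      dist_comm := fun x y => by simp only [dd, hEc]
      dist_triangle := fun x y z => by
        rw [← NNReal.coe_add, NNReal.coe_le_coe]
        refine ciSup_le fun k => ?_
        calc c k * E k x z ≤ c k * (E k x y + E k y z) := by gcongr; exact hEt k x y z
          _ = c k * E k x y + c k * E k y z := mul_add _ _ _
          _ ≤ _ := add_le_add (hle k x y) (hle k y z)
      eq_of_dist_eq_zero := fun {x y} h => by
        apply hsep
        intro k
        have h0 : dd c E x y = 0 := by exact_mod_cast h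
        have := hle k x y
        rw [h0, le_zero_iff, mul_eq_zero] at this
        exact this.resolve_left (hc0 k).ne' }
  refine ⟨m, ?_, fun x y => rfl⟩
  apply top_eq_of_le
  · assumption
  · infer_instance
  · apply le_of_nhds_le_nhds
    intro x
    rw [(@Metric.nhds_basis_ball X m.toPseudoMetricSpace x).ge_iff]
    intro ε hε
    obtain ⟨K, hK⟩ : ∃ K, c K < (ε / 2).toNNReal :=
      (hclim.eventually_lt_const (Real.toNNReal_pos.2 (half_pos hε))).exists
    have h1 : ∀ᶠ y in 𝓝 x, ∀ k ∈ Finset.range K, E k y x < (ε / 2).toNNReal / c 0 := by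
      rw [Filter.eventually_all_finset]
      intro k _
      have : Tendsto (fun y => E k y x) (𝓝 x) (𝓝 (E k x x)) := (hEcont k x).tendsto x
      rw [hEs] at this
      exact this.eventually_lt_const (div_pos (Real.toNNReal_pos.2 (half_pos hε)) (hc0 0))
    filter_upwards [h1] with y hy
    change ((dd c E y x : ℝ≥0) : ℝ) < ε
    have h2 : dd c E y x ≤ (ε / 2).toNNReal := by
      refine ciSup_le fun k => ?_
      rcases lt_or_ge k K with h | h
      · have := hy k (Finset.mem_range.2 h)
        calc c k * E k y x ≤ c 0 * ((ε / 2).toNNReal / c 0) :=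
              mul_le_mul' (hc (Nat.zero_le k)) this.le
          _ = _ := mul_div_cancel₀ _ (hc0 0).ne'
      · calc c k * E k y x ≤ c K * 1 := mul_le_mul' (hc h) (hE1 k y x)
          _ ≤ _ := by rw [mul_one]; exact hK.le
    have h3 : ((dd c E y x : ℝ≥0) : ℝ) ≤ ε / 2 := by
      rw [← Real.coe_toNNReal (ε / 2) (half_pos hε).le]; exact_mod_cast h2
    linarith [half_lt_self hε]

end metric


lemma infEnt_bound {X : Type*} [TopologicalSpace X] [MeasurableSpace X] [BorelSpace X]
    (T : X ≃ₜ X) (D : ℕ → Lev X) (g : ℕ → Set X → X → ℝ≥0)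
    (hn : ∀ k, 0 < (D k).n) (hΛ : ∀ k, 1 ≤ (D k).Λ) (s : ℕ → ℝ) (hs : ∀ k, 0 ≤ s k)
    (hcount : ∀ k x, ((∑ B ∈ (D k).β, cnt (fun j => orb T j x ∈ B) 0 (D k).n : ℕ) : ℝ) ≤
        s k * (D k).n)
    (hcont : ∀ k B, Continuous (g k B))
    (hsupp : ∀ k, ∀ B ∈ (D k).β, ∀ x, g k B x ≠ 0 → x ∈ B)
    (hg1 : ∀ k B x, g k B x ≤ 1)
    (hlip : ∀ k B x y e, (∀ C ∈ (D (k + 1)).β, ∀ i ≤ (D (k + 1)).N,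
        g (k + 1) C (orb T (-(i : ℕ)) x) ≤ g (k + 1) C (orb T (-(i : ℕ)) y) + e) →
        g k B x ≤ g k B y + (D (k + 1)).Λ * e)
    (c : ℕ → ℝ≥0) (hc1 : ∀ k, c k ≤ 1) (hc : Antitone c)
    (m : MetricSpace X) (hm : ∀ x y, m.dist x y = dd c (EE T D g) x y)
    (μ : Measure X) [IsProbabilityMeasure μ] (l : ℕ) (ε : ℝ) (hε : 0 < ε) (hε1 : ε ≤ 1)
    (hl : (c (l + 1) : ℝ) ≤ ε) :
    @infEntRate X m.toPseudoMetricSpace _ T μ ε ≤ ENNReal.ofReal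
      ((D l).β.card * Real.log 2 +
        s l * Real.log (2 * (∏ i ∈ Finset.range (l + 1), (D i).Λ : ℝ≥0) / ε)) := by
  set A : ℝ≥0 := ∏ i ∈ Finset.range (l + 1), (D i).Λ with hA
  have hA1 : 1 ≤ A := Finset.one_le_prod' fun i _ => hΛ i
  have hA1' : (1 : ℝ) ≤ A := by exact_mod_cast hA1
  set Q : ℕ := ⌈(A : ℝ) / ε⌉₊ with hQdef
  have hAε : 1 ≤ (A : ℝ) / ε := by rw [le_div_iff₀ hε]; linarith
  have hQ' : (A : ℝ) / ε ≤ Q := Nat.le_ceil _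
  have hQ1 : (1 : ℝ) ≤ Q := hAε.trans hQ'
  have hQ : 1 ≤ Q := by exact_mod_cast hQ1
  have hQ2 : (Q : ℝ) ≤ 2 * A / ε := by
    have := Nat.ceil_lt_add_one (a := (A : ℝ) / ε) (by linarith)
    rw [mul_div_assoc]; linarith
  let q : Set X → X → Fin (Q + 1) := fun B x => ⟨min ⌈Q * g l B x⌉₊ Q, by omega⟩
  have hq : ∀ B, Measurable (q B) := by
    intro B
    have h1 : Measurable fun x => ⌈Q * g l B x⌉₊ :=
      Nat.measurable_ceil.comp (continuous_const.mul (hcont l B)).measurable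
    exact (Measurable.of_discrete (f := fun n : ℕ => (⟨min n Q, by omega⟩ : Fin (Q + 1)))).comp h1
  have hqs : ∀ B ∈ (D l).β, ∀ x, q B x ≠ 0 → x ∈ B := by
    intro B hB x hx
    apply hsupp l B hB
    intro h0
    apply hx
    simp [q, h0]
  obtain ⟨hP, hE⟩ := entRate_label_le T μ (D l).β (D l).n (∑ i ∈ Finset.range (l + 1), (D i).N) Q
    (hn l) hQ (s l) (hcount l) q hq hqs
  have hqe : ∀ B x y, q B x = q B y → g l B x ≤ g l B y + 1 / Q := by
    intro B x y h
    have hle : ∀ z, ⌈Q * g l B z⌉₊ ≤ Q := by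
      intro z
      rw [Nat.ceil_le]
      calc (Q : ℝ≥0) * g l B z ≤ Q * 1 := by gcongr; exact hg1 l B z
        _ = Q := mul_one _
    have h1 : ⌈Q * g l B x⌉₊ = ⌈Q * g l B y⌉₊ := by
      have := congrArg Fin.val h
      simp only [q, min_eq_left (hle _)] at this
      exact this
    have h2 : (Q : ℝ≥0) * g l B x ≤ Q * g l B y + 1 := by
      refine (Nat.le_ceil _).trans ?_
      rw [h1]
      exact (Nat.ceil_lt_add_one zero_le).le
    have hQ0 : (0 : ℝ≥0) < Q := by exact_mod_cast hQ
    calc g l B x = (Q * g l B x) / Q := by field_simp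
      _ ≤ (Q * g l B y + 1) / Q := by gcongr
      _ = _ := by field_simp
  unfold infEntRate
  refine iInf_le_of_le _ (iInf_le_of_le hP (iInf_le_of_le ?_ (hE.trans ?_)))
  · intro S hS
    obtain ⟨a, rfl⟩ := mem_labelPart.1 hS
    refine @Metric.diam_le_of_forall_dist_le X _ m.toPseudoMetricSpace _ hε.le ?_
    intro x hx y hy
    change m.dist x y ≤ ε
    rw [hm, ← Real.coe_toNNReal ε hε.le, NNReal.coe_le_coe]
    have hxy : ∀ B ∈ (D l).β, ∀ i ≤ ∑ i ∈ Finset.range (l + 1), (D i).N,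
        q B (orb T (-(i : ℕ)) x) = q B (orb T (-(i : ℕ)) y) := by
      intro B hB i hi
      have h1 := congrFun ((hx : _ = a).trans (hy : _ = a).symm) (⟨B, hB⟩, ⟨i, by omega⟩)
      exact h1
    have h1 := lip_levels T D g hΛ hlip l x y (1 / Q)
      (fun C hC i hi => hqe C _ _ (hxy C hC i hi))
    have h2 := lip_levels T D g hΛ hlip l y x (1 / Q)
      (fun C hC i hi => hqe C _ _ (hxy C hC i hi).symm)
    refine ciSup_le fun k => ?_
    rcases Nat.lt_or_ge l k with hk | hk
    · calc c k * EE T D g k x y ≤ c (l + 1) * 1 :=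
            mul_le_mul' (hc hk) (EE_le_one T D g hg1 k x y)
        _ ≤ _ := by
            rw [mul_one, ← NNReal.coe_le_coe, Real.coe_toNNReal ε hε.le]; exact hl
    · calc c k * EE T D g k x y ≤ 1 * (A * (1 / Q)) := by
            refine mul_le_mul' (hc1 k) ?_
            rw [EE_le_iff]
            intro B hB i hi
            exact nndist_le_of (h1 k hk B hB i hi) (h2 k hk B hB i hi)
        _ ≤ _ := by
            rw [one_mul, ← NNReal.coe_le_coe, Real.coe_toNNReal ε hε.le]
            push_cast
            rw [mul_one_div, div_le_iff₀ (by linarith), ← div_le_iff₀' hε]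
            exact hQ'
  · apply ENNReal.ofReal_le_ofReal
    gcongr
    exact hs l

lemma upper_aux {X : Type*} [tX : TopologicalSpace X] [CompactSpace X] [MeasurableSpace X]
    [BorelSpace X]
    (T : X ≃ₜ X) (D : ℕ → Lev X) (g : ℕ → Set X → X → ℝ≥0) (md : ℝ) (hmd0 : 0 ≤ md)
    (hn : ∀ k, 0 < (D k).n) (hΛ : ∀ k, 1 ≤ (D k).Λ)
    (hcount : ∀ k x, ((∑ B ∈ (D k).β, cnt (fun j => orb T j x ∈ B) 0 (D k).n : ℕ) : ℝ) ≤
        (md + 1 / ((k : ℝ) + 1)) * (D k).n)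
    (hcont : ∀ k B, Continuous (g k B))
    (hsupp : ∀ k, ∀ B ∈ (D k).β, ∀ x, g k B x ≠ 0 → x ∈ B)
    (hg1 : ∀ k B x, g k B x ≤ 1)
    (hlip : ∀ k B x y e, (∀ C ∈ (D (k + 1)).β, ∀ i ≤ (D (k + 1)).N,
        g (k + 1) C (orb T (-(i : ℕ)) x) ≤ g (k + 1) C (orb T (-(i : ℕ)) y) + e) →
        g k B x ≤ g k B y + (D (k + 1)).Λ * e)
    (hsep : ∀ x y, (∀ k, ∀ B ∈ (D k).β, ∀ i ≤ (D k).N,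
        g k B (orb T (-(i : ℕ)) x) = g k B (orb T (-(i : ℕ)) y)) → x = y) :
    ∃ m : MetricSpace X, m.toPseudoMetricSpace.toUniformSpace.toTopologicalSpace = tX ∧
      ∀ μ : Measure X, IsProbabilityMeasure μ →
        Filter.limsup (fun ε : ℝ =>
            @infEntRate X m.toPseudoMetricSpace _ T μ ε / ENNReal.ofReal (Real.log (1 / ε)))
            (nhdsWithin 0 (Set.Ioi 0)) ≤ ENNReal.ofReal md := by
  let s : ℕ → ℝ := fun k => md + 1 / ((k : ℝ) + 1)
  have hs : ∀ k, 0 ≤ s k := fun k => by positivity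
  let A : ℕ → ℝ≥0 := fun l => ∏ i ∈ Finset.range (l + 1), (D i).Λ
  have hA : ∀ l, (1 : ℝ) ≤ A l := fun l => by
    exact_mod_cast (Finset.one_le_prod' fun i _ => hΛ i : 1 ≤ A l)
  let b : ℕ → ℝ := fun k => (D k).β.card * Real.log 2 + s k * Real.log (2 * A k)
  have hb : ∀ k, 0 ≤ b k := by
    intro k
    have h1 : 0 ≤ Real.log (2 * A k) := Real.log_nonneg (by linarith [hA k])
    have h2 : 0 ≤ Real.log 2 := Real.log_nonneg (by norm_num)
    have := hs k
    positivity
  let M : ℕ → ℝ := fun k => ∑ i ∈ Finset.range (k + 1), (((i : ℝ) + 1) * b i + 1)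
  have hMmono : Monotone M := by
    apply monotone_nat_of_le_succ
    intro k
    simp only [M]
    rw [Finset.sum_range_succ _ (k + 1)]
    have := hb (k + 1)
    have : 0 ≤ (((k + 1 : ℕ) : ℝ) + 1) * b (k + 1) := by positivity
    linarith
  have hMk : ∀ k : ℕ, (k : ℝ) ≤ M k := by
    intro k
    have : ∑ i ∈ Finset.range (k + 1), (1 : ℝ) ≤ M k := by
      refine Finset.sum_le_sum fun i _ => ?_
      have := hb i
      have : 0 ≤ ((i : ℝ) + 1) * b i := by positivity
      linarith
    simp at this
    linarith
  have hMb : ∀ k : ℕ, ((k : ℝ) + 1) * b k ≤ M k := by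
    intro k
    have : ((k : ℝ) + 1) * b k + 1 ≤ M k := by
      refine Finset.single_le_sum (f := fun i : ℕ => ((i : ℝ) + 1) * b i + 1) (fun i _ => ?_)
        (Finset.self_mem_range_succ k)
      have := hb i
      positivity
    linarith
  have hM0 : ∀ k, 0 ≤ M k := fun k => (Nat.cast_nonneg k).trans (hMk k)
  let c : ℕ → ℝ≥0 := fun k => (Real.exp (-M k)).toNNReal
  have hcc : ∀ k, (c k : ℝ) = Real.exp (-M k) := fun k => Real.coe_toNNReal _ (Real.exp_pos _).le
  have hc0 : ∀ k, 0 < c k := fun k => Real.toNNReal_pos.2 (Real.exp_pos _)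
  have hc1 : ∀ k, c k ≤ 1 := fun k => by
    rw [← NNReal.coe_le_coe, hcc]; simpa using hM0 k
  have hc : Antitone c := fun i j hij => by
    rw [← NNReal.coe_le_coe, hcc, hcc]
    exact Real.exp_le_exp.2 (neg_le_neg (hMmono hij))
  have hclim : Tendsto c atTop (𝓝 0) := by
    rw [← NNReal.tendsto_coe]
    simp only [hcc, NNReal.coe_zero]
    refine Real.tendsto_exp_neg_atTop_nhds_zero.comp ?_
    exact tendsto_atTop_mono hMk tendsto_natCast_atTop_atTop
  have IB := infEnt_bound T D g hn hΛ s hs hcount hcont hsupp hg1 hlip c hc1 hc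
  obtain ⟨m, hmt, hmd'⟩ := exists_metric c (EE T D g) hc0 hc hclim (EE_le_one T D g hg1)
    (EE_self T D g) (EE_comm T D g) (EE_tri T D g) (EE_cont T D g hcont) (by
      intro x y h
      refine hsep x y fun k B hB i hi => ?_
      have := (EE_le_iff T D g).1 (h k).le B hB i hi
      rw [le_zero_iff, nndist_eq_zero] at this
      exact this)
  refine ⟨m, hmt, fun μ hμ => ?_⟩
  apply ENNReal.le_of_forall_pos_le_add
  intro δ hδ _
  obtain ⟨L, hL⟩ := exists_nat_gt (2 / (δ : ℝ))
  have hL' : ∀ l : ℕ, L ≤ l → 2 / ((l : ℝ) + 1) ≤ δ := by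
    intro l hl
    have hδ' : (0 : ℝ) < δ := hδ
    have : (L : ℝ) ≤ l := by exact_mod_cast hl
    rw [div_le_iff₀ (by positivity)]
    rw [div_lt_iff₀ hδ'] at hL
    nlinarith
  refine Filter.limsup_le_of_le (by isBoundedDefault) ?_
  have hev : ∀ᶠ ε : ℝ in 𝓝[>] 0, ε < c L ∧ ε < 1 ∧ 0 < ε := by
    have h1 : ∀ᶠ ε : ℝ in 𝓝[>] 0, ε < c L :=
      (eventually_lt_nhds (by exact_mod_cast hc0 L)).filter_mono nhdsWithin_le_nhds
    have h2 : ∀ᶠ ε : ℝ in 𝓝[>] 0, ε < 1 :=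
      (eventually_lt_nhds one_pos).filter_mono nhdsWithin_le_nhds
    filter_upwards [h1, h2, self_mem_nhdsWithin] with ε a b c using ⟨a, b, c⟩
  filter_upwards [hev] with ε hε
  obtain ⟨hεc, hε1, hε0⟩ := hε
  have hex : ∃ l, (c (l + 1) : ℝ) ≤ ε := by
    have : ∀ᶠ k in atTop, c k < ε.toNNReal := hclim.eventually_lt_const (Real.toNNReal_pos.2 hε0)
    obtain ⟨K, hK⟩ := eventually_atTop.1 this
    refine ⟨K, ?_⟩
    have := (hK (K + 1) (by omega)).le
    rwa [← NNReal.coe_le_coe, Real.coe_toNNReal _ hε0.le] at this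
  classical
  set l := Nat.find hex with hldef
  have hl1 : (c (l + 1) : ℝ) ≤ ε := Nat.find_spec hex
  have hl2 : L ≤ l := by
    by_contra h
    have h1 : c L ≤ c (l + 1) := hc (by omega)
    have h2 : (c L : ℝ) ≤ c (l + 1) := by exact_mod_cast h1
    linarith
  have hl3 : ε < c l := by
    rcases Nat.eq_zero_or_pos l with h | h
    · have : L = l := by omega
      rwa [← this]
    · have := Nat.find_min hex (m := l - 1) (by omega)
      rw [Nat.sub_add_cancel h] at this
      exact not_le.1 this
  have hbound := IB m hmd' μ l ε hε0 hε1.le hl1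
  have hlogε : 0 < Real.log (1 / ε) := Real.log_pos (by rw [lt_div_iff₀ hε0]; linarith)
  have hMl : M l ≤ Real.log (1 / ε) := by
    rw [Real.le_log_iff_exp_le (by positivity), one_div]
    rw [hcc, Real.exp_neg] at hl3
    rw [le_inv_comm₀ (Real.exp_pos _) hε0]
    exact hl3.le
  rw [ENNReal.div_le_iff (by simpa using hlogε) ENNReal.ofReal_ne_top]
  refine hbound.trans ?_
  rw [show (δ : ℝ≥0∞) = ENNReal.ofReal δ from (ENNReal.ofReal_coe_nnreal).symm,
    ← ENNReal.ofReal_add hmd0 δ.coe_nonneg, ← ENNReal.ofReal_mul (by positivity)]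
  apply ENNReal.ofReal_le_ofReal
  have h1 : Real.log (2 * (A l) / ε) = Real.log (2 * A l) + Real.log (1 / ε) := by
    rw [← Real.log_mul (by linarith [hA l]) (by positivity)]
    congr 1; field_simp
  change (D l).β.card * Real.log 2 + s l * Real.log (2 * (A l) / ε) ≤ _
  rw [h1]
  have h2 : (D l).β.card * Real.log 2 + s l * (Real.log (2 * A l) + Real.log (1 / ε)) =
      b l + s l * Real.log (1 / ε) := by simp only [b]; ring
  rw [h2]
  have h3 : b l ≤ 1 / ((l : ℝ) + 1) * Real.log (1 / ε) := by
    have := (hMb l).trans hMl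
    rw [one_div_mul_eq_div, le_div_iff₀ (by positivity)]
    linarith
  have h4 := hL' l hl2
  have h5 : 2 / ((l : ℝ) + 1) * Real.log (1 / ε) ≤ δ * Real.log (1 / ε) := by gcongr
  have h6 : s l * Real.log (1 / ε) =
    md * Real.log (1 / ε) + 1 / ((l : ℝ) + 1) * Real.log (1 / ε) := by simp only [s]; ring
  have h7 : 2 / ((l : ℝ) + 1) * Real.log (1 / ε) =
    1 / ((l : ℝ) + 1) * Real.log (1 / ε) + 1 / ((l : ℝ) + 1) * Real.log (1 / ε) := by ring
  rw [add_mul]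
  linarith

lemma upper {X : Type*} [tX : TopologicalSpace X] [CompactSpace X]
    [TopologicalSpace.MetrizableSpace X] [MeasurableSpace X] [BorelSpace X]
    (T : X ≃ₜ X) (hmk : MarkerProperty T) (hmd : mdimTop T ≠ ⊤) :
    ∃ m : MetricSpace X, m.toPseudoMetricSpace.toUniformSpace.toTopologicalSpace = tX ∧
      ∀ μ : Measure X, IsProbabilityMeasure μ →
        Filter.limsup (fun ε : ℝ =>
            @infEntRate X m.toPseudoMetricSpace _ T μ ε / ENNReal.ofReal (Real.log (1 / ε)))
            (nhdsWithin 0 (Set.Ioi 0)) ≤ mdimTop T := by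
  have key : ∃ (D : ℕ → Lev X) (g : ℕ → Set X → X → ℝ≥0), (∀ k, 0 < (D k).n) ∧
      (∀ k, 1 ≤ (D k).Λ) ∧
      (∀ k x, ((∑ B ∈ (D k).β, cnt (fun j => orb T j x ∈ B) 0 (D k).n : ℕ) : ℝ) ≤
        ((mdimTop T).toReal + 1 / ((k : ℝ) + 1)) * (D k).n) ∧
      (∀ k B, Continuous (g k B)) ∧
      (∀ k, ∀ B ∈ (D k).β, ∀ x, g k B x ≠ 0 → x ∈ B) ∧
      (∀ k B x, g k B x ≤ 1) ∧
      (∀ k B x y e, (∀ C ∈ (D (k + 1)).β, ∀ i ≤ (D (k + 1)).N,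
        g (k + 1) C (orb T (-(i : ℕ)) x) ≤ g (k + 1) C (orb T (-(i : ℕ)) y) + e) →
        g k B x ≤ g k B y + (D (k + 1)).Λ * e) ∧
      (∀ x y, (∀ k, ∀ B ∈ (D k).β, ∀ i ≤ (D k).N,
        g k B (orb T (-(i : ℕ)) x) = g k B (orb T (-(i : ℕ)) y)) → x = y) := by
    letI := TopologicalSpace.metrizableSpaceMetric X
    obtain ⟨D, g, hn, hΛ, hcount, hcont, hsupp, hg1, hlip, hsep⟩ := exists_system T hmk hmd
    refine ⟨D, g, hn, hΛ, hcount, hcont, hsupp, hg1, hlip, ?_⟩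
    intro x y h
    have h2 : Tendsto (fun k : ℕ => (2 : ℝ)⁻¹ ^ k) atTop (𝓝 0) :=
      tendsto_pow_atTop_nhds_zero_of_lt_one (by norm_num) (by norm_num)
    exact dist_le_zero.1 (ge_of_tendsto' h2 fun k => hsep k x y (h k))
  obtain ⟨D, g, hn, hΛ, hcount, hcont, hsupp, hg1, hlip, hsep⟩ := key
  have := upper_aux T D g _ ENNReal.toReal_nonneg hn hΛ hcount hcont hsupp hg1 hlip hsep
  rwa [ENNReal.ofReal_toReal hmd] at this


/-- moving-grid cell -/
def gridCell {X ι : Type*} (f : ι → X → ℝ) (M : ℕ) (v : ι → ℤ) : Set X :=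
  {x | ∃ τ : ℝ, τ ∈ Set.Ioo (0 : ℝ) 1 ∧ ∀ i, M * ((v i : ℝ) - 1) + τ < f i x ∧ f i x < M * v i + τ}

lemma grid_key {X ι : Type*} (f : ι → X → ℝ) (M : ℕ) (hM : 1 ≤ M) (x : X) (v w : ι → ℤ)
    (a b : ℝ) (ha : a ∈ Set.Ioo (0 : ℝ) 1) (hb : b ∈ Set.Ioo (0 : ℝ) 1) (hab : a ≤ b)
    (hv : ∀ i, M * ((v i : ℝ) - 1) + a < f i x ∧ f i x < M * v i + a)
    (hw : ∀ i, M * ((w i : ℝ) - 1) + b < f i x ∧ f i x < M * w i + b) (hne : v ≠ w) :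
    ∃ i, (M : ℤ) ∣ ⌊f i x⌋ ∧ a < Int.fract (f i x) ∧ Int.fract (f i x) < b := by
  obtain ⟨i, hi⟩ := Function.ne_iff.1 hne
  have hM0 : (0 : ℝ) < M := by exact_mod_cast hM
  have h1 : w i ≤ v i := by
    have h : (M : ℝ) * ((w i : ℝ) - 1) < M * v i := by linarith [(hv i).2, (hw i).1]
    have h' : (w i : ℝ) - 1 < v i := lt_of_mul_lt_mul_left h hM0.le
    have : w i - 1 < v i := by exact_mod_cast h'
    omega
  have h2 : w i + 1 ≤ v i := by omega
  have h3 : (w i : ℝ) ≤ (v i : ℝ) - 1 := by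
    have : (w i : ℝ) + 1 ≤ v i := by exact_mod_cast h2
    linarith
  have h4 : (M : ℝ) * w i ≤ M * ((v i : ℝ) - 1) := by gcongr
  have h5 : M * (w i : ℝ) + a < f i x := by linarith [(hv i).1]
  have h6 := (hw i).2
  have h7 : ⌊f i x⌋ = M * w i := by
    rw [Int.floor_eq_iff]
    push_cast
    constructor <;> linarith [ha.1, hb.2]
  refine ⟨i, ⟨w i, h7⟩, ?_, ?_⟩
  · rw [Int.fract, h7]; push_cast; linarith
  · rw [Int.fract, h7]; push_cast; linarith

lemma Dcover_le_of_cells {X ι : Type*} [TopologicalSpace X] [CompactSpace X] [Fintype ι]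
    (F : ι → X → ℝ) (hF : ∀ i, Continuous (F i)) (M : ℕ) (hM : 1 ≤ M) (t : ι → ℤ) (m : ℕ)
    (h : ∀ x, ∀ s : Finset ι, (∀ i ∈ s, (M : ℤ) ∣ ⌊M * F i x⌋ - t i) → s.card ≤ m)
    (γ : Finset (Set X))
    (href : ∀ B : Set X, (∀ x ∈ B, ∀ y ∈ B, ∀ i, |F i x - F i y| < 2) → ∃ A ∈ γ, B ⊆ A) :
    Dcover γ ≤ m := by
  classical
  have hM0 : (0 : ℝ) < M := by exact_mod_cast hM
  have hM1 : (1 : ℝ) ≤ M := by exact_mod_cast hM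
  set f : ι → X → ℝ := fun i x => M * F i x - t i with hf
  have hfl : ∀ i x, ⌊f i x⌋ = ⌊M * F i x⌋ - t i := fun i x => Int.floor_sub_intCast _ _
  have hfc : ∀ i, Continuous (f i) := fun i => (continuous_const.mul (hF i)).sub continuous_const
  obtain ⟨K, hK⟩ : ∃ K : ℕ, ∀ i x, |f i x| ≤ K := by
    have : ∀ i, ∃ K : ℝ, ∀ x, |f i x| ≤ K := by
      intro i
      obtain ⟨C, hC⟩ := isCompact_univ.exists_bound_of_continuousOn (hfc i).continuousOn
      exact ⟨C, fun x => hC x trivial⟩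
    choose C hC using this
    obtain ⟨K, hK⟩ := exists_nat_ge (∑ i, |C i|)
    refine ⟨K, fun i x => (hC i x).trans (((le_abs_self _).trans ?_).trans hK)⟩
    exact Finset.single_le_sum (f := fun i => |C i|) (fun i _ => abs_nonneg _) (Finset.mem_univ i)
  let β : Finset (Set X) :=
    (Fintype.piFinset (fun _ : ι => Finset.Icc (-(K : ℤ) - 2) (K + 2))).image (gridCell f M)
  have hβ : ∀ B ∈ β, ∃ v, B = gridCell f M v := by
    intro B hB
    obtain ⟨v, _, rfl⟩ := Finset.mem_image.1 hB
    exact ⟨v, rfl⟩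
  have hopen : ∀ v, IsOpen (gridCell f M v) := by
    intro v
    have : gridCell f M v = ⋃ τ ∈ Set.Ioo (0 : ℝ) 1, ⋂ i, {x | M * ((v i : ℝ) - 1) + τ < f i x} ∩
        {x | f i x < M * v i + τ} := by
      ext x
      simp [gridCell, and_assoc]
    rw [this]
    refine isOpen_biUnion fun τ _ => isOpen_iInter_of_finite fun i => ?_
    exact (isOpen_lt continuous_const (hfc i)).inter (isOpen_lt (hfc i) continuous_const)
  have hcov : IsFinOpenCover β := by
    refine ⟨fun B hB => ?_, ?_⟩
    · obtain ⟨v, rfl⟩ := hβ B hB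
      exact hopen v
    · rw [Set.eq_univ_iff_forall]
      intro x
      obtain ⟨τ, hτ, hτ'⟩ : ∃ τ ∈ Set.Ioo (0 : ℝ) 1,
          τ ∉ Finset.univ.image (fun i => Int.fract (f i x)) :=
        (Set.Ioo_infinite (one_pos)).exists_notMem_finset _
      have hne : ∀ i (n : ℤ), f i x - τ ≠ n := by
        intro i n hn
        apply hτ'
        refine Finset.mem_image.2 ⟨i, Finset.mem_univ i, ?_⟩
        have : f i x = n + τ := by linarith
        rw [this, Int.fract_intCast_add, Int.fract_eq_self.2 ⟨hτ.1.le, hτ.2⟩]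
      let v : ι → ℤ := fun i => ⌈(f i x - τ) / M⌉
      have h1 : ∀ i, f i x - τ < M * v i := by
        intro i
        have h := Int.le_ceil ((f i x - τ) / M)
        rw [div_le_iff₀' hM0] at h
        refine lt_of_le_of_ne h ?_
        have := hne i (M * v i)
        push_cast at this
        exact this
      have h2 : ∀ i, M * ((v i : ℝ) - 1) < f i x - τ := by
        intro i
        have h := Int.ceil_lt_add_one ((f i x - τ) / M)
        have h' : (v i : ℝ) - 1 < (f i x - τ) / M := by simp only [v]; linarith
        rwa [lt_div_iff₀' hM0] at h'
      refine Set.mem_sUnion.2 ⟨gridCell f M v, Finset.mem_coe.2 (Finset.mem_image.2 ⟨v, ?_, rfl⟩),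
        τ, hτ, fun i => ⟨by linarith [h2 i], by linarith [h1 i]⟩⟩
      rw [Fintype.mem_piFinset]
      intro i
      rw [Finset.mem_Icc]
      have hb := abs_le.1 (hK i x)
      constructor
      · by_contra hcon
        have h3 : v i ≤ -(K : ℤ) - 2 := by omega
        have h3' : (v i : ℝ) ≤ -(K : ℝ) - 2 := by exact_mod_cast h3
        have h4 := h1 i
        have : (M : ℝ) * v i ≤ 1 * v i := by
          have : (K : ℝ) ≥ 0 := Nat.cast_nonneg K
          nlinarith
        linarith [hτ.2]
      · by_contra hcon
        have h3 : (K : ℤ) + 2 ≤ v i := by omega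
        have h3' : (K : ℝ) + 2 ≤ v i := by exact_mod_cast h3
        have h4 := h2 i
        have : (K : ℝ) ≥ 0 := Nat.cast_nonneg K
        have : 1 * ((v i : ℝ) - 1) ≤ M * ((v i : ℝ) - 1) := by
          apply mul_le_mul_of_nonneg_right hM1; linarith
        linarith [hτ.1]
  have hsInf : (∀ B ∈ β, ∃ A ∈ γ, B ⊆ A) → Dcover γ ≤ ordCover β := by
    intro hr
    unfold Dcover
    exact Nat.sInf_le ⟨β, hcov, hr, rfl⟩
  refine (hsInf ?_).trans (ordCover_le β m fun x => ?_)
  · intro B hB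
    obtain ⟨v, rfl⟩ := hβ B hB
    apply href
    rintro x ⟨a, ha, hx⟩ y ⟨b, hb, hy⟩ i
    have h1 : |f i x - f i y| < M * 2 := by
      rw [abs_lt]
      have := hx i; have := hy i
      have := ha.1; have := ha.2; have := hb.1; have := hb.2
      constructor <;> nlinarith
    have h2 : f i x - f i y = M * (F i x - F i y) := by simp only [hf]; ring
    rw [h2, abs_mul, abs_of_pos hM0] at h1
    exact lt_of_mul_lt_mul_left h1 hM0.le
  · choose! V hV using hβ
    have hm : ∀ B ∈ β.filter (x ∈ ·), ∃ τ : ℝ, τ ∈ Set.Ioo (0 : ℝ) 1 ∧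
        ∀ i, M * ((V B i : ℝ) - 1) + τ < f i x ∧ f i x < M * V B i + τ := by
      intro B hB
      obtain ⟨h1, h2⟩ := Finset.mem_filter.1 hB
      rw [hV B h1] at h2
      exact h2
    choose! τ hτ hτ' using hm
    set bad : Finset ι := Finset.univ.filter fun i => (M : ℤ) ∣ ⌊f i x⌋ with hbad
    have hVne : ∀ B ∈ β.filter (x ∈ ·), ∀ C ∈ β.filter (x ∈ ·), B ≠ C → V B ≠ V C := by
      intro B hB C hC hne h
      apply hne
      rw [hV B (Finset.mem_filter.1 hB).1, hV C (Finset.mem_filter.1 hC).1, h]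
    have hkey : ∀ B ∈ β.filter (x ∈ ·), ∀ C ∈ β.filter (x ∈ ·), B ≠ C → τ B ≤ τ C →
        ∃ i ∈ bad, τ B < Int.fract (f i x) ∧ Int.fract (f i x) < τ C := by
      intro B hB C hC hne hle
      obtain ⟨i, h1, h2⟩ := grid_key f M hM x (V B) (V C) (τ B) (τ C) (hτ B hB) (hτ C hC) hle
        (hτ' B hB) (hτ' C hC) (hVne B hB C hC hne)
      exact ⟨i, Finset.mem_filter.2 ⟨Finset.mem_univ i, h1⟩, h2⟩
    have hinj : Set.InjOn τ (β.filter (x ∈ ·)) := by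
      intro B hB C hC he
      by_contra hne
      obtain ⟨i, _, h1, h2⟩ := hkey B hB C hC hne he.le
      linarith
    rw [← Finset.card_image_of_injOn hinj]
    have hint : ((β.filter (x ∈ ·)).image τ).card ≤
        (bad.image fun i => Int.fract (f i x)).card + 1 := by
      apply Finset.card_le_of_interleaved
      intro a ha b hb hab _
      obtain ⟨B, hB, rfl⟩ := Finset.mem_image.1 ha
      obtain ⟨C, hC, rfl⟩ := Finset.mem_image.1 hb
      obtain ⟨i, hi, h1, h2⟩ := hkey B hB C hC (by rintro rfl; exact lt_irrefl _ hab) hab.le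
      exact ⟨_, Finset.mem_image.2 ⟨i, hi, rfl⟩, h1, h2⟩
    have hbc : bad.card ≤ m := h x bad fun i hi => by
      rw [← hfl]; exact (Finset.mem_filter.1 hi).2
    have := Finset.card_image_le (s := bad) (f := fun i => Int.fract (f i x))
    omega


lemma exists_cells {X ι : Type*} [TopologicalSpace X] [CompactSpace X] [Nonempty X] [Fintype ι]
    (F : ι → X → ℝ) (hF : ∀ i, Continuous (F i)) (M : ℕ) (hM : 1 ≤ M)
    (γ : Finset (Set X))
    (href : ∀ B : Set X, (∀ x ∈ B, ∀ y ∈ B, ∀ i, |F i x - F i y| < 2) → ∃ A ∈ γ, B ⊆ A) :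
    ∃ (A : Finset ι) (S : Finset (ι → Fin M)) (x : (ι → Fin M) → X), A.card = Dcover γ ∧
      (M : ℝ) ^ Fintype.card ι ≤ S.card * 2 ^ Fintype.card ι ∧
      ∀ t ∈ S, ∀ i ∈ A, (M : ℤ) ∣ ⌊M * F i (x t)⌋ - ((t i : ℕ) : ℤ) := by
  classical
  have h1 : ∀ t : ι → Fin M, ∃ (x : X) (A : Finset ι), A.card = Dcover γ ∧
      ∀ i ∈ A, (M : ℤ) ∣ ⌊M * F i x⌋ - ((t i : ℕ) : ℤ) := by
    intro t
    by_contra hcon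
    push Not at hcon
    rcases Nat.eq_zero_or_pos (Dcover γ) with h0 | h0
    · obtain ⟨i, hi, _⟩ := hcon (Classical.arbitrary X) ∅ (by simp [h0])
      simp at hi
    · have := Dcover_le_of_cells F hF M hM (fun i => ((t i : ℕ) : ℤ)) (Dcover γ - 1) (by
        intro x s hs
        by_contra hlt
        obtain ⟨A, hA, hAc⟩ := Finset.exists_subset_card_eq (show Dcover γ ≤ s.card by omega)
        obtain ⟨i, hi, hi'⟩ := hcon x A hAc
        exact hi' (hs i (hA hi))) γ href
      omega
  choose x A hA hxA using h1
  have h2 : (Finset.univ : Finset (Finset ι)).card • ((M : ℝ) ^ Fintype.card ι /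
      2 ^ Fintype.card ι) ≤ ((Finset.univ : Finset (ι → Fin M)).card : ℝ) := by
    rw [nsmul_eq_mul]
    simp only [Finset.card_univ, Fintype.card_finset, Fintype.card_fun, Fintype.card_fin]
    push_cast
    rw [mul_div_cancel₀ _ (by positivity)]
  obtain ⟨A₀, _, hA₀⟩ := Finset.exists_le_card_fiber_of_nsmul_le_card_of_maps_to
    (f := A) (fun t _ => Finset.mem_univ _) (Finset.univ_nonempty) h2
  rw [div_le_iff₀ (by positivity)] at hA₀
  have hne : (Finset.univ.filter fun t => A t = A₀).Nonempty := by
    rw [Finset.nonempty_iff_ne_empty]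
    intro h
    rw [h] at hA₀
    simp only [Finset.card_empty, Nat.cast_zero, zero_mul] at hA₀
    have : (0 : ℝ) < (M : ℝ) ^ Fintype.card ι := by
      have : (0 : ℝ) < M := by exact_mod_cast hM
      positivity
    linarith
  obtain ⟨t₀, ht₀⟩ := hne
  refine ⟨A₀, Finset.univ.filter fun t => A t = A₀, x, ?_, hA₀, ?_⟩
  · rw [← (Finset.mem_filter.1 ht₀).2]; exact hA t₀
  · intro t ht i hi
    rw [← (Finset.mem_filter.1 ht).2] at hi
    exact hxA t i hi

lemma card_residues (M : ℕ) (hM : 1 ≤ M) (y ℓ : ℝ) (hℓ : 0 ≤ ℓ) (R : Finset (Fin M))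
    (hR : ∀ r ∈ R, ∃ z : ℝ, |z - y| ≤ ℓ ∧ (M : ℤ) ∣ ⌊M * z⌋ - ((r : ℕ) : ℤ)) :
    (R.card : ℝ) ≤ 2 * M * ℓ + 2 := by
  classical
  have hM0 : (0 : ℝ) < M := by exact_mod_cast hM
  let Z := Finset.Icc ⌊M * y - M * ℓ⌋ ⌊M * y + M * ℓ⌋
  have hinj : Function.Injective (fun r : Fin M => ((r : ℕ) : ℤ)) := by
    intro a b h
    have h' : ((a : ℕ) : ℤ) = ((b : ℕ) : ℤ) := h
    exact Fin.ext (by exact_mod_cast h')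
  have hsub : R.image (fun r : Fin M => ((r : ℕ) : ℤ)) ⊆ Z.image (fun z => z % (M : ℤ)) := by
    intro a ha
    obtain ⟨r, hr, rfl⟩ := Finset.mem_image.1 ha
    obtain ⟨z, hz, hd⟩ := hR r hr
    rw [abs_le] at hz
    refine Finset.mem_image.2 ⟨⌊M * z⌋, Finset.mem_Icc.2 ⟨?_, ?_⟩, ?_⟩
    · apply Int.floor_le_floor; nlinarith
    · apply Int.floor_le_floor; nlinarith
    · have h1 : ((r : ℕ) : ℤ) % M = ⌊M * z⌋ % M := Int.modEq_iff_dvd.2 hd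
      have h2 : ((r : ℕ) : ℤ) % M = (r : ℕ) :=
        Int.emod_eq_of_lt (by positivity) (by exact_mod_cast r.2)
      change ⌊M * z⌋ % (M : ℤ) = _
      rw [← h1, h2]
  have h1 := (Finset.card_le_card hsub).trans Finset.card_image_le
  rw [Finset.card_image_of_injective _ hinj, Int.card_Icc] at h1
  have h2 : (R.card : ℝ) ≤ ((⌊M * y + M * ℓ⌋ + 1 - ⌊M * y - M * ℓ⌋).toNat : ℝ) := by
    exact_mod_cast h1
  refine h2.trans ?_
  have h3 : ⌊M * y - M * ℓ⌋ ≤ ⌊M * y + M * ℓ⌋ := Int.floor_le_floor (by nlinarith)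
  have h4 : ((⌊M * y + M * ℓ⌋ + 1 - ⌊M * y - M * ℓ⌋).toNat : ℝ) =
      (⌊M * y + M * ℓ⌋ : ℝ) + 1 - ⌊M * y - M * ℓ⌋ := by
    have : ((⌊M * y + M * ℓ⌋ + 1 - ⌊M * y - M * ℓ⌋).toNat : ℤ) =
      ⌊M * y + M * ℓ⌋ + 1 - ⌊M * y - M * ℓ⌋ := Int.toNat_of_nonneg (by omega)
    exact_mod_cast congrArg (Int.cast : ℤ → ℝ) this
  rw [h4]
  have h5 := Int.floor_le (M * y + M * ℓ)
  have h6 := Int.lt_floor_add_one (M * y - M * ℓ)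
  linarith

lemma card_cells {X ι : Type*} [Fintype ι]
    (F : ι → X → ℝ) (M : ℕ) (hM : 1 ≤ M) (A : Finset ι) (S : Finset (ι → Fin M))
    (x : (ι → Fin M) → X) (hS : (M : ℝ) ^ Fintype.card ι ≤ S.card * 2 ^ Fintype.card ι)
    (hx : ∀ t ∈ S, ∀ i ∈ A, (M : ℤ) ∣ ⌊M * F i (x t)⌋ - ((t i : ℕ) : ℤ))
    (ℓ : ℝ) (hℓ : 0 < ℓ) (hMℓ : 1 ≤ M * ℓ) (E : Set X) (I : Finset ι)
    (hE : ∀ u ∈ E, ∀ v ∈ E, ∀ i ∈ I, |F i u - F i v| ≤ ℓ) (U : Finset (ι → Fin M))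
    (hUS : U ⊆ S) (hU : ∀ t ∈ U, x t ∈ E) (J : Finset ι) (hJA : J ⊆ A) (hJI : J ⊆ I) :
    (U.card : ℝ) ≤ S.card * 2 ^ Fintype.card ι * (4 * ℓ) ^ J.card := by
  classical
  have hM0 : (0 : ℝ) < M := by exact_mod_cast hM
  rcases U.eq_empty_or_nonempty with rfl | ⟨t₀, ht₀⟩
  · simp only [Finset.card_empty, Nat.cast_zero]; positivity
  let R : ι → Finset (Fin M) := fun i => U.image (fun t => t i)
  have hsub : U ⊆ Fintype.piFinset R := fun t ht =>
    Fintype.mem_piFinset.2 fun i => Finset.mem_image_of_mem _ ht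
  have h1 : (U.card : ℝ) ≤ ∏ i, ((R i).card : ℝ) := by
    have := Finset.card_le_card hsub
    rw [Fintype.card_piFinset] at this
    exact_mod_cast this
  have h2 : ∀ i, ((R i).card : ℝ) ≤ M * (if i ∈ J then 4 * ℓ else 1) := by
    intro i
    split_ifs with hi
    · have := card_residues M hM (F i (x t₀)) ℓ hℓ.le (R i) (by
        intro r hr
        obtain ⟨t, ht, rfl⟩ := Finset.mem_image.1 hr
        exact ⟨F i (x t), hE _ (hU t ht) _ (hU t₀ ht₀) i (hJI hi), hx t (hUS ht) i (hJA hi)⟩)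
      linarith
    · have := Finset.card_le_univ (R i)
      rw [Fintype.card_fin] at this
      rw [mul_one]; exact_mod_cast this
  calc (U.card : ℝ) ≤ ∏ i, ((R i).card : ℝ) := h1
    _ ≤ ∏ i, (M * (if i ∈ J then 4 * ℓ else 1) : ℝ) :=
        Finset.prod_le_prod (fun i _ => Nat.cast_nonneg _) fun i _ => h2 i
    _ = (M : ℝ) ^ Fintype.card ι * (4 * ℓ) ^ J.card := by
        rw [Finset.prod_mul_distrib, Finset.prod_const, Finset.card_univ, Finset.prod_ite_mem,
          Finset.univ_inter, Finset.prod_const]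
    _ ≤ _ := by gcongr

lemma exists_bump_lower {X : Type*} [MetricSpace X] [CompactSpace X] (α : Finset (Set X))
    (hα : IsFinOpenCover α) : ∃ c : ℝ, 0 < c ∧ ∀ x : X, ∃ A ∈ α, c ≤ bump A x := by
  classical
  rcases isEmpty_or_nonempty X with hX | hX
  · exact ⟨1, one_pos, fun x => hX.elim x⟩
  let f : X → ℝ≥0 := fun x => α.sup fun A => bump A x
  have hf : Continuous f := Continuous.finset_sup_apply fun A _ => continuous_bump A
  obtain ⟨x₀, _, hx₀⟩ := isCompact_univ.exists_isMinOn univ_nonempty hf.continuousOn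
  have hne : ∀ x, ∃ A ∈ α, x ∈ A := by
    intro x
    have : x ∈ ⋃₀ (α : Set (Set X)) := by rw [hα.2]; trivial
    obtain ⟨A, hA, hx⟩ := this
    exact ⟨A, hA, hx⟩
  have hαne : α.Nonempty := by
    obtain ⟨A, hA, _⟩ := hne x₀
    exact ⟨A, hA⟩
  refine ⟨f x₀, ?_, fun x => ?_⟩
  · obtain ⟨A, hA, hx⟩ := hne x₀
    have h1 : bump A x₀ ≤ f x₀ := Finset.le_sup (f := fun A => bump A x₀) hA
    have h2 := (bump_pos_iff (hα.1 A hA) x₀).2 hx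
    exact_mod_cast h2.trans_le h1
  · obtain ⟨A, hA, h⟩ := Finset.exists_mem_eq_sup α hαne fun A => bump A x
    refine ⟨A, hA, ?_⟩
    have h1 : f x₀ ≤ f x := hx₀ (mem_univ x)
    have h2 : f x = bump A x := h
    rw [h2] at h1
    exact_mod_cast h1

lemma sep_family {X : Type*} [MetricSpace X] [CompactSpace X] [Nonempty X] (T : X → X)
    (hT : Continuous T) (α : Finset (Set X)) (hα : IsFinOpenCover α) :
    ∃ lam : ℝ, 0 < lam ∧ ∀ n M : ℕ, 1 ≤ M → ∃ (N : ℕ) (x : Fin N → X), 0 < N ∧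
      ∀ δ : ℝ, 0 < δ → 4 * (lam * δ) ≤ 1 → 1 ≤ M * (lam * δ) →
      ∀ (J : Finset (Fin n)) (E : Set X),
        (∀ u ∈ E, ∀ v ∈ E, ∀ j ∈ J, dist (T^[(j : ℕ)] u) (T^[(j : ℕ)] v) ≤ δ) →
        ∀ U : Finset (Fin N), (∀ s ∈ U, x s ∈ E) →
        (U.card : ℝ) ≤ N * 2 ^ (n * α.card) *
          (4 * (lam * δ)) ^ (Dcover (joinN T α n) - (n - J.card) * α.card) := by
  classical
  obtain ⟨c, hc, hcα⟩ := exists_bump_lower α hα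
  refine ⟨3 / c, by positivity, fun n M hM => ?_⟩
  set lam := 3 / c with hlam
  have hlam0 : 0 < lam := by positivity
  let F : Fin n × α → X → ℝ := fun p x => lam * bump (p.2 : Set X) (T^[(p.1 : ℕ)] x)
  have hF : ∀ p, Continuous (F p) := fun p =>
    continuous_const.mul (NNReal.continuous_coe.comp ((continuous_bump _).comp (hT.iterate _)))
  have href : ∀ B : Set X, (∀ x ∈ B, ∀ y ∈ B, ∀ i, |F i x - F i y| < 2) →
      ∃ A ∈ joinN T α n, B ⊆ A := by
    intro B hB
    obtain ⟨x, hx⟩ : ∃ x, B.Nonempty → x ∈ B := by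
      rcases B.eq_empty_or_nonempty with rfl | ⟨x, hx⟩
      · exact ⟨Classical.arbitrary X, fun h => absurd h (by simp)⟩
      · exact ⟨x, fun _ => hx⟩
    choose A hA hcA using hcα
    refine ⟨_, mem_joinN.2 ⟨fun j => A (T^[(j : ℕ)] x), fun j => hA _, rfl⟩, ?_⟩
    intro y hy
    rw [Set.mem_iInter]
    intro j
    rw [Set.mem_preimage, ← bump_pos_iff (hα.1 _ (hA _))]
    have h1 := hB x (hx ⟨y, hy⟩) y hy (j, ⟨A (T^[(j : ℕ)] x), hA _⟩)
    have h2 : 3 ≤ F (j, ⟨A (T^[(j : ℕ)] x), hA _⟩) x := by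
      have := hcA (T^[(j : ℕ)] x)
      calc (3 : ℝ) = lam * c := by rw [hlam]; field_simp
        _ ≤ _ := by simp only [F]; gcongr
    have h3 : 0 < F (j, ⟨A (T^[(j : ℕ)] x), hA _⟩) y := by
      rw [abs_lt] at h1; linarith [h1.2]
    have h4 : (0 : ℝ) < bump (A (T^[(j : ℕ)] x)) (T^[(j : ℕ)] y) :=
      pos_of_mul_pos_right h3 hlam0.le
    exact_mod_cast h4
  obtain ⟨A, S, x, hAc, hSc, hx⟩ := exists_cells F hF M hM (joinN T α n) href
  have hcard : Fintype.card (Fin n × α) = n * α.card := by simp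
  have hM0 : (0 : ℝ) < M := by exact_mod_cast hM
  let e := S.equivFin
  refine ⟨S.card, fun s => x (e.symm s), ?_, ?_⟩
  · by_contra h
    have h0 : S.card = 0 := by omega
    rw [h0] at hSc
    simp only [Nat.cast_zero, zero_mul] at hSc
    have : (0 : ℝ) < (M : ℝ) ^ Fintype.card (Fin n × α) := by positivity
    linarith
  intro δ hδ hδ4 hδM J E hE U hU
  let I : Finset (Fin n × α) := J ×ˢ Finset.univ
  have hcomp : (A \ I).card ≤ (n - J.card) * α.card := by
    have h1 : A \ I ⊆ (Finset.univ \ J) ×ˢ Finset.univ := by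
      intro p hp
      simp only [I, Finset.mem_sdiff, Finset.mem_product, Finset.mem_univ, and_true, true_and] at hp ⊢
      exact hp.2
    have h2 := Finset.card_le_card h1
    rw [Finset.card_product, Finset.card_sdiff_of_subset (Finset.subset_univ _)] at h2
    simpa using h2
  have hAI : Dcover (joinN T α n) - (n - J.card) * α.card ≤ (A ∩ I).card := by
    have := Finset.card_sdiff_add_card_inter A I
    omega
  have h1 := card_cells F M hM A S x hSc hx (lam * δ) (by positivity) hδM E I (by
    intro u hu v hv p hp
    have hj := hE u hu v hv p.1 (Finset.mem_product.1 hp).1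
    have h2 : F p u - F p v = lam * ((bump (p.2 : Set X) (T^[(p.1 : ℕ)] u) : ℝ) -
      bump (p.2 : Set X) (T^[(p.1 : ℕ)] v)) := by simp only [F]; ring
    rw [h2, abs_mul, abs_of_pos hlam0]
    gcongr
    exact (dist_bump_le _ _ _).trans hj)
    (U.image fun s => (e.symm s : Fin n × α → Fin M)) (by
      intro t ht
      obtain ⟨s, _, rfl⟩ := Finset.mem_image.1 ht
      exact (e.symm s).2) (by
      intro t ht
      obtain ⟨s, hs, rfl⟩ := Finset.mem_image.1 ht
      exact hU s hs) (A ∩ I) Finset.inter_subset_left Finset.inter_subset_right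
  have hci : (U.image fun s => (e.symm s : Fin n × α → Fin M)).card = U.card :=
    Finset.card_image_of_injective _ (Subtype.val_injective.comp e.symm.injective)
  rw [hci, hcard] at h1
  refine h1.trans ?_
  have h3 : (4 * (lam * δ)) ^ (A ∩ I).card ≤
      (4 * (lam * δ)) ^ (Dcover (joinN T α n) - (n - J.card) * α.card) :=
    pow_le_pow_of_le_one (by positivity) hδ4 hAI
  gcongr


/-- block of symbols -/
def blk {X Sy : Type*} (T : X → X) (σ : X → Sy) (q : ℕ) (u : X) : Fin q → Sy :=
  fun j => σ (T^[(j : ℕ)] u)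

lemma sum_phase (q k : ℕ) (f : ℕ → ℝ) :
    ∑ r ∈ Finset.range q, ∑ i : Fin k, f (r + q * i) = ∑ j ∈ Finset.range (q * k), f j := by
  induction k with
  | zero => simp
  | succ k ih =>
    simp only [Fin.sum_univ_castSucc, Finset.sum_add_distrib, Fin.val_castSucc, Fin.val_last]
    rw [ih, mul_add, mul_one, Finset.sum_range_add]
    congr 1
    exact Finset.sum_congr rfl fun r _ => by rw [add_comm]

lemma gibbs {N : ℕ} {B : Type*} [Fintype B] (ν : Fin N → B) (Q : B → ℝ)
    (hQ : ∀ b, 0 < Q b) (hQ1 : ∑ b, Q b ≤ 1) (L : ℝ)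
    (h : ∀ b, ∀ U : Finset (Fin N), (∀ s ∈ U, ν s = b) → (U.card : ℝ) ≤ N * Real.exp (-L)) :
    N * L ≤ ∑ s, - Real.log (Q (ν s)) := by
  classical
  have h1 : ∑ s, Q (ν s) ≤ N * Real.exp (-L) := by
    calc ∑ s, Q (ν s) = ∑ b, ∑ s ∈ Finset.univ.filter (fun s => ν s = b), Q (ν s) :=
          (Finset.sum_fiberwise _ _ _).symm
      _ ≤ ∑ b, (N * Real.exp (-L)) * Q b := by
          refine Finset.sum_le_sum fun b _ => ?_
          rw [Finset.sum_congr rfl (g := fun _ => Q b)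
            (fun s hs => by rw [(Finset.mem_filter.1 hs).2]), Finset.sum_const, nsmul_eq_mul]
          exact mul_le_mul_of_nonneg_right (h b _ fun s hs => (Finset.mem_filter.1 hs).2) (hQ b).le
      _ = (N * Real.exp (-L)) * ∑ b, Q b := by rw [Finset.mul_sum]
      _ ≤ _ := mul_le_of_le_one_right (by positivity) hQ1
  have h2 : ∀ s, Real.log (Q (ν s)) + L ≤ Q (ν s) * Real.exp L - 1 := by
    intro s
    have := Real.log_le_sub_one_of_pos (mul_pos (hQ (ν s)) (Real.exp_pos L))
    rwa [Real.log_mul (hQ _).ne' (Real.exp_pos _).ne', Real.log_exp] at this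
  have h3 := Finset.sum_le_sum fun s (_ : s ∈ (Finset.univ : Finset (Fin N))) => h2 s
  rw [Finset.sum_add_distrib, Finset.sum_sub_distrib, ← Finset.sum_mul] at h3
  simp only [Finset.sum_const, Finset.card_univ, Fintype.card_fin, nsmul_eq_mul, mul_one] at h3
  have h4 : (∑ s, Q (ν s)) * Real.exp L ≤ N := by
    calc (∑ s, Q (ν s)) * Real.exp L ≤ N * Real.exp (-L) * Real.exp L := by gcongr
      _ = N := by rw [mul_assoc, ← Real.exp_add]; simp
  rw [Finset.sum_neg_distrib]
  linarith

lemma block_ineq {X Sy : Type*} [Fintype Sy] (T : X → X) (σ : X → Sy) (q : ℕ) (hq : 1 ≤ q)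
    (w : (Fin q → Sy) → ℝ) (hw : ∀ b, 0 < w b) (hw1 : ∀ b, w b ≤ 1) (hws : ∑ b, w b ≤ 1)
    (n N : ℕ) (x : Fin N → X) (h C : ℝ) (hC : 0 ≤ C)
    (hatom : ∀ (J : Finset ℕ) (E : Set X), (∀ j ∈ J, j < n) →
      (∀ u ∈ E, ∀ v ∈ E, ∀ j ∈ J, σ (T^[j] u) = σ (T^[j] v)) →
      ∀ U : Finset (Fin N), (∀ s ∈ U, x s ∈ E) →
        (U.card : ℝ) ≤ N * Real.exp (-(n * h - C * (n - J.card)))) :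
    N * (q * (n * h - 2 * q * C)) ≤
      ∑ s, ∑ j ∈ Finset.range n, - Real.log (w (blk T σ q (T^[j] (x s)))) := by
  classical
  set k := n / q - 1 with hk
  have hdm := Nat.div_add_mod n q
  have hml := Nat.mod_lt n (by omega : q > 0)
  have hkn : q * k ≤ n := by
    have : q * k ≤ q * (n / q) := Nat.mul_le_mul_left q (Nat.sub_le _ _)
    omega
  have hkn2 : n ≤ q * k + 2 * q := by
    have h1 : n / q ≤ k + 1 := by omega
    have : q * (n / q) ≤ q * (k + 1) := Nat.mul_le_mul_left q h1
    rw [mul_add, mul_one] at this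
    omega
  have hkn3 : k ≠ 0 → q * k + q ≤ n := by
    intro h0
    have h1 : k + 1 = n / q := by omega
    have : q * (k + 1) = q * (n / q) := by rw [h1]
    rw [mul_add, mul_one] at this
    omega
  have hphase : ∀ r ∈ Finset.range q, N * (n * h - 2 * q * C) ≤
      ∑ s, ∑ i : Fin k, - Real.log (w (blk T σ q (T^[r + q * i] (x s)))) := by
    intro r hr
    rw [Finset.mem_range] at hr
    have hg := gibbs (fun s => fun i : Fin k => blk T σ q (T^[r + q * i] (x s)))
      (fun b => ∏ i, w (b i)) (fun b => Finset.prod_pos fun i _ => hw _) (by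
        rw [← Fintype.sum_pow]
        exact pow_le_one₀ (Finset.sum_nonneg fun b _ => (hw b).le) hws)
      (n * h - C * (n - (q * k : ℕ))) (by
        intro b U hU
        have := hatom (Finset.Ico r (r + q * k))
          {u | (fun i : Fin k => blk T σ q (T^[r + q * i] u)) = b} (by
            intro j hj
            rw [Finset.mem_Ico] at hj
            have : k ≠ 0 := by rintro h0; rw [h0] at hj; omega
            have := hkn3 this
            omega) (by
            intro u hu v hv j hj
            rw [Finset.mem_Ico] at hj
            have h1 : (j - r) / q < k := Nat.div_lt_of_lt_mul (by omega)
            have h2 : (j - r) % q < q := Nat.mod_lt _ (by omega)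
            have h3 := congrFun (congrFun ((hu : _ = b).trans (hv : _ = b).symm)
              ⟨(j - r) / q, h1⟩) ⟨(j - r) % q, h2⟩
            simp only [blk, ← Function.iterate_add_apply] at h3
            have h4 : (j - r) % q + (r + q * ((j - r) / q)) = j := by
              have := Nat.div_add_mod (j - r) q
              omega
            rwa [h4] at h3) U (fun s hs => hU s hs)
        rwa [Nat.card_Ico, Nat.add_sub_cancel_left] at this)
    have h1 : ∀ s, - Real.log (∏ i : Fin k, w (blk T σ q (T^[r + q * i] (x s)))) =
        ∑ i : Fin k, - Real.log (w (blk T σ q (T^[r + q * i] (x s)))) := by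
      intro s
      rw [Real.log_prod (fun i _ => (hw _).ne'), Finset.sum_neg_distrib]
    simp only [h1] at hg
    refine le_trans ?_ hg
    have h2 : (n : ℝ) ≤ (q * k : ℕ) + 2 * q := by exact_mod_cast hkn2
    have h3 : C * (n - (q * k : ℕ)) ≤ C * (2 * q) := by gcongr; linarith
    exact mul_le_mul_of_nonneg_left (by linarith) (Nat.cast_nonneg N)
  have hsum := Finset.sum_le_sum hphase
  rw [Finset.sum_const, Finset.card_range, nsmul_eq_mul, Finset.sum_comm] at hsum
  calc (N : ℝ) * (q * (n * h - 2 * q * C)) = q * (N * (n * h - 2 * q * C)) := by ring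
    _ ≤ _ := hsum
    _ ≤ _ := by
      refine Finset.sum_le_sum fun s _ => ?_
      rw [sum_phase q k (fun j => - Real.log (w (blk T σ q (T^[j] (x s)))))]
      refine Finset.sum_le_sum_of_subset_of_nonneg (Finset.range_mono hkn) fun j _ _ => ?_
      exact neg_nonneg.2 (Real.log_nonpos (hw _).le (hw1 _))


/-- averaged empirical measure -/
def emp {X : Type*} [MeasurableSpace X] (T : X → X) (n N : ℕ) (x : Fin N → X) : Measure X :=
  ((n * N : ℕ) : ℝ≥0∞)⁻¹ • ∑ p ∈ (Finset.univ : Finset (Fin N)) ×ˢ Finset.range n,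
    Measure.dirac (T^[p.2] (x p.1))

lemma emp_prob {X : Type*} [MeasurableSpace X] (T : X → X) (n N : ℕ) (x : Fin N → X)
    (hn : 0 < n) (hN : 0 < N) : IsProbabilityMeasure (emp T n N x) := by
  constructor
  unfold emp
  rw [Measure.smul_apply, Measure.finsetSum_apply]
  simp only [measure_univ, Finset.sum_const, Finset.card_product, Finset.card_univ,
    Fintype.card_fin, Finset.card_range, nsmul_eq_mul, mul_one, smul_eq_mul]
  rw [mul_comm N n]
  exact ENNReal.inv_mul_cancel (by positivity) (ENNReal.natCast_ne_top _)

lemma emp_integral {X : Type*} [MeasurableSpace X] (T : X → X) (n N : ℕ) (x : Fin N → X)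
    (f : X → ℝ) (hf : StronglyMeasurable f) :
    ∫ y, f y ∂(emp T n N x) = ((n * N : ℕ) : ℝ)⁻¹ * ∑ s, ∑ j ∈ Finset.range n, f (T^[j] (x s)) := by
  unfold emp
  rw [integral_smul_measure, integral_finsetSum_measure]
  · rw [← Finset.sum_product']
    simp only [smul_eq_mul, ENNReal.toReal_inv, ENNReal.toReal_natCast]
    congr 1
    exact Finset.sum_congr rfl fun p _ => integral_dirac' f _ hf
  · intro p _
    exact integrable_dirac' hf (by simp)

lemma emp_apply {X : Type*} [MeasurableSpace X] (T : X → X) (n N : ℕ) (x : Fin N → X)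
    (O : Set X) (hO : MeasurableSet O) :
    (emp T n N x O).toReal = ((n * N : ℕ) : ℝ)⁻¹ *
      ∑ s, ∑ j ∈ Finset.range n, O.indicator (fun _ => (1 : ℝ)) (T^[j] (x s)) := by
  rw [← emp_integral T n N x _ (stronglyMeasurable_const.indicator hO)]
  rw [integral_indicator hO]
  simp [Measure.real]

lemma exists_limit {X : Type*} [MetricSpace X] [CompactSpace X] [MeasurableSpace X] [BorelSpace X]
    (T : X → X) (hT : Continuous T) (N : ℕ → ℕ) (hN : ∀ n, 0 < N n)
    (x : ∀ n, Fin (N n) → X) :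
    ∃ (μ : Measure X) (V : Filter ℕ), IsProbabilityMeasure μ ∧ MeasurePreserving T μ μ ∧
      V.NeBot ∧ V ≤ atTop ∧ ∀ O : Set X, IsOpen O → ∀ θ : ℝ, 0 < θ → ∀ᶠ n in V,
        (μ O).toReal - θ ≤ ((n * N n : ℕ) : ℝ)⁻¹ *
          ∑ s, ∑ j ∈ Finset.range n, O.indicator (fun _ => (1 : ℝ)) (T^[j] (x n s)) := by
  let U : Ultrafilter ℕ := hyperfilter ℕ
  have hU : (U : Filter ℕ) ≤ atTop := Nat.hyperfilter_le_atTop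
  let P : ℕ → ProbabilityMeasure X := fun n =>
    ⟨emp T (n + 1) (N (n + 1)) (x (n + 1)), emp_prob _ _ _ _ (Nat.succ_pos n) (hN _)⟩
  obtain ⟨μ, -, hμ⟩ := isCompact_univ.ultrafilter_le_nhds (U.map P) (by simp)
  have hlim : Tendsto P U (𝓝 μ) := hμ
  refine ⟨μ, map (· + 1) U, μ.2, ?_, inferInstance, ?_, ?_⟩
  · refine ⟨hT.measurable, ?_⟩
    have hpm := Measure.isProbabilityMeasure_map (μ := (μ : Measure X)) hT.aemeasurable
    apply ext_of_forall_integral_eq_of_IsFiniteMeasure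
    intro f
    rw [integral_map hT.aemeasurable f.continuous.aestronglyMeasurable]
    have h1 := ProbabilityMeasure.tendsto_iff_forall_integral_tendsto.1 hlim f
    have h2 := ProbabilityMeasure.tendsto_iff_forall_integral_tendsto.1 hlim
      (f.compContinuous ⟨T, hT⟩)
    have h3 := h2.sub h1
    have h4 : Tendsto (fun n => ∫ y, (f.compContinuous ⟨T, hT⟩) y ∂(P n : Measure X) -
        ∫ y, f y ∂(P n : Measure X)) U (𝓝 0) := by
      have hb : Tendsto (fun n : ℕ => 2 * ‖f‖ / ((n : ℝ) + 1)) U (𝓝 0) := by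
        refine Tendsto.mono_left ?_ hU
        have := (tendsto_one_div_add_atTop_nhds_zero_nat (𝕜 := ℝ)).const_mul (2 * ‖f‖)
        simpa [div_eq_mul_inv] using this
      refine squeeze_zero_norm (fun n => ?_) hb
      have e1 := emp_integral T (n + 1) (N (n + 1)) (x (n + 1)) f f.continuous.stronglyMeasurable
      have e2 := emp_integral T (n + 1) (N (n + 1)) (x (n + 1)) (f.compContinuous ⟨T, hT⟩)
        (f.compContinuous ⟨T, hT⟩).continuous.stronglyMeasurable
      change ‖∫ y, (f.compContinuous ⟨T, hT⟩) y ∂(emp T (n + 1) (N (n + 1)) (x (n + 1))) -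
        ∫ y, f y ∂(emp T (n + 1) (N (n + 1)) (x (n + 1)))‖ ≤ _
      rw [e1, e2, ← mul_sub, ← Finset.sum_sub_distrib]
      have e3 : ∀ s : Fin (N (n + 1)), (∑ j ∈ Finset.range (n + 1),
          (f.compContinuous ⟨T, hT⟩) (T^[j] (x (n + 1) s)) -
          ∑ j ∈ Finset.range (n + 1), f (T^[j] (x (n + 1) s))) =
          f (T^[n + 1] (x (n + 1) s)) - f (x (n + 1) s) := by
        intro s
        rw [← Finset.sum_sub_distrib]
        have := Finset.sum_range_sub (fun j => f (T^[j] (x (n + 1) s))) (n + 1)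
        rw [Function.iterate_zero, id] at this
        rw [← this]
        refine Finset.sum_congr rfl fun j _ => ?_
        rw [Function.iterate_succ_apply']
        rfl
      rw [Finset.sum_congr rfl fun s _ => e3 s, norm_mul]
      have e4 : ‖∑ s : Fin (N (n + 1)), (f (T^[n + 1] (x (n + 1) s)) - f (x (n + 1) s))‖ ≤
          N (n + 1) * (2 * ‖f‖) := by
        refine (norm_sum_le _ _).trans ?_
        calc _ ≤ ∑ s : Fin (N (n + 1)), 2 * ‖f‖ := by
              refine Finset.sum_le_sum fun s _ => (norm_sub_le _ _).trans ?_
              have a1 := f.norm_coe_le_norm (T^[n + 1] (x (n + 1) s))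
              have a2 := f.norm_coe_le_norm (x (n + 1) s)
              linarith
          _ = _ := by simp
      have hNp : (0 : ℝ) < N (n + 1) := by exact_mod_cast hN _
      calc _ ≤ ‖(((n + 1) * N (n + 1) : ℕ) : ℝ)⁻¹‖ * (N (n + 1) * (2 * ‖f‖)) := by gcongr
        _ = _ := by
          rw [Real.norm_of_nonneg (by positivity)]
          push_cast
          field_simp
    have h5 := tendsto_nhds_unique h3 h4
    exact sub_eq_zero.1 h5
  · exact (tendsto_add_atTop_nat 1).mono_left hU
  · intro O hO θ hθ
    rw [eventually_map]
    have := ProbabilityMeasure.le_liminf_measure_open_of_tendsto hlim hO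
    have hnn : ∀ n : ℕ, (0 : ℝ) ≤ ((n * N n : ℕ) : ℝ)⁻¹ *
          ∑ s, ∑ j ∈ Finset.range n, O.indicator (fun _ => (1 : ℝ)) (T^[j] (x n s)) := by
      intro n
      refine mul_nonneg (by positivity) (Finset.sum_nonneg fun s _ => Finset.sum_nonneg fun j _ => ?_)
      exact Set.indicator_nonneg (fun _ _ => zero_le_one) _
    rcases le_or_gt ((μ : Measure X) O).toReal θ with hle | hgt
    · exact Eventually.of_forall fun n => le_trans (by linarith) (hnn (n + 1))
    · have hlt : ENNReal.ofReal (((μ : Measure X) O).toReal - θ) < (μ : Measure X) O := by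
        rw [ENNReal.ofReal_lt_iff_lt_toReal (by linarith) (measure_ne_top _ _)]
        linarith
      filter_upwards [eventually_lt_of_lt_liminf (hlt.trans_le this)] with n hn
      rw [← emp_apply T (n + 1) (N (n + 1)) (x (n + 1)) O hO.measurableSet]
      have := (P n).2
      rw [ENNReal.ofReal_lt_iff_lt_toReal (by linarith) (measure_ne_top _ _)] at hn
      exact hn.le


lemma coding {X : Type*} [MetricSpace X] [CompactSpace X] [MeasurableSpace X] [BorelSpace X]
    (μ : Measure X) [IsProbabilityMeasure μ] (P : Finset (Set X)) (hP : IsFinPartition P)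
    (ε : ℝ) (hε : 0 < ε) (hd : ∀ s ∈ P, Metric.diam s ≤ ε) (η : ℝ) (hη : 0 < η) :
    ∃ (U : P → Set X) (σ : X → P), (∀ p, IsOpen (U p)) ∧ (∀ p, ∀ u ∈ U p, σ u = p) ∧
      (∀ u v, σ u = σ v → dist u v ≤ 3 * ε) ∧ ∀ p : P, μ ((p : Set X) \ U p) ≤ ENNReal.ofReal η := by
  have hK : ∀ p : P, ∃ K ⊆ (p : Set X), IsCompact K ∧ μ ((p : Set X) \ K) < ENNReal.ofReal η :=
    fun p => (hP.1 p p.2).exists_isCompact_sdiff_lt (measure_ne_top _ _) (by simpa using hη)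
  choose K hKs hKc hKm using hK
  have hR : ∀ᶠ R in 𝓝[>] (0 : ℝ), ∀ p p' : P, p ≠ p' →
      Disjoint (Metric.thickening R (K p)) (Metric.thickening R (K p')) := by
    refine eventually_all.2 fun p => eventually_all.2 fun p' => ?_
    by_cases hpp : p = p'
    · exact Eventually.of_forall fun R h => absurd hpp h
    · have hdis : Disjoint (K p) (K p') :=
        (hP.2.1 p p.2 p' p'.2 (fun h => hpp (Subtype.ext h))).mono (hKs p) (hKs p')
      obtain ⟨r, hr, hr2⟩ := hdis.exists_thickenings (hKc p) (hKc p').isClosed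
      filter_upwards [Ioc_mem_nhdsGT hr] with R hR _
      exact hr2.mono (Metric.thickening_mono hR.2 _) (Metric.thickening_mono hR.2 _)
  obtain ⟨R, hR1, hR0, hRε⟩ := (hR.and (Ioc_mem_nhdsGT hε)).exists
  have hcov : ∀ u : X, ∃ p : P, u ∈ (p : Set X) := by
    intro u
    have : u ∈ ⋃₀ (P : Set (Set X)) := by rw [hP.2.2]; trivial
    obtain ⟨p, hp, hu⟩ := this
    exact ⟨⟨p, hp⟩, hu⟩
  have hσ : ∀ u : X, ∃ p : P, (u ∈ (p : Set X) ∨ u ∈ Metric.thickening R (K p)) ∧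
      ∀ p', u ∈ Metric.thickening R (K p') → p = p' := by
    intro u
    by_cases h : ∃ p : P, u ∈ Metric.thickening R (K p)
    · obtain ⟨p, hp⟩ := h
      refine ⟨p, Or.inr hp, fun p' hp' => ?_⟩
      by_contra hne
      exact Set.disjoint_left.1 (hR1 p p' hne) hp hp'
    · obtain ⟨p, hp⟩ := hcov u
      exact ⟨p, Or.inl hp, fun p' hp' => absurd ⟨p', hp'⟩ h⟩
  choose σ hσ1 hσ2 using hσ
  have hnear : ∀ u : X, ∃ k ∈ ((σ u : P) : Set X), dist u k ≤ ε := by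
    intro u
    rcases hσ1 u with h | h
    · exact ⟨u, h, by simpa using hε.le⟩
    · obtain ⟨k, hk, hk2⟩ := Metric.mem_thickening_iff.1 h
      exact ⟨k, hKs _ hk, hk2.le.trans hRε⟩
  refine ⟨fun p => Metric.thickening R (K p), σ, fun p => Metric.isOpen_thickening,
    fun p u hu => hσ2 u p hu, ?_, ?_⟩
  · intro u v huv
    obtain ⟨k, hk, hk2⟩ := hnear u
    obtain ⟨l, hl, hl2⟩ := hnear v
    rw [← huv] at hl
    have h1 : dist k l ≤ ε :=
      (Metric.dist_le_diam_of_mem (isCompact_univ.isBounded.subset (subset_univ _)) hk hl).trans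
        (hd _ (σ u).2)
    have h2 := dist_triangle4 u k l v
    rw [dist_comm l v] at h2
    linarith
  · intro p
    refine (measure_mono (sdiff_subset_sdiff_right (Metric.self_subset_thickening hR0 _))).trans
      (hKm p).le

/-- cylinder -/
def cyl {X : Type*} (T : X → X) (P : Finset (Set X)) (q : ℕ) (b : Fin q → P) : Set X :=
  ⋂ j : Fin q, T^[(j : ℕ)] ⁻¹' (b j : Set X)

lemma cyl_partition {X : Type*} [MeasurableSpace X] (T : X → X) (hT : Measurable T)
    (P : Finset (Set X)) (hP : IsFinPartition P) (q : ℕ) :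
    (∀ b, MeasurableSet (cyl T P q b)) ∧
    (∀ b b', b ≠ b' → Disjoint (cyl T P q b) (cyl T P q b')) := by
  constructor
  · intro b
    exact MeasurableSet.iInter fun j => (hT.iterate _) (hP.1 _ (b j).2)
  · intro b b' hne
    obtain ⟨j, hj⟩ := Function.ne_iff.1 hne
    refine Set.disjoint_left.2 fun u hu hu' => ?_
    have h1 := mem_iInter.1 hu j
    have h2 := mem_iInter.1 hu' j
    exact Set.disjoint_left.1 (hP.2.1 _ (b j).2 _ (b' j).2 (fun h => hj (Subtype.ext h))) h1 h2

lemma sum_cyl {X : Type*} [MeasurableSpace X] (T : X → X) (hT : Measurable T)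
    (P : Finset (Set X)) (hP : IsFinPartition P) (q : ℕ) (f : Set X → ℝ) (hf : f ∅ = 0) :
    ∑ A ∈ joinN T P q, f A = ∑ b, f (cyl T P q b) := by
  classical
  have h1 : joinN T P q = (Finset.univ : Finset (Fin q → P)).image (cyl T P q) := by
    ext B
    rw [mem_joinN, Finset.mem_image]
    constructor
    · rintro ⟨g, hg, rfl⟩
      exact ⟨fun j => ⟨g j, hg j⟩, Finset.mem_univ _, rfl⟩
    · rintro ⟨b, -, rfl⟩
      exact ⟨fun j => b j, fun j => (b j).2, rfl⟩
  rw [h1, Finset.sum_image_of_pairwise_eq_zero]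
  intro b _ b' _ hne heq
  have := (cyl_partition T hT P hP q).2 b b' hne
  rw [heq, disjoint_self] at this
  change f (cyl T P q b) = 0
  rw [heq, this]; exact hf

lemma ent_lower {X : Type*} [MetricSpace X] [CompactSpace X] [MeasurableSpace X] [BorelSpace X]
    (T : X → X) (hT : Continuous T) (N : ℕ → ℕ) (hN : ∀ n, 0 < N n)
    (x : ∀ n, Fin (N n) → X) (μ : Measure X) [IsProbabilityMeasure μ]
    (hμ : MeasurePreserving T μ μ) (V : Filter ℕ) [V.NeBot] (hV : V ≤ atTop)
    (hop : ∀ O : Set X, IsOpen O → ∀ θ : ℝ, 0 < θ → ∀ᶠ n in V,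
        (μ O).toReal - θ ≤ ((n * N n : ℕ) : ℝ)⁻¹ *
          ∑ s, ∑ j ∈ Finset.range n, O.indicator (fun _ => (1 : ℝ)) (T^[j] (x n s)))
    (δ h C : ℝ) (hC : 0 ≤ C)
    (hat : ∀ᶠ n in atTop, ∀ (J : Finset ℕ) (E : Set X), (∀ j ∈ J, j < n) →
      (∀ u ∈ E, ∀ v ∈ E, ∀ j ∈ J, dist (T^[j] u) (T^[j] v) ≤ δ) →
      ∀ U : Finset (Fin (N n)), (∀ s ∈ U, x n s ∈ E) →
      (U.card : ℝ) ≤ N n * Real.exp (-(n * h - C * (n - J.card))))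
    (P : Finset (Set X)) (hP : IsFinPartition P) (ε : ℝ) (hε : 0 < ε) (hεδ : 3 * ε ≤ δ)
    (hd : ∀ s ∈ P, Metric.diam s ≤ ε) (q : ℕ) (hq : 1 ≤ q) :
    q * h ≤ ∑ b, -((μ (cyl T P q b)).toReal * Real.log (μ (cyl T P q b)).toReal) + Real.log 2 := by
  classical
  set m : (Fin q → P) → ℝ := fun b => (μ (cyl T P q b)).toReal with hm
  have hm0 : ∀ b, 0 ≤ m b := fun b => ENNReal.toReal_nonneg
  have hTm := hT.measurable
  have hms : ∑ b, m b = 1 := by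
    rw [← sum_measure_partition μ (isFinPartition_joinN hTm hP q)]
    exact (sum_cyl T hTm P hP q (fun A => (μ A).toReal) (by simp)).symm
  have hm1 : ∀ b, m b ≤ 1 := fun b => by
    rw [← hms]; exact Finset.single_le_sum (fun b _ => hm0 b) (Finset.mem_univ b)
  haveI : Nonempty (Fin q → P) := by
    by_contra hne
    rw [not_nonempty_iff] at hne
    simp at hms
  set L : ℝ := (Fintype.card (Fin q → P) : ℝ) with hL
  have hL1 : 1 ≤ L := by
    rw [hL]; exact_mod_cast Fintype.card_pos
  set w : (Fin q → P) → ℝ := fun b => (1/2) * m b + (1/2) * L⁻¹ with hw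
  have hLi : 0 < L⁻¹ := by positivity
  have hLi1 : L⁻¹ ≤ 1 := inv_le_one_of_one_le₀ hL1
  have hw0 : ∀ b, 0 < w b := fun b => by have := hm0 b; simp only [hw]; linarith
  have hw1 : ∀ b, w b ≤ 1 := fun b => by have := hm1 b; simp only [hw]; linarith
  have hws : ∑ b, w b ≤ 1 := by
    simp only [hw]
    rw [Finset.sum_add_distrib, ← Finset.mul_sum, ← Finset.mul_sum, hms, Finset.sum_const,
      Finset.card_univ, nsmul_eq_mul, ← hL, mul_inv_cancel₀ (by positivity)]
    norm_num
  set G : ℝ := Real.log 2 + Real.log L with hG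
  set c : (Fin q → P) → ℝ := fun b => G + Real.log (w b) with hc
  have hc0 : ∀ b, 0 ≤ c b := by
    intro b
    have h1 : Real.log (2⁻¹ * L⁻¹) ≤ Real.log (w b) := by
      refine Real.log_le_log (by positivity) ?_
      have := hm0 b; simp only [hw]; linarith
    rw [Real.log_mul (by norm_num) hLi.ne', Real.log_inv, Real.log_inv] at h1
    simp only [hc, hG]; linarith
  set S : ℝ := ∑ b, c b with hS
  have hS0 : 0 ≤ S := Finset.sum_nonneg fun b _ => hc0 b
  -- main estimate
  have key : ∀ θ : ℝ, 0 < θ → q * h - θ ≤ G - ∑ b, c b * m b + 2 * θ * S := by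
    intro θ hθ
    have hq0 : (0 : ℝ) < q := by exact_mod_cast hq
    obtain ⟨U, σ, hUo, hUσ, hσd, hUm⟩ := coding μ P hP ε hε hd (θ / q) (by positivity)
    set O : (Fin q → P) → Set X := fun b => ⋂ j : Fin q, T^[(j : ℕ)] ⁻¹' (U (b j)) with hO
    have hOo : ∀ b, IsOpen (O b) := fun b =>
      isOpen_iInter_of_finite fun j => (hUo _).preimage (hT.iterate _)
    have hOb : ∀ b, ∀ u ∈ O b, blk T σ q u = b := by
      intro b u hu
      funext j
      exact hUσ _ _ (mem_iInter.1 hu j)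
    have hOm : ∀ b, m b - θ ≤ (μ (O b)).toReal := by
      intro b
      have h1 : cyl T P q b ⊆ O b ∪ ⋃ j : Fin q, T^[(j : ℕ)] ⁻¹' ((b j : Set X) \ U (b j)) := by
        intro u hu
        by_cases hu2 : u ∈ O b
        · exact Or.inl hu2
        · right
          simp only [hO, mem_iInter, not_forall] at hu2
          obtain ⟨j, hj⟩ := hu2
          exact mem_iUnion.2 ⟨j, mem_iInter.1 hu j, hj⟩
      have h2 : μ (cyl T P q b) ≤ μ (O b) + ENNReal.ofReal θ := by
        refine (measure_mono h1).trans ((measure_union_le _ _).trans ?_)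
        gcongr
        refine (measure_iUnion_fintype_le _ _).trans ?_
        calc _ ≤ ∑ j : Fin q, ENNReal.ofReal (θ / q) := by
              refine Finset.sum_le_sum fun j _ => ?_
              rw [(hμ.iterate (j : ℕ)).measure_preimage
                ((hP.1 _ (b j).2).diff (hUo _).measurableSet).nullMeasurableSet]
              exact hUm _
          _ = ENNReal.ofReal θ := by
              rw [Finset.sum_const, Finset.card_univ, Fintype.card_fin, nsmul_eq_mul,
                ← ENNReal.ofReal_natCast, ← ENNReal.ofReal_mul (by positivity)]
              congr 1; field_simp
      have h3 := ENNReal.toReal_mono (by finiteness) h2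
      rw [ENNReal.toReal_add (measure_ne_top _ _) ENNReal.ofReal_ne_top,
        ENNReal.toReal_ofReal hθ.le] at h3
      simp only [hm]; linarith
    have hptw : ∀ u : X, -Real.log (w (blk T σ q u)) ≤
        G - ∑ b, c b * (O b).indicator (fun _ => (1 : ℝ)) u := by
      intro u
      have : ∑ b, c b * (O b).indicator (fun _ => (1 : ℝ)) u ≤ c (blk T σ q u) := by
        calc _ ≤ ∑ b, if b = blk T σ q u then c b else 0 := by
              refine Finset.sum_le_sum fun b _ => ?_
              by_cases hu : u ∈ O b
              · rw [if_pos (hOb b u hu).symm, indicator_of_mem hu, mul_one]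
              · rw [indicator_of_notMem hu, mul_zero]
                split_ifs
                · exact hc0 b
                · exact le_rfl
          _ = _ := by simp
      simp only [hc] at this ⊢
      linarith
    have hev1 : ∀ᶠ n in V, ∀ b, (μ (O b)).toReal - θ ≤ ((n * N n : ℕ) : ℝ)⁻¹ *
          ∑ s, ∑ j ∈ Finset.range n, (O b).indicator (fun _ => (1 : ℝ)) (T^[j] (x n s)) :=
      eventually_all.2 fun b => hop _ (hOo b) θ hθ
    have hev2 : ∀ᶠ n : ℕ in atTop, 2 * (q : ℝ) ^ 2 * C / n ≤ θ :=
      (tendsto_const_div_atTop_nhds_zero_nat (2 * (q : ℝ) ^ 2 * C)).eventually_le_const hθ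
    obtain ⟨n, hn1, hn2, hn3, hn0⟩ :=
      (hev1.and ((hat.filter_mono hV).and ((hev2.filter_mono hV).and
        ((eventually_gt_atTop 0).filter_mono hV)))).exists
    have hn0' : (0 : ℝ) < n := by exact_mod_cast hn0
    have hNn : (0 : ℝ) < N n := by exact_mod_cast hN n
    have hblk := block_ineq T σ q hq w hw0 hw1 hws n (N n) (x n) h C hC (by
      intro J E hJ hE Uf hUf
      refine hn2 J E hJ (fun u hu v hv j hj => ?_) Uf hUf
      exact (hσd _ _ (hE u hu v hv j hj)).trans hεδ)
    have hup : ∑ s, ∑ j ∈ Finset.range n, -Real.log (w (blk T σ q (T^[j] (x n s)))) ≤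
        n * N n * G - ∑ b, c b * ∑ s, ∑ j ∈ Finset.range n,
          (O b).indicator (fun _ => (1 : ℝ)) (T^[j] (x n s)) := by
      calc _ ≤ ∑ s, ∑ j ∈ Finset.range n,
            (G - ∑ b, c b * (O b).indicator (fun _ => (1 : ℝ)) (T^[j] (x n s))) :=
            Finset.sum_le_sum fun s _ => Finset.sum_le_sum fun j _ => hptw _
        _ = _ := by
            simp only [Finset.sum_sub_distrib, Finset.sum_const, Finset.card_univ,
              Fintype.card_fin, Finset.card_range, nsmul_eq_mul]
            congr 1
            · ring
            · rw [Finset.sum_congr rfl fun s _ => Finset.sum_comm, Finset.sum_comm]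
              refine Finset.sum_congr rfl fun b _ => ?_
              rw [Finset.mul_sum]
              refine Finset.sum_congr rfl fun s _ => ?_
              rw [Finset.mul_sum]
    have hlow : ∑ b, c b * (m b - 2 * θ) ≤ ((n * N n : ℕ) : ℝ)⁻¹ * ∑ b, c b *
        ∑ s, ∑ j ∈ Finset.range n, (O b).indicator (fun _ => (1 : ℝ)) (T^[j] (x n s)) := by
      rw [Finset.mul_sum]
      refine Finset.sum_le_sum fun b _ => ?_
      rw [mul_left_comm]
      refine mul_le_mul_of_nonneg_left ?_ (hc0 b)
      have := hn1 b
      have := hOm b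
      linarith
    have e1 : ∑ b, c b * (m b - 2 * θ) = ∑ b, c b * m b - 2 * θ * S := by
      rw [hS, Finset.mul_sum, ← Finset.sum_sub_distrib]
      exact Finset.sum_congr rfl fun b _ => by ring
    rw [e1] at hlow
    set Q : ℝ := ∑ b, c b *
        ∑ s, ∑ j ∈ Finset.range n, (O b).indicator (fun _ => (1 : ℝ)) (T^[j] (x n s)) with hQ
    have e2 := hblk.trans hup
    have e3 : ((n * N n : ℕ) : ℝ)⁻¹ * (N n * (q * (n * h - 2 * q * C))) =
        q * h - 2 * (q : ℝ) ^ 2 * C / n := by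
      push_cast; field_simp
    have e4 : ((n * N n : ℕ) : ℝ)⁻¹ * (n * N n * G - Q) = G - ((n * N n : ℕ) : ℝ)⁻¹ * Q := by
      push_cast; field_simp
    have e5 := mul_le_mul_of_nonneg_left e2 (by positivity : (0 : ℝ) ≤ ((n * N n : ℕ) : ℝ)⁻¹)
    rw [e3, e4] at e5
    linarith
  have key2 : q * h ≤ G - ∑ b, c b * m b := by
    refine le_of_forall_pos_le_add fun θ hθ => ?_
    have := key (θ / (1 + 2 * S)) (by positivity)
    have e : θ = θ / (1 + 2 * S) + 2 * (θ / (1 + 2 * S)) * S := by field_simp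
    linarith
  have e6 : ∑ b, c b * m b = G + ∑ b, m b * Real.log (w b) := by
    simp only [hc, add_mul]
    rw [Finset.sum_add_distrib, ← Finset.mul_sum, hms, mul_one]
    congr 1
    exact Finset.sum_congr rfl fun b _ => mul_comm _ _
  have e7 : ∑ b, (m b * Real.log (m b) - m b * Real.log 2) ≤ ∑ b, m b * Real.log (w b) := by
    refine Finset.sum_le_sum fun b _ => ?_
    rcases (hm0 b).eq_or_lt with h0 | h0
    · rw [← h0]; simp
    · rw [← mul_sub, ← Real.log_div h0.ne' (by norm_num)]
      refine mul_le_mul_of_nonneg_left (Real.log_le_log (by positivity) ?_) h0.le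
      simp only [hw]; linarith
  rw [Finset.sum_sub_distrib, ← Finset.sum_mul, hms] at e7
  rw [Finset.sum_neg_distrib]
  linarith

lemma entRate_lower {X : Type*} [MetricSpace X] [CompactSpace X] [MeasurableSpace X] [BorelSpace X]
    (T : X → X) (hT : Continuous T) (N : ℕ → ℕ) (hN : ∀ n, 0 < N n)
    (x : ∀ n, Fin (N n) → X) (μ : Measure X) [IsProbabilityMeasure μ]
    (hμ : MeasurePreserving T μ μ) (V : Filter ℕ) [V.NeBot] (hV : V ≤ atTop)
    (hop : ∀ O : Set X, IsOpen O → ∀ θ : ℝ, 0 < θ → ∀ᶠ n in V,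
        (μ O).toReal - θ ≤ ((n * N n : ℕ) : ℝ)⁻¹ *
          ∑ s, ∑ j ∈ Finset.range n, O.indicator (fun _ => (1 : ℝ)) (T^[j] (x n s)))
    (δ h C : ℝ) (hC : 0 ≤ C)
    (hat : ∀ᶠ n in atTop, ∀ (J : Finset ℕ) (E : Set X), (∀ j ∈ J, j < n) →
      (∀ u ∈ E, ∀ v ∈ E, ∀ j ∈ J, dist (T^[j] u) (T^[j] v) ≤ δ) →
      ∀ U : Finset (Fin (N n)), (∀ s ∈ U, x n s ∈ E) →
      (U.card : ℝ) ≤ N n * Real.exp (-(n * h - C * (n - J.card))))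
    (ε : ℝ) (hε : 0 < ε) (hεδ : 3 * ε ≤ δ) :
    ENNReal.ofReal h ≤ infEntRate T μ ε := by
  unfold infEntRate
  refine le_iInf fun P => le_iInf fun hP => le_iInf fun hd => ?_
  unfold entRate
  have hlim : Tendsto (fun q : ℕ => ENNReal.ofReal (h - Real.log 2 / q)) atTop
      (𝓝 (ENNReal.ofReal h)) := by
    have := (tendsto_const_div_atTop_nhds_zero_nat (Real.log 2)).const_sub h
    rw [sub_zero] at this
    exact ENNReal.tendsto_ofReal this
  rw [← hlim.liminf_eq]
  refine liminf_le_liminf ?_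
  filter_upwards [eventually_ge_atTop 1] with q hq
  have h1 := ent_lower T hT N hN x μ hμ V hV hop δ h C hC hat P hP ε hε hεδ hd q hq
  have hq0 : (0 : ℝ) < q := by exact_mod_cast hq
  rw [ENNReal.le_div_iff_mul_le (Or.inl (by exact_mod_cast (by omega : q ≠ 0)))
    (Or.inl (ENNReal.natCast_ne_top _)), ← ENNReal.ofReal_natCast,
    ← ENNReal.ofReal_mul' (by positivity), entP_eq]
  apply ENNReal.ofReal_le_ofReal
  rw [sum_cyl T hT.measurable P hP q (fun A => -((μ A).toReal * Real.log (μ A).toReal)) (by simp)]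
  have : (h - Real.log 2 / q) * q = q * h - Real.log 2 := by field_simp
  linarith


lemma mdim_empty {X : Type*} [TopologicalSpace X] [IsEmpty X] (T : X → X) (hT : Continuous T)
    (α : Finset (Set X)) (hα : IsFinOpenCover α) (n : ℕ) : Dcover (joinN T α n) = 0 := by
  refine Nat.le_zero.1 ?_
  have h : Dcover (joinN T α n) ≤ ordCover (joinN T α n) :=
    Nat.sInf_le ⟨joinN T α n, isFinOpenCover_joinN hT hα n,
      fun B hB => ⟨B, hB, subset_rfl⟩, rfl⟩
  refine h.trans ?_
  exact ordCover_le _ 0 (fun x => isEmptyElim x)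

lemma lower {X : Type*} [MetricSpace X] [CompactSpace X] [MeasurableSpace X] [BorelSpace X]
    (T : X → X) (hT : Continuous T) :
    mdimTop T ≤ ⨆ (μ : Measure X) (_ : IsProbabilityMeasure μ) (_ : MeasurePreserving T μ μ),
      Filter.liminf (fun ε : ℝ => infEntRate T μ ε / ENNReal.ofReal (Real.log (1 / ε)))
        (nhdsWithin 0 (Set.Ioi 0)) := by
  refine le_of_forall_lt fun c hc => ?_
  obtain ⟨c', hcc', hc'⟩ := exists_between hc
  obtain ⟨a, hca, ha⟩ := ENNReal.lt_iff_exists_nnreal_btwn.1 hc'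
  obtain ⟨α, hα⟩ := lt_iSup_iff.1 ha
  obtain ⟨hαc, hα⟩ := lt_iSup_iff.1 hα
  have hev : ∀ᶠ n : ℕ in atTop, (a : ℝ) * n ≤ Dcover (joinN T α n) := by
    filter_upwards [eventually_lt_of_lt_liminf hα, eventually_gt_atTop 0] with n hn hn0
    have h1 := (ENNReal.le_div_iff_mul_le (Or.inl (by exact_mod_cast hn0.ne'))
      (Or.inl (ENNReal.natCast_ne_top _))).1 hn.le
    exact_mod_cast h1
  rcases isEmpty_or_nonempty X with hX | hX
  · exfalso
    simp only [mdim_empty T hT α hαc] at hα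
    simp at hα
  obtain ⟨lam, hlam, hsep⟩ := sep_family T hT α hαc
  have hs : ∀ n : ℕ, ∃ (N : ℕ) (x : Fin N → X), 0 < N ∧ ∀ δ : ℝ, 0 < δ → 4 * (lam * δ) ≤ 1 →
      1 ≤ ((n + 1 : ℕ) : ℝ) * (lam * δ) → ∀ (J : Finset (Fin n)) (E : Set X),
      (∀ u ∈ E, ∀ v ∈ E, ∀ j ∈ J, dist (T^[(j : ℕ)] u) (T^[(j : ℕ)] v) ≤ δ) →
      ∀ U : Finset (Fin N), (∀ s ∈ U, x s ∈ E) → (U.card : ℝ) ≤ N * 2 ^ (n * α.card) *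
        (4 * (lam * δ)) ^ (Dcover (joinN T α n) - (n - J.card) * α.card) :=
    fun n => hsep n (n + 1) (by omega)
  choose N x hN hs using hs
  obtain ⟨μ, V, hμp, hμ, hVne, hV, hop⟩ := exists_limit T hT N hN x
  refine hcc'.trans_le (le_trans ?_ (le_iSup₂_of_le μ hμp (le_iSup_of_le hμ le_rfl)))
  -- entropy bound
  have hent : ∀ ε : ℝ, 0 < ε → 12 * lam * ε ≤ 1 →
      ENNReal.ofReal (a * Real.log (1 / (12 * lam * ε)) - α.card * Real.log 2) ≤
        infEntRate T μ ε := by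
    intro ε hε hε1
    set κ : ℝ := Real.log (1 / (12 * lam * ε)) with hκ
    have hp : 0 < 12 * lam * ε := by positivity
    have hκ0 : 0 ≤ κ := Real.log_nonneg (by rw [le_div_iff₀ hp]; linarith)
    have h4 : 4 * (lam * (3 * ε)) = Real.exp (-κ) := by
      rw [hκ, one_div, Real.log_inv, neg_neg, Real.exp_log hp]; ring
    refine entRate_lower T hT N hN x μ hμ V hV hop (3 * ε) _ (α.card * κ) (by positivity) ?_ ε hε
      le_rfl
    have hbig : ∀ᶠ n : ℕ in atTop, 1 ≤ ((n + 1 : ℕ) : ℝ) * (lam * (3 * ε)) := by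
      have : Tendsto (fun n : ℕ => ((n + 1 : ℕ) : ℝ) * (lam * (3 * ε))) atTop atTop :=
        Tendsto.atTop_mul_const (by positivity)
          (tendsto_natCast_atTop_atTop.comp (tendsto_add_atTop_nat 1))
      exact this.eventually_ge_atTop 1
    filter_upwards [hev, hbig] with n hn1 hn2 J E hJ hE U hU
    have h5 := hs n (3 * ε) (by positivity) (by linarith) hn2 (J.attachFin hJ) E
      (fun u hu v hv j hj => hE u hu v hv j (Finset.mem_attachFin hJ |>.1 hj)) U hU
    refine h5.trans ?_
    rw [Finset.card_attachFin, h4, mul_assoc]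
    refine mul_le_mul_of_nonneg_left ?_ (by positivity)
    have hJn : J.card ≤ n := by
      have : J ⊆ Finset.range n := fun j hj => Finset.mem_range.2 (hJ j hj)
      simpa using Finset.card_le_card this
    have h2 : (2 : ℝ) ^ (n * α.card) = Real.exp (n * α.card * Real.log 2) := by
      rw [← Real.exp_log (by norm_num : (0 : ℝ) < 2), ← Real.exp_nat_mul, Real.log_exp]
      push_cast; rfl
    rw [h2, ← Real.exp_nat_mul, ← Real.exp_add]
    apply Real.exp_le_exp.2
    have h6 : (a : ℝ) * n - (n - J.card) * α.card ≤
        ((Dcover (joinN T α n) - (n - J.card) * α.card : ℕ) : ℝ) := by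
      have : (Dcover (joinN T α n) : ℝ) ≤
          ((Dcover (joinN T α n) - (n - J.card) * α.card : ℕ) : ℝ) + (n - J.card) * α.card := by
        have h7 : Dcover (joinN T α n) ≤
          (Dcover (joinN T α n) - (n - J.card) * α.card) + (n - J.card) * α.card := le_tsub_add
        rw [← Nat.cast_sub hJn]
        exact_mod_cast h7
      linarith
    have h8 := mul_le_mul_of_nonneg_right h6 hκ0
    linarith
  refine le_liminf_of_le (by isBoundedDefault) ?_
  have hctop : c' ≠ ⊤ := ne_top_of_lt hca
  have hcr : c'.toReal < a := by
    have := (ENNReal.toReal_lt_toReal hctop ENNReal.coe_ne_top).2 hca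
    simpa using this
  set t : ℝ → ℝ := fun ε => Real.log (1 / ε) with ht
  have htop : Tendsto t (𝓝[>] 0) atTop := by
    have h1 : Tendsto (fun ε : ℝ => 1 / ε) (𝓝[>] 0) atTop := by
      simpa [one_div] using tendsto_inv_nhdsGT_zero (𝕜 := ℝ)
    exact Real.tendsto_log_atTop.comp h1
  have hsm : ∀ᶠ ε in 𝓝[>] (0 : ℝ), ε ∈ Ioc 0 (1 / (12 * lam)) :=
    Ioc_mem_nhdsGT (by positivity)
  filter_upwards [hsm, htop.eventually_ge_atTop 1, htop.eventually_ge_atTop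
    ((a * Real.log (12 * lam) + α.card * Real.log 2) / (a - c'.toReal))] with ε hε h1 h2
  have hε12 : 12 * lam * ε ≤ 1 := by
    have := hε.2
    rw [le_div_iff₀ (by positivity)] at this
    linarith
  have h3 := hent ε hε.1 hε12
  rw [ENNReal.le_div_iff_mul_le (Or.inl (by
    have : 0 < t ε := by linarith
    exact (ENNReal.ofReal_pos.2 this).ne')) (Or.inl ENNReal.ofReal_ne_top)]
  refine le_trans ?_ h3
  rw [← ENNReal.ofReal_toReal hctop, ← ENNReal.ofReal_mul ENNReal.toReal_nonneg]
  apply ENNReal.ofReal_le_ofReal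
  rw [div_le_iff₀ (by linarith)] at h2
  have h4 : Real.log (1 / (12 * lam * ε)) = t ε - Real.log (12 * lam) := by
    simp only [ht]
    have := hε.1
    rw [one_div, one_div, Real.log_inv, Real.log_inv, Real.log_mul (by positivity) this.ne']
    ring
  rw [h4]
  change c'.toReal * t ε ≤ _
  linarith

lemma main {X : Type*} [tX : TopologicalSpace X] [CompactSpace X]
    [TopologicalSpace.MetrizableSpace X] [MeasurableSpace X] [BorelSpace X]
    (T : X ≃ₜ X) (hmk : MarkerProperty T) :
    IsLeast {v : ℝ≥0∞ | ∃ m : MetricSpace X,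
        m.toPseudoMetricSpace.toUniformSpace.toTopologicalSpace = tX ∧
        v = ⨆ (μ : Measure X) (_ : IsProbabilityMeasure μ) (_ : MeasurePreserving (⇑T) μ μ),
          Filter.liminf (fun ε : ℝ =>
            @infEntRate X m.toPseudoMetricSpace _ (⇑T) μ ε / ENNReal.ofReal (Real.log (1 / ε)))
            (nhdsWithin 0 (Set.Ioi 0))}
      (mdimTop (⇑T)) ∧
    IsLeast {v : ℝ≥0∞ | ∃ m : MetricSpace X,
        m.toPseudoMetricSpace.toUniformSpace.toTopologicalSpace = tX ∧
        v = ⨆ (μ : Measure X) (_ : IsProbabilityMeasure μ) (_ : MeasurePreserving (⇑T) μ μ),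
          Filter.limsup (fun ε : ℝ =>
            @infEntRate X m.toPseudoMetricSpace _ (⇑T) μ ε / ENNReal.ofReal (Real.log (1 / ε)))
            (nhdsWithin 0 (Set.Ioi 0))}
      (mdimTop (⇑T)) := by
  have hlow : ∀ m : MetricSpace X,
      m.toPseudoMetricSpace.toUniformSpace.toTopologicalSpace = tX →
      mdimTop (⇑T) ≤ ⨆ (μ : Measure X) (_ : IsProbabilityMeasure μ)
        (_ : MeasurePreserving (⇑T) μ μ), Filter.liminf (fun ε : ℝ =>
            @infEntRate X m.toPseudoMetricSpace _ (⇑T) μ ε / ENNReal.ofReal (Real.log (1 / ε)))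
            (nhdsWithin 0 (Set.Ioi 0)) := by
    intro m hm
    subst hm
    exact lower (⇑T) T.continuous
  have hle : ∀ m : MetricSpace X,
      (⨆ (μ : Measure X) (_ : IsProbabilityMeasure μ)
        (_ : MeasurePreserving (⇑T) μ μ), Filter.liminf (fun ε : ℝ =>
            @infEntRate X m.toPseudoMetricSpace _ (⇑T) μ ε / ENNReal.ofReal (Real.log (1 / ε)))
            (nhdsWithin 0 (Set.Ioi 0))) ≤
      ⨆ (μ : Measure X) (_ : IsProbabilityMeasure μ)
        (_ : MeasurePreserving (⇑T) μ μ), Filter.limsup (fun ε : ℝ =>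
            @infEntRate X m.toPseudoMetricSpace _ (⇑T) μ ε / ENNReal.ofReal (Real.log (1 / ε)))
            (nhdsWithin 0 (Set.Ioi 0)) := by
    intro m
    exact iSup_mono fun μ => iSup_mono fun _ => iSup_mono fun _ => liminf_le_limsup
  have hup : ∃ m : MetricSpace X,
      m.toPseudoMetricSpace.toUniformSpace.toTopologicalSpace = tX ∧
      (⨆ (μ : Measure X) (_ : IsProbabilityMeasure μ)
        (_ : MeasurePreserving (⇑T) μ μ), Filter.limsup (fun ε : ℝ =>
            @infEntRate X m.toPseudoMetricSpace _ (⇑T) μ ε / ENNReal.ofReal (Real.log (1 / ε)))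
            (nhdsWithin 0 (Set.Ioi 0))) ≤ mdimTop (⇑T) := by
    by_cases htop : mdimTop (⇑T) = ⊤
    · exact ⟨TopologicalSpace.metrizableSpaceMetric X, rfl, by rw [htop]; exact le_top⟩
    · obtain ⟨m, hm, h⟩ := upper T hmk htop
      exact ⟨m, hm, iSup_le fun μ => iSup_le fun hμ => iSup_le fun _ => h μ hμ⟩
  obtain ⟨m, hm, h⟩ := hup
  refine ⟨⟨⟨m, hm, le_antisymm (hlow m hm) ((hle m).trans h)⟩, ?_⟩,
    ⟨⟨m, hm, le_antisymm ((hlow m hm).trans (hle m)) h⟩, ?_⟩⟩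
  · rintro v ⟨m', hm', rfl⟩
    exact hlow m' hm'
  · rintro v ⟨m', hm', rfl⟩
    exact (hlow m' hm').trans (hle m')

end MMD

open MMD

/-- Theorem 1.2 (first part): double variational principle for the mean dimension in terms of
Rényi information dimensions, under the marker property.  The mean dimension is the minimum
(attained) over all compatible metrics of the supremum over invariant measures of the lower
(resp. upper) Rényi information dimension. -/
theorem stmt12 {X : Type*} [tX : TopologicalSpace X] [CompactSpace X]
    [TopologicalSpace.MetrizableSpace X] [MeasurableSpace X] [BorelSpace X]
    (T : X ≃ₜ X) (hmk : MarkerProperty T) :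
    IsLeast {v : ℝ≥0∞ | ∃ m : MetricSpace X,
        m.toPseudoMetricSpace.toUniformSpace.toTopologicalSpace = tX ∧
        v = ⨆ (μ : Measure X) (_ : IsProbabilityMeasure μ) (_ : MeasurePreserving (⇑T) μ μ),
          Filter.liminf (fun ε : ℝ =>
            @infEntRate X m.toPseudoMetricSpace _ (⇑T) μ ε / ENNReal.ofReal (Real.log (1 / ε)))
            (nhdsWithin 0 (Set.Ioi 0))}
      (mdimTop (⇑T)) ∧
    IsLeast {v : ℝ≥0∞ | ∃ m : MetricSpace X,
        m.toPseudoMetricSpace.toUniformSpace.toTopologicalSpace = tX ∧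
        v = ⨆ (μ : Measure X) (_ : IsProbabilityMeasure μ) (_ : MeasurePreserving (⇑T) μ μ),
          Filter.limsup (fun ε : ℝ =>
            @infEntRate X m.toPseudoMetricSpace _ (⇑T) μ ε / ENNReal.ofReal (Real.log (1 / ε)))
            (nhdsWithin 0 (Set.Ioi 0))}
      (mdimTop (⇑T)) := by
  exact MMD.main T hmk
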